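/- There is an absolute constant c > 0 with the following property. Let Γ ≤ SL(2,ℝ) be a subgroup, let P ⊆ ℍ² be a finite set of N ≥ 2 points such that d_Γ(p,q) ≠ 0 whenever p,q ∈ P are distinct, and let Γ₀ ⊆ Γ be a finite subset of cardinality K which is a geodesic cover for P (i.e. for all p,q ∈ P, d_Γ(p,q) = min_{γ ∈ Γ₀} d(p, γ·q)). Then the number of distinct values of d_Γ(p,q) over pairs of distinct points p,q ∈ P is at least c · N / (K³ · log(K·N)). -/

import Mathlib

open scoped UpperHalfPlane MatrixGroups

noncomputable section

/-- The quotient pseudo-distance `d_Γ(p,q) = inf_{γ ∈ Γ} d(p, γ·q)` associated to a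
subgroup `Γ ≤ SL(2,ℝ)` acting on the hyperbolic plane. -/
def quotDist (Γ : Subgroup SL(2, ℝ)) (p q : ℍ) : ℝ :=
  ⨅ γ : Γ, dist p ((γ : SL(2, ℝ)) • q)

end

namespace BU

abbrev Ch (E : Type*) := List E →₀ ZMod 2

section chains
variable {E : Type*}

noncomputable def cone (x : E) : Ch E →ₗ[ZMod 2] Ch E := Finsupp.lmapDomain _ _ (List.cons x)

noncomputable def bdL : List E → Ch E
  | [] => 0
  | x :: l => Finsupp.single l 1 + cone x (bdL l)

noncomputable def lin {M : Type*} [AddCommGroup M] [Module (ZMod 2) M] (F : List E → M) : Ch E →ₗ[ZMod 2] M :=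
  Finsupp.linearCombination (ZMod 2) F

lemma lin_single {M : Type*} [AddCommGroup M] [Module (ZMod 2) M] (F : List E → M) (l : List E) :
    lin F (Finsupp.single l 1) = F l := by simp [lin]

lemma cone_single (x : E) (l : List E) : cone x (Finsupp.single l 1) = Finsupp.single (x :: l) 1 := by
  simp [cone]

noncomputable def bd : Ch E →ₗ[ZMod 2] Ch E := lin bdL

lemma hom_ext {M : Type*} [AddCommGroup M] [Module (ZMod 2) M] {F G : Ch E →ₗ[ZMod 2] M}
    (h : ∀ l, F (Finsupp.single l 1) = G (Finsupp.single l 1)) (z : Ch E) : F z = G z := by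
  have : F = G := by
    apply Finsupp.lhom_ext'
    intro l
    ext
    simpa using h l
  rw [this]

lemma add_self {M : Type*} [AddCommGroup M] [Module (ZMod 2) M] (x : M) : x + x = 0 := by
  rw [← two_smul (ZMod 2) x]
  have : (2 : ZMod 2) = 0 := by decide
  rw [this, zero_smul]

lemma bd_cone (x : E) (z : Ch E) : bd (cone x z) = z + cone x (bd z) := by
  have := hom_ext (F := bd ∘ₗ cone x) (G := LinearMap.id + cone x ∘ₗ bd) (by
    intro l
    simp [cone_single, bd, lin_single, bdL]) z
  simpa using this

lemma bd_bdL (l : List E) : bd (bdL l) = 0 := by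
  induction l with
  | nil => simp [bdL]
  | cons x l ih =>
    simp only [bdL, map_add, bd_cone, ih, map_zero, add_zero]
    rw [show bd (Finsupp.single l 1) = bdL l from lin_single _ _]
    exact add_self _

/-- supported chains -/
noncomputable abbrev sup (P : List E → Prop) : Submodule (ZMod 2) (Ch E) := Finsupp.supported (ZMod 2) (ZMod 2) {l | P l}

lemma single_mem {P : List E → Prop} {l : List E} (h : P l) : (Finsupp.single l 1 : Ch E) ∈ sup P :=
  Finsupp.single_mem_supported _ _ h

lemma sup_induction {M : Type*} [AddCommGroup M] [Module (ZMod 2) M] {P : List E → Prop}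
    (F : Ch E →ₗ[ZMod 2] M) (Q : Submodule (ZMod 2) M) (h : ∀ l, P l → F (Finsupp.single l 1) ∈ Q)
    {z : Ch E} (hz : z ∈ sup P) : F z ∈ Q := by
  rw [sup, Finsupp.supported_eq_span_single] at hz
  have : Submodule.span (ZMod 2) ((fun i => Finsupp.single i (1 : ZMod 2)) '' {l | P l}) ≤ Q.comap F := by
    rw [Submodule.span_le]
    rintro _ ⟨l, hl, rfl⟩
    exact h l hl
  exact this hz

lemma sup_eq {M : Type*} [AddCommGroup M] [Module (ZMod 2) M] {P : List E → Prop}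
    (F G : Ch E →ₗ[ZMod 2] M) (h : ∀ l, P l → F (Finsupp.single l 1) = G (Finsupp.single l 1))
    {z : Ch E} (hz : z ∈ sup P) : F z = G z := by
  have := sup_induction (F - G) ⊥ (fun l hl => by simp [h l hl]) hz
  simpa [sub_eq_zero] using this

lemma sup_mono {P Q : List E → Prop} (h : ∀ l, P l → Q l) : sup P ≤ sup Q :=
  Finsupp.supported_mono h

lemma cone_mem {P Q : List E → Prop} (x : E) (h : ∀ l, P l → Q (x :: l)) {z : Ch E} (hz : z ∈ sup P) :
    cone x z ∈ sup Q :=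
  sup_induction (cone x) (sup Q) (fun l hl => by rw [cone_single]; exact single_mem (h l hl)) hz

lemma bdL_mem (l : List E) : bdL l ∈ sup (fun l' => l'.length + 1 = l.length ∧ ∀ x ∈ l', x ∈ l) := by
  induction l with
  | nil => simp [bdL]
  | cons x l ih =>
    refine Submodule.add_mem _ (single_mem ⟨by simp, fun y hy => by simp [hy]⟩) ?_
    refine cone_mem x ?_ ih
    rintro l' ⟨h1, h2⟩
    refine ⟨by simp [← h1], ?_⟩
    intro y hy
    simp at hy ⊢
    rcases hy with h | h
    · exact Or.inl h
    · exact Or.inr (h2 _ h)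

end chains

section altern

def alt : Bool → List Bool → ZMod 2
  | _, [] => 1
  | s, x :: l => if x = s then alt (!s) l else 0

variable {E : Type*}

def Dv : (List E → ZMod 2) → List E → ZMod 2
  | _, [] => 0
  | φ, x :: l => φ l + Dv (fun t => φ (x :: t)) l

lemma lin_bdL (φ : List E → ZMod 2) (l : List E) : lin φ (bdL l) = Dv φ l := by
  induction l generalizing φ with
  | nil => simp [bdL, Dv]
  | cons x l ih =>
    simp only [bdL, map_add, lin_single, Dv, ← ih]
    congr 1
    have := hom_ext (F := lin φ ∘ₗ cone x) (G := lin (fun t => φ (x :: t))) (by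
      intro l; simp [cone_single, lin_single]) (bdL l)
    simpa using this

lemma Dv_alt (s : Bool) (l : List Bool) : Dv (alt s) l = alt s l + alt (!s) l := by
  induction l generalizing s with
  | nil => simp [Dv, alt]; decide
  | cons x l ih =>
    by_cases h : x = s
    · subst h
      have : (fun t => alt x (x :: t)) = alt (!x) := by ext t; simp [alt]
      simp only [Dv, this, ih, Bool.not_not]
      simp [alt]
      generalize alt x l = a; generalize alt (!x) l = b
      revert a b; decide
    · have hx : x = !s := by revert x s; decide
      have : (fun t => alt s (x :: t)) = fun _ => 0 := by ext t; simp [alt, h]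
      have h0 : ∀ t : List Bool, Dv (fun _ => 0) t = 0 := by
        intro t; induction t with
        | nil => rfl
        | cons y t ih => simp [Dv, ih]
      simp [Dv, h0, alt, hx]

lemma Dv_perm {φ : List E → ZMod 2} (hφ : ∀ l l', l.Perm l' → φ l = φ l') {l l' : List E} (h : l.Perm l') :
    Dv φ l = Dv φ l' := by
  induction h generalizing φ with
  | nil => rfl
  | cons x h ih => simp only [Dv]; rw [hφ _ _ h, ih (fun l l' h => hφ _ _ (h.cons x))]
  | swap x y l =>
    have : (fun t => φ (y :: x :: t)) = fun t => φ (x :: y :: t) := by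
      ext t; exact hφ _ _ (List.Perm.swap _ _ _)
    simp only [Dv, this]; ring
  | trans _ _ h1 h2 => rw [h1 hφ, h2 hφ]

lemma Dv_congr {φ ψ : List E → ZMod 2} {l : List E} (h : ∀ t, t.Sublist l → φ t = ψ t) : Dv φ l = Dv ψ l := by
  induction l generalizing φ ψ with
  | nil => rfl
  | cons x l ih =>
    simp only [Dv]
    rw [h l (List.sublist_cons_self x l), ih (fun t ht => h _ (ht.cons_cons x))]

lemma Dv_map {F : Type*} (g : E → F) (φ : List F → ZMod 2) (l : List E) :
    Dv (fun t => φ (t.map g)) l = Dv φ (l.map g) := by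
  induction l generalizing φ with
  | nil => rfl
  | cons x l ih => simp only [Dv, List.map]; rw [← ih]

variable {n : ℕ}

abbrev le1 : Fin n × Bool → Fin n × Bool → Prop := fun x y => x.1 ≤ y.1

def good (l : List (Fin n × Bool)) : Prop := ∀ x ∈ l, ∀ y ∈ l, x.1 = y.1 → x = y

instance : Std.Total (le1 (n := n)) := ⟨fun a b => le_total a.1 b.1⟩
instance : IsTrans (Fin n × Bool) (le1 (n := n)) := ⟨fun _ _ _ h1 h2 => le_trans h1 h2⟩

def al (s : Bool) (l : List (Fin n × Bool)) : ZMod 2 := alt s ((l.insertionSort le1).map Prod.snd)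

lemma sort_unique {l t : List (Fin n × Bool)} (hl : good l) (ht : t.Pairwise le1) (h : l.Perm t) :
    l.insertionSort le1 = t := by
  refine List.Perm.eq_of_pairwise ?_ (List.pairwise_insertionSort le1 l) ht ((List.perm_insertionSort le1 l).trans h)
  intro a b ha hb h1 h2
  exact hl a ((List.perm_insertionSort le1 l).mem_iff.1 ha) b (h.mem_iff.2 hb) (le_antisymm h1 h2)

lemma good_perm {l t : List (Fin n × Bool)} (hl : good l) (h : ∀ x ∈ t, x ∈ l) : good t :=
  fun x hx y hy e => hl x (h x hx) y (h y hy) e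

open Classical in
noncomputable def al' (s : Bool) (l : List (Fin n × Bool)) : ZMod 2 := if good l then al s l else 0

lemma al'_perm (s : Bool) (l l' : List (Fin n × Bool)) (h : l.Perm l') : al' s l = al' s l' := by
  unfold al'
  by_cases hl : good l
  · have hl' : good l' := good_perm hl (fun x hx => h.mem_iff.2 hx)
    rw [if_pos hl, if_pos hl']
    unfold al
    rw [sort_unique hl (List.pairwise_insertionSort le1 l') (h.trans (List.perm_insertionSort le1 l').symm)]
  · have hl' : ¬ good l' := fun h' => hl (good_perm h' (fun x hx => h.mem_iff.1 hx))
    rw [if_neg hl, if_neg hl']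

lemma Dv_al' (s : Bool) {l : List (Fin n × Bool)} (hl : good l) :
    Dv (al' s) l = al' s l + al' (!s) l := by
  set t := l.insertionSort le1 with ht
  have hp : l.Perm t := (List.perm_insertionSort le1 l).symm
  have hs : t.Pairwise le1 := List.pairwise_insertionSort le1 l
  have key : ∀ s, ∀ u : List (Fin n × Bool), u.Sublist t → al' s u = alt s (u.map Prod.snd) := by
    intro s u hu
    have hg : good u := good_perm hl (fun x hx => hp.mem_iff.2 (hu.subset hx))
    rw [al', if_pos hg, al, sort_unique hg (hs.sublist hu) (List.Perm.refl _)]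
  rw [Dv_perm (al'_perm s) hp, al'_perm s _ _ hp, al'_perm (!s) _ _ hp, key _ t (List.Sublist.refl _),
    key _ t (List.Sublist.refl _), Dv_congr (key s), Dv_map, Dv_alt]

def ng (x : Fin n × Bool) : Fin n × Bool := (x.1, !x.2)

lemma alt_not (s : Bool) (l : List Bool) : alt (!s) (l.map Bool.not) = alt s l := by
  induction l generalizing s with
  | nil => rfl
  | cons x l ih => have := ih (!s); rw [Bool.not_not] at this; simp [alt, this]

lemma al'_ng (s : Bool) {l : List (Fin n × Bool)} (hl : good l) : al' s (l.map ng) = al' (!s) l := by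
  have hg : good (l.map ng) := by
    intro x hx y hy e
    simp only [List.mem_map] at hx hy
    obtain ⟨a, ha, rfl⟩ := hx
    obtain ⟨b, hb, rfl⟩ := hy
    rw [hl a ha b hb e]
  rw [al', al', if_pos hl, if_pos hg, al, al]
  rw [sort_unique hg (t := (l.insertionSort le1).map ng) (by
      rw [List.pairwise_map]
      exact List.pairwise_insertionSort le1 l) ((List.perm_insertionSort le1 l).symm.map ng)]
  rw [← alt_not (!s)]
  simp [List.map_map, Function.comp_def, ng]

lemma alt_len {l : List (Fin n × Bool)} {s : Bool} (hl : good l) (hs : l.Pairwise le1)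
    (h : alt s (l.map Prod.snd) ≠ 0) : (l.map Prod.fst).Pairwise (· < ·) := by
  rw [← List.isChain_iff_pairwise]
  induction l generalizing s with
  | nil => simp
  | cons x l ih =>
    simp only [List.map, alt] at h
    split_ifs at h with hx
    · have ih' := ih (good_perm hl (fun y hy => by simp [hy])) (List.pairwise_cons.1 hs).2 h
      cases l with
      | nil => simp
      | cons y l =>
        simp only [List.map] at ih' ⊢
        refine List.IsChain.cons_cons ?_ ih'
        have h1 : x.1 ≤ y.1 := (List.pairwise_cons.1 hs).1 y (by simp)
        refine lt_of_le_of_ne h1 (fun e => ?_)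
        have := hl x (by simp) y (by simp) e
        simp only [List.map, alt] at h
        split_ifs at h with hy
        · rw [← this, hx] at hy; revert hy; cases s <;> decide
        · exact h rfl
    · exact absurd rfl h

lemma al'_len {l : List (Fin n × Bool)} {s : Bool} (h : al' s l ≠ 0) : l.length ≤ n := by
  unfold al' at h
  split_ifs at h with hl
  · have := alt_len (good_perm hl (fun x hx => (List.perm_insertionSort le1 l).mem_iff.1 hx))
      (List.pairwise_insertionSort le1 l) h
    have h2 : (List.map Prod.fst (List.insertionSort le1 l)).Nodup := this.imp (fun h => ne_of_lt h)
    have h3 := h2.length_le_card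
    simpa using h3
  · exact absurd rfl h

end altern

section subdiv
variable {V : Type*} [NormedAddCommGroup V] [NormedSpace ℝ V]

noncomputable def bary (l : List V) : V := (l.length : ℝ)⁻¹ • l.sum

noncomputable def sdL : ℕ → List V → Ch V
  | 0, l => Finsupp.single l 1
  | k + 1, l => cone (bary l) (lin (sdL k) (bdL l))

lemma bd_single (l : List V) : bd (Finsupp.single l 1) = bdL l := lin_single _ _

lemma bd_sdL (k : ℕ) : ∀ l : List V, l.length = k + 1 → bd (sdL (k + 1) l) = lin (sdL k) (bdL l) := by
  induction k with
  | zero =>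
    intro l hl
    obtain ⟨x, rfl⟩ := List.length_eq_one_iff.1 hl
    simp [sdL, bd_cone, bdL, lin_single, bd_single]
  | succ k ih =>
    intro l hl
    rw [sdL, bd_cone]
    have h := sup_eq (P := fun l' => l'.length + 1 = l.length ∧ ∀ x ∈ l', x ∈ l)
      (bd ∘ₗ lin (sdL (k + 1))) (lin (sdL k) ∘ₗ bd) (by
        rintro l' ⟨h1, -⟩
        simp only [LinearMap.comp_apply, lin_single, bd_single]
        exact ih l' (by omega)) (bdL_mem l)
    simp only [LinearMap.comp_apply, bd_bdL, map_zero] at h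
    rw [h]; simp

lemma norm_sum_sub (l : List V) (x : V) (d : ℝ) (h : ∀ y ∈ l, ‖y - x‖ ≤ d) :
    ‖l.sum - (l.length : ℝ) • x‖ ≤ l.length * d := by
  induction l with
  | nil => simp
  | cons y l ih =>
    have h1 := ih (fun z hz => h z (by simp [hz]))
    have h2 := h y (by simp)
    have : (y :: l).sum - ((y :: l).length : ℝ) • x = (y - x) + (l.sum - (l.length : ℝ) • x) := by
      simp [add_smul]; abel
    rw [this]
    refine (norm_add_le _ _).trans ?_
    push_cast [List.length_cons]
    nlinarith

lemma bary_dist {l : List V} {d : ℝ} {n : ℕ} (hn : l.length ≤ n + 1) (h : ∀ x ∈ l, ∀ y ∈ l, dist x y ≤ d)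
    {x : V} (hx : x ∈ l) : dist x (bary l) ≤ (n / (n + 1)) * d := by
  classical
  have hp := List.perm_cons_erase hx
  have hd : 0 ≤ d := (dist_nonneg).trans (h x hx x hx)
  have hk : l.length = (l.erase x).length + 1 := by simpa using hp.length_eq
  have hs : l.sum = x + (l.erase x).sum := by simpa using hp.sum_eq
  have h1 := norm_sum_sub (l.erase x) x d (fun y hy => by
    rw [← dist_eq_norm]; exact h y (List.mem_of_mem_erase hy) x hx)
  set m := (l.erase x).length with hm
  have hk' : (l.length : ℝ) = m + 1 := by rw [hk]; push_cast; ring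
  have hb : bary l - x = ((m : ℝ) + 1)⁻¹ • ((l.erase x).sum - (m : ℝ) • x) := by
    rw [bary, hk', hs]
    have : ((m : ℝ) + 1) ≠ 0 := by positivity
    rw [eq_inv_smul_iff₀ this, smul_sub, smul_inv_smul₀ this, add_smul, one_smul]
    abel
  rw [dist_comm, dist_eq_norm, hb, norm_smul, norm_inv, Real.norm_of_nonneg (by positivity)]
  have hmn : (m : ℝ) ≤ n := by exact_mod_cast (by omega : m ≤ n)
  calc ((m : ℝ) + 1)⁻¹ * ‖(l.erase x).sum - (m : ℝ) • x‖ ≤ ((m : ℝ) + 1)⁻¹ * (m * d) := by gcongr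
    _ = m / (m + 1) * d := by field_simp
    _ ≤ n / (n + 1) * d := by
      gcongr ?_ * d
      rw [div_le_div_iff₀ (by positivity) (by positivity)]
      nlinarith

lemma bary_mem {l : List V} {K : Set V} (hK : Convex ℝ K) (h : ∀ x ∈ l, x ∈ K) (hl : l ≠ []) : bary l ∈ K := by
  have hpos : 0 < l.length := List.length_pos_iff.2 hl
  have h1 := hK.sum_mem (t := Finset.univ) (w := fun _ : Fin l.length => (l.length : ℝ)⁻¹) (z := fun i => l.get i)
    (fun _ _ => by positivity) (by simp; field_simp) (fun i _ => h _ (List.get_mem l i))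
  rw [← Finset.smul_sum] at h1
  have : ∑ i : Fin l.length, l.get i = l.sum := by
    rw [← List.sum_ofFn]; simp
  rw [this] at h1
  exact h1

lemma sdL_mem (n : ℕ) (d : ℝ) (k : ℕ) (hk : k ≤ n + 1) : ∀ (K : Set V) (l : List V), Convex ℝ K → l.length = k →
    (∀ x ∈ l, x ∈ K) → (∀ x ∈ l, ∀ y ∈ l, dist x y ≤ d) →
    sdL k l ∈ sup (fun l' => l'.length = k ∧ (∀ x ∈ l', x ∈ K) ∧ ∀ x ∈ l', ∀ y ∈ l', dist x y ≤ (n / (n + 1)) * d) := by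
  induction k with
  | zero =>
    intro K l _ hl _ _
    rw [List.length_eq_zero_iff] at hl
    subst hl
    exact single_mem (by simp)
  | succ k ih =>
    intro K l hK hl hlK hld
    have hne : l ≠ [] := by rintro rfl; simp at hl
    have hd : 0 ≤ d := by
      obtain ⟨x, hx⟩ := List.exists_mem_of_ne_nil l hne
      exact (dist_nonneg).trans (hld x hx x hx)
    set K' := K ∩ Metric.closedBall (bary l) ((n / (n + 1)) * d) with hK'
    have hc : Convex ℝ K' := hK.inter (convex_closedBall _ _)
    have hlK' : ∀ x ∈ l, x ∈ K' := fun x hx => ⟨hlK x hx, by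
      rw [Metric.mem_closedBall]; exact bary_dist (by omega) hld hx⟩
    refine cone_mem (P := fun l' => l'.length = k ∧ (∀ x ∈ l', x ∈ K') ∧
      ∀ x ∈ l', ∀ y ∈ l', dist x y ≤ (n / (n + 1)) * d) (bary l) ?_ ?_
    · rintro l' ⟨h1, h2, h3⟩
      refine ⟨by simp [h1], ?_, ?_⟩
      · intro x hx
        rcases List.mem_cons.1 hx with rfl | hx
        · exact bary_mem hK hlK hne
        · exact (h2 x hx).1
      · intro x hx y hy
        rcases List.mem_cons.1 hx with rfl | hx <;> rcases List.mem_cons.1 hy with rfl | hy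
        · rw [dist_self]; positivity
        · rw [dist_comm]; exact (h2 y hy).2
        · exact (h2 x hx).2
        · exact h3 x hx y hy
    · refine sup_induction (lin (sdL k)) _ ?_ (bdL_mem l)
      rintro l' ⟨h1, h2⟩
      rw [lin_single]
      exact ih (by omega) K' l' hc (by omega) (fun x hx => hlK' x (h2 x hx))
        (fun x hx y hy => hld x (h2 x hx) y (h2 y hy))

noncomputable def tau : Ch V →ₗ[ZMod 2] Ch V := Finsupp.lmapDomain _ _ (List.map (fun x => -x))

lemma tau_single (l : List V) : tau (Finsupp.single l 1) = Finsupp.single (l.map (fun x => -x)) 1 := by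
  simp [tau]

lemma tau_cone (x : V) (z : Ch V) : tau (cone x z) = cone (-x) (tau z) := by
  have := hom_ext (F := tau ∘ₗ cone x) (G := cone (-x) ∘ₗ tau) (by
    intro l; simp [cone_single, tau_single]) z
  simpa using this

lemma tau_bdL (l : List V) : tau (bdL l) = bdL (l.map (fun x => -x)) := by
  induction l with
  | nil => simp [bdL]
  | cons x l ih => simp [bdL, tau_cone, ih, tau_single]

lemma tau_bd (z : Ch V) : tau (bd z) = bd (tau z) := by
  have := hom_ext (F := tau ∘ₗ bd) (G := bd ∘ₗ tau) (by
    intro l; simp [bd_single, tau_single, tau_bdL]) z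
  simpa using this

lemma tau_tau (z : Ch V) : tau (tau z) = z := by
  have := hom_ext (F := tau ∘ₗ tau) (G := LinearMap.id) (by
    intro l; simp [tau_single]) z
  simpa using this

lemma bary_neg (l : List V) : bary (l.map (fun x => -x)) = - bary l := by
  have : (l.map (fun x => -x)).sum = - l.sum := by
    induction l with
    | nil => simp
    | cons x l ih => simp only [List.map_cons, List.sum_cons, ih]; abel
  simp [bary, this]

lemma tau_sdL (k : ℕ) (l : List V) : tau (sdL k l) = sdL k (l.map (fun x => -x)) := by
  induction k generalizing l with
  | zero => simp [sdL, tau_single]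
  | succ k ih =>
    rw [sdL, sdL, tau_cone, bary_neg, ← tau_bdL]
    congr 1
    have := hom_ext (F := tau ∘ₗ lin (sdL k)) (G := lin (sdL k) ∘ₗ tau) (by
      intro l; simp [lin_single, tau_single, ih]) (bdL l)
    simpa using this

end subdiv
end BU

namespace BU
section busec
variable {n : ℕ}

def Cset (ε : Fin (n+1) → ℝ) : Set (Fin (n+1) → ℝ) := {x | ∑ k, ε k * x k = 1 ∧ ∀ k, 0 ≤ ε k * x k}

lemma Cset_convex (ε : Fin (n+1) → ℝ) : Convex ℝ (Cset ε) := by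
  intro x hx y hy a b ha hb hab
  refine ⟨?_, fun k => ?_⟩
  · have : ∑ k, ε k * (a • x + b • y) k = a * ∑ k, ε k * x k + b * ∑ k, ε k * y k := by
      rw [Finset.mul_sum, Finset.mul_sum, ← Finset.sum_add_distrib]
      refine Finset.sum_congr rfl (fun k _ => ?_)
      simp; ring
    rw [this, hx.1, hy.1]; linarith
  · have h1 := hx.2 k
    have h2 := hy.2 k
    have : ε k * (a • x + b • y) k = a * (ε k * x k) + b * (ε k * y k) := by simp; ring
    rw [this]; positivity

def Sgn (ε : Fin (n+1) → ℝ) : Prop := ∀ k, ε k = 1 ∨ ε k = -1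

lemma Cset_sphere {ε : Fin (n+1) → ℝ} (hε : Sgn ε) {x : Fin (n+1) → ℝ} (hx : x ∈ Cset ε) : ∑ k, |x k| = 1 := by
  rw [← hx.1]
  refine Finset.sum_congr rfl (fun k _ => ?_)
  have := hx.2 k
  rcases hε k with h | h <;> rw [h] at this ⊢
  · rw [abs_of_nonneg (by linarith)]; ring
  · rw [abs_of_nonpos (by linarith)]; ring

def Pl (n i : ℕ) (d : ℝ) (l : List (Fin (n+1) → ℝ)) : Prop :=
  l.length = i + 1 ∧ (∃ ε, Sgn ε ∧ ∀ x ∈ l, x ∈ Cset ε) ∧ ∀ x ∈ l, ∀ y ∈ l, dist x y ≤ d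

def Fam (n : ℕ) (d : ℝ) (c : ℕ → Ch (Fin (n+1) → ℝ)) : Prop :=
  bd (c 0) = Finsupp.single [] 1 ∧ (∀ i < n, bd (c (i+1)) = c i + tau (c i)) ∧ ∀ i ≤ n, c i ∈ sup (Pl n i d)

def ee (n : ℕ) (j : ℕ) : Fin (n+1) → ℝ := fun k => if k.val = j then 1 else 0

noncomputable def cc (n : ℕ) : ℕ → Ch (Fin (n+1) → ℝ)
  | 0 => Finsupp.single [ee n 0] 1
  | i + 1 => cone (ee n (i+1)) (cc n i + tau (cc n i))

lemma tau_mem {V : Type*} [NormedAddCommGroup V] [NormedSpace ℝ V] {P Q : List V → Prop}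
    (h : ∀ l, P l → Q (l.map (fun x => -x))) {z : Ch V} (hz : z ∈ sup P) :
    tau z ∈ sup Q :=
  sup_induction tau (sup Q) (fun l hl => by rw [tau_single]; exact single_mem (h l hl)) hz

def Pc (n i : ℕ) (l : List (Fin (n+1) → ℝ)) : Prop :=
  l.length = i + 1 ∧ ∃ ε : ℕ → ℝ, (∀ k, ε k = 1 ∨ ε k = -1) ∧ ∀ x ∈ l, ∃ j ≤ i, x = ε j • ee n j

lemma cc_mem (n i : ℕ) : cc n i ∈ sup (Pc n i) := by
  induction i with
  | zero => exact single_mem ⟨by simp, fun _ => 1, fun _ => Or.inl rfl, fun x hx => ⟨0, le_rfl, by simpa using hx⟩⟩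
  | succ i ih =>
    refine cone_mem (P := Pc n i) _ ?_ (Submodule.add_mem _ ih (tau_mem ?_ ih))
    · rintro l ⟨hl, ε, h1, h2⟩
      refine ⟨by simp [hl], fun j => if j = i + 1 then 1 else ε j, fun k => ?_, fun x hx => ?_⟩
      · dsimp; split_ifs
        · exact Or.inl rfl
        · exact h1 k
      · rcases List.mem_cons.1 hx with rfl | hx
        · exact ⟨i+1, le_rfl, by simp⟩
        · obtain ⟨j, hj, rfl⟩ := h2 x hx
          exact ⟨j, by omega, by simp [show j ≠ i + 1 by omega]⟩
    · rintro l ⟨hl, ε, h1, h2⟩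
      refine ⟨by simp [hl], fun j => - ε j, fun k => ?_, fun x hx => ?_⟩
      · rcases h1 k with h | h <;> simp [h]
      · obtain ⟨y, hy, rfl⟩ := List.mem_map.1 hx
        obtain ⟨j, hj, rfl⟩ := h2 y hy
        exact ⟨j, hj, by simp⟩

lemma cc_bd (n i : ℕ) : bd (cc n (i+1)) = cc n i + tau (cc n i) := by
  have key : cone (ee n (i+1)) (bd (cc n i + tau (cc n i))) = 0 := by
    cases i with
    | zero => simp [cc, bd_single, tau_single, bdL, add_self]
    | succ i =>
      rw [map_add bd, ← tau_bd, cc_bd n i, map_add tau, tau_tau, add_comm (tau (cc n i)), add_self, map_zero]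
  rw [cc, bd_cone, key, add_zero]

lemma cc_fam (n : ℕ) : Fam n 2 (cc n) := by
  refine ⟨by simp [cc, bd_single, bdL], fun i _ => cc_bd n i, fun i hi => sup_mono ?_ (cc_mem n i)⟩
  rintro l ⟨hl, ε, h1, h2⟩
  have h3 : ∀ x ∈ l, x ∈ Cset (fun k : Fin (n+1) => ε k) := by
    intro x hx
    obtain ⟨j, hj, rfl⟩ := h2 x hx
    have e1 : ∀ k : Fin (n+1), ε k * (ε j • ee n j) k = if k = ⟨j, by omega⟩ then 1 else 0 := by
      intro k
      simp only [ee, Pi.smul_apply, smul_eq_mul, Fin.ext_iff]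
      split_ifs with h
      · rw [h]; rcases h1 j with h | h <;> simp [h]
      · simp
    constructor
    · simp only [e1]; simp
    · intro k; rw [e1]; split_ifs <;> norm_num
  have h4 : ∀ x ∈ l, ‖x‖ ≤ 1 := by
    intro x hx
    rw [pi_norm_le_iff_of_nonneg zero_le_one]
    intro k
    rw [← Cset_sphere (ε := fun k : Fin (n+1) => ε k) (fun k => h1 k) (h3 x hx), Real.norm_eq_abs]
    exact Finset.single_le_sum (f := fun k => |x k|) (fun _ _ => abs_nonneg _) (Finset.mem_univ k)
  refine ⟨hl, ⟨_, fun k => h1 k, h3⟩, fun x hx y hy => ?_⟩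
  rw [dist_eq_norm]
  have := norm_sub_le x y
  have := h4 x hx
  have := h4 y hy
  linarith

lemma fam_step {n : ℕ} {d : ℝ} {c : ℕ → Ch (Fin (n+1) → ℝ)} (h : Fam n d c) :
    Fam n (n / (n+1) * d) (fun i => lin (sdL (i+1)) (c i)) := by
  obtain ⟨h0, h1, h2⟩ := h
  have key : ∀ i ≤ n, bd (lin (sdL (i+1)) (c i)) = lin (sdL i) (bd (c i)) := by
    intro i hi
    have := sup_eq (P := Pl n i d) (bd ∘ₗ lin (sdL (i+1))) (lin (sdL i) ∘ₗ bd) (by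
      intro l hl
      simp only [LinearMap.comp_apply, lin_single, bd_single]
      exact bd_sdL i l hl.1) (h2 i hi)
    simpa only [LinearMap.comp_apply] using this
  refine ⟨?_, ?_, ?_⟩
  · rw [key 0 (by omega), h0, lin_single]; rfl
  · intro i hi
    rw [key (i+1) (by omega), h1 i hi, map_add]
    congr 1
    have := hom_ext (F := lin (sdL (i+1)) ∘ₗ tau) (G := tau ∘ₗ lin (sdL (i+1))) (by
      intro l; simp [lin_single, tau_single, tau_sdL]) (c i)
    simpa using this
  · intro i hi
    refine sup_induction (lin (sdL (i+1))) _ ?_ (h2 i hi)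
    rintro l ⟨hl, ⟨ε, hε, h3⟩, h4⟩
    rw [lin_single]
    refine sup_mono ?_ (sdL_mem n d (i+1) (by omega) (Cset ε) l (Cset_convex ε) hl h3 h4)
    rintro l' ⟨a, b, c⟩
    exact ⟨a, ⟨ε, hε, b⟩, c⟩

lemma fam_exists (n : ℕ) {δ : ℝ} (hδ : 0 < δ) : ∃ c, Fam n δ c := by
  have h1 : ∀ m : ℕ, ∃ c, Fam n ((n / (n+1) : ℝ)^m * 2) c := by
    intro m
    induction m with
    | zero => exact ⟨_, by simpa using cc_fam n⟩
    | succ m ih =>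
      obtain ⟨c, hc⟩ := ih
      have := fam_step hc
      rw [← mul_assoc, ← pow_succ'] at this
      exact ⟨_, this⟩
  have hlt : (n / (n+1) : ℝ) < 1 := by rw [div_lt_one (by positivity)]; linarith
  obtain ⟨m, hm⟩ := exists_pow_lt_of_lt_one (show 0 < δ/2 by linarith) hlt
  obtain ⟨c, h0, h1, h2⟩ := h1 m
  refine ⟨c, h0, h1, fun i hi => sup_mono ?_ (h2 i hi)⟩
  rintro l ⟨a, b, h⟩
  exact ⟨a, b, fun x hx y hy => (h x hx y hy).trans (by linarith)⟩

lemma no_label (n : ℕ) (lam : (Fin (n+1) → ℝ) → Fin n × Bool) {δ : ℝ} (hδ : 0 < δ)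
    (hn : ∀ x, ∑ k, |x k| = 1 → lam (-x) = ng (lam x))
    (hg : ∀ x y, ∑ k, |x k| = 1 → ∑ k, |y k| = 1 → dist x y ≤ δ → (lam x).1 = (lam y).1 → lam x = lam y) :
    False := by
  obtain ⟨c, h0, h1, h2⟩ := fam_exists n hδ
  have hP : ∀ i l, Pl n i δ l → good (l.map lam) ∧ ∀ x ∈ l, ∑ k, |x k| = 1 := by
    rintro i l ⟨-, ⟨ε, hε, h3⟩, h4⟩
    refine ⟨?_, fun x hx => Cset_sphere hε (h3 x hx)⟩
    intro x hx y hy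
    obtain ⟨a, ha, rfl⟩ := List.mem_map.1 hx
    obtain ⟨b, hb, rfl⟩ := List.mem_map.1 hy
    exact hg a b (Cset_sphere hε (h3 a ha)) (Cset_sphere hε (h3 b hb)) (h4 a ha b hb)
  set A : Bool → Ch (Fin (n+1) → ℝ) →ₗ[ZMod 2] ZMod 2 := fun s => lin (fun l => al' s (l.map lam)) with hA
  have e1 : ∀ i ≤ n, A true (bd (c i)) = A true (c i) + A false (c i) := by
    intro i hi
    refine sup_eq (A true ∘ₗ bd) (A true + A false) ?_ (h2 i hi)
    intro l hl
    simp only [LinearMap.comp_apply, LinearMap.add_apply, bd_single, hA, lin_single, lin_bdL]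
    rw [Dv_map lam (al' true), Dv_al' true (hP i l hl).1]; rfl
  have e2 : ∀ i ≤ n, A true (tau (c i)) = A false (c i) := by
    intro i hi
    refine sup_eq (A true ∘ₗ tau) (A false) ?_ (h2 i hi)
    intro l hl
    simp only [LinearMap.comp_apply, tau_single, hA, lin_single]
    have h3 := (hP i l hl)
    rw [show false = !true from rfl, ← al'_ng true h3.1]
    congr 1
    rw [List.map_map, List.map_map]
    exact List.map_congr_left (fun x hx => hn x (h3.2 x hx))
  have e3 : ∀ i ≤ n, A true (c i) + A false (c i) = 1 := by
    intro i
    induction i with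
    | zero =>
      intro _
      rw [← e1 0 (by omega), h0]
      simp [hA, lin_single, al', good, al, alt]
    | succ i ih =>
      intro hi
      rw [← e1 _ hi, h1 i (by omega), map_add, e2 i (by omega)]
      exact ih (by omega)
  have e4 : ∀ s, A s (c n) = 0 := by
    intro s
    have := sup_eq (A s) 0 (fun l hl => by
      simp only [hA, lin_single, LinearMap.zero_apply]
      by_contra h
      have h5 := al'_len h
      have h6 := hl.1
      simp at h5; omega) (h2 n le_rfl)
    simpa using this
  have := e3 n le_rfl
  rw [e4, e4] at this
  exact absurd this (by decide)

theorem borsuk_ulam (n : ℕ) (g : (Fin (n+1) → ℝ) → (Fin n → ℝ)) (hc : Continuous g) (ho : ∀ x, g (-x) = - g x) :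
    ∃ x, ∑ k, |x k| = 1 ∧ g x = 0 := by
  by_contra hcon
  push Not at hcon
  have hne : Nonempty (Fin n) := by
    rcases n with _ | n
    · exact absurd (Subsingleton.elim _ _) (hcon (fun _ => 1) (by simp))
    · infer_instance
  have hmx : ∀ w : Fin n → ℝ, ∃ i, ∀ j, w j ≤ w i := fun w => Finite.exists_max w
  choose mx hmx using hmx
  set S : Set (Fin (n+1) → ℝ) := {x | ∑ k, |x k| = 1} with hS
  have hcl : IsClosed S := isClosed_eq (by fun_prop) continuous_const
  have hScomp : IsCompact S := by
    refine Metric.isCompact_of_isClosed_isBounded hcl ((Metric.isBounded_closedBall (x := 0) (r := 1)).subset ?_)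
    intro x hx
    rw [mem_closedBall_zero_iff, pi_norm_le_iff_of_nonneg zero_le_one]
    intro k
    rw [← (show ∑ k, |x k| = 1 from hx), Real.norm_eq_abs]
    exact Finset.single_le_sum (f := fun k => |x k|) (fun _ _ => abs_nonneg _) (Finset.mem_univ k)
  have hSne : S.Nonempty := ⟨ee n 0, by
    have : ∀ k : Fin (n+1), |ee n 0 k| = if k = 0 then 1 else 0 := by
      intro k; simp only [ee, Fin.ext_iff]; split_ifs <;> simp_all
    simp [hS, this]⟩
  obtain ⟨x0, hx0, hmin⟩ := hScomp.exists_isMinOn hSne (f := fun x => ‖g x‖) (by fun_prop)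
  set μ := ‖g x0‖ with hμ
  have hμ0 : 0 < μ := norm_pos_iff.2 (hcon x0 hx0)
  have huc := hScomp.uniformContinuousOn_of_continuous hc.continuousOn
  rw [Metric.uniformContinuousOn_iff] at huc
  obtain ⟨δ, hδ, huc⟩ := huc μ hμ0
  set idx : (Fin (n+1) → ℝ) → Fin n := fun x => mx (fun i => |g x i|) with hidx
  have hbig : ∀ x ∈ S, μ ≤ |g x (idx x)| := by
    intro x hx
    refine (hmin hx).trans ?_
    dsimp
    rw [pi_norm_le_iff_of_nonneg (abs_nonneg _)]
    intro i
    exact hmx (fun i => |g x i|) i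
  have hidn : ∀ x, idx (-x) = idx x := by intro x; simp [hidx, ho]
  classical
  refine no_label n (fun x => (idx x, decide (0 < g x (idx x)))) (half_pos hδ) ?_ ?_
  · intro x hx
    have h1 := hbig x hx
    have hne : g x (idx x) ≠ 0 := by intro h; rw [h, abs_zero] at h1; linarith
    simp only [ng, hidn, ho, Pi.neg_apply, Prod.mk.injEq, true_and]
    rcases lt_or_gt_of_ne hne with h | h
    · simp [h, not_lt.2 h.le]
    · simp [h, not_lt.2 h.le]
  · intro x y hx hy hd hi
    dsimp only at hi
    have h1 := hbig x hx
    have h2 := hbig y hy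
    rw [← hi] at h2
    have h3 := huc x hx y hy (by linarith)
    have h4 : |g x (idx x) - g y (idx x)| < μ := by
      rw [← Real.dist_eq]; exact (dist_le_pi_dist (g x) (g y) (idx x)).trans_lt h3
    simp only [Prod.mk.injEq, ← hi, true_and, decide_eq_decide]
    rw [abs_lt] at h4
    rcases abs_cases (g x (idx x)) with ⟨a, b⟩ | ⟨a, b⟩ <;> rcases abs_cases (g y (idx x)) with ⟨c, d⟩ | ⟨c, d⟩ <;>
      constructor <;> intro <;> linarith

end busec
end BU

namespace GK
open MvPolynomial

abbrev E3 := Fin 3 → ℝ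
abbrev MP := MvPolynomial (Fin 3) ℝ

noncomputable def clamp (t : ℝ) : ℝ := max (-1) (min 1 t)

lemma clamp_neg (t : ℝ) : clamp (-t) = - clamp t := by
  unfold clamp
  rcases le_total 1 t with h | h <;> rcases le_total t (-1) with h' | h' <;> grind

open Classical in
lemma half_of_sum {X : Type*} (S : Finset X) (c : X → ℝ) (h1 : ∀ p ∈ S, -1 ≤ c p) (Q : X → Prop)
    (h2 : ∀ p ∈ S, Q p → c p = 1) (h0 : ∑ p ∈ S, c p = 0) : 2 * (S.filter Q).card ≤ S.card := by
  have e := Finset.sum_filter_add_sum_filter_not S Q c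
  have e2 := Finset.card_filter_add_card_filter_not (s := S) Q
  have a1 : ∑ p ∈ S.filter Q, c p = (S.filter Q).card := by
    rw [Finset.sum_congr rfl (g := fun _ => (1:ℝ)) (fun p hp => h2 p (Finset.mem_filter.1 hp).1 (Finset.mem_filter.1 hp).2)]
    simp
  have a2 : -((S.filter (fun p => ¬ Q p)).card : ℝ) ≤ ∑ p ∈ S.filter (fun p => ¬ Q p), c p := by
    have := Finset.sum_le_sum (s := S.filter (fun p => ¬ Q p)) (f := fun _ => (-1:ℝ)) (g := c)
      (fun p hp => h1 p (Finset.mem_filter.1 hp).1)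
    simpa using this
  have e3 : ((S.filter Q).card : ℝ) + (S.filter (fun p => ¬ Q p)).card = S.card := by exact_mod_cast e2
  have : (2 * (S.filter Q).card : ℝ) ≤ S.card := by linarith
  exact_mod_cast this

open Classical in
lemma ham {X : Type*} {n : ℕ} (φ : Fin (n+1) → X → ℝ) (S : Fin n → Finset X) :
    ∃ x : Fin (n+1) → ℝ, ∑ k, |x k| = 1 ∧ ∀ i, 2 * ((S i).filter (fun p => 0 < ∑ k, x k * φ k p)).card ≤ (S i).card ∧
      2 * ((S i).filter (fun p => ∑ k, x k * φ k p < 0)).card ≤ (S i).card := by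
  have h1 : ∀ m : ℕ, ∃ x : Fin (n+1) → ℝ, ∑ k, |x k| = 1 ∧
      ∀ i, ∑ p ∈ S i, clamp (m * ∑ k, x k * φ k p) = 0 := by
    intro m
    obtain ⟨x, hx, h⟩ := BU.borsuk_ulam n (fun x i => ∑ p ∈ S i, clamp (m * ∑ k, x k * φ k p)) (by
      unfold clamp; fun_prop) (by
      intro x; ext i
      simp only [Pi.neg_apply, neg_mul, Finset.sum_neg_distrib, mul_neg, clamp_neg])
    exact ⟨x, hx, fun i => congrFun h i⟩
  choose x hx h using h1
  have hc : IsCompact {x : Fin (n+1) → ℝ | ∑ k, |x k| = 1} := by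
    have hcl : IsClosed {x : Fin (n+1) → ℝ | ∑ k, |x k| = 1} := isClosed_eq (by fun_prop) continuous_const
    refine Metric.isCompact_of_isClosed_isBounded hcl ((Metric.isBounded_closedBall (x := 0) (r := 1)).subset ?_)
    intro x hx
    rw [mem_closedBall_zero_iff, pi_norm_le_iff_of_nonneg zero_le_one]
    intro k
    rw [← (show ∑ k, |x k| = 1 from hx), Real.norm_eq_abs]
    exact Finset.single_le_sum (f := fun k => |x k|) (fun _ _ => abs_nonneg _) (Finset.mem_univ k)
  obtain ⟨a, ha, ψ, hψ, hlim⟩ := hc.tendsto_subseq (x := x) hx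
  have key : ∀ p, 0 < ∑ k, a k * φ k p → ∀ᶠ m in Filter.atTop, clamp ((ψ m : ℕ) * ∑ k, x (ψ m) k * φ k p) = 1 := by
    intro p hp
    have ht : Filter.Tendsto (fun m => ∑ k, x (ψ m) k * φ k p) Filter.atTop (nhds (∑ k, a k * φ k p)) := by
      have : Continuous (fun y : Fin (n+1) → ℝ => ∑ k, y k * φ k p) := by fun_prop
      exact (this.tendsto a).comp hlim
    have h2 := ht.eventually (lt_mem_nhds (half_lt_self hp))
    have h3 : Filter.Tendsto (fun m => ((ψ m : ℕ) : ℝ)) Filter.atTop Filter.atTop :=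
      tendsto_natCast_atTop_atTop.comp hψ.tendsto_atTop
    filter_upwards [h2, h3.eventually_ge_atTop (2 / (∑ k, a k * φ k p))] with m hm hm'
    have : 1 ≤ (ψ m : ℝ) * ∑ k, x (ψ m) k * φ k p := by
      calc (1:ℝ) = 2 / (∑ k, a k * φ k p) * ((∑ k, a k * φ k p)/2) := by field_simp
        _ ≤ _ := by gcongr
    rw [clamp, min_eq_left this]; norm_num
  have keyn : ∀ p, ∑ k, a k * φ k p < 0 → ∀ᶠ m in Filter.atTop, clamp ((ψ m : ℕ) * ∑ k, x (ψ m) k * φ k p) = -1 := by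
    intro p hp
    have ht : Filter.Tendsto (fun m => ∑ k, x (ψ m) k * φ k p) Filter.atTop (nhds (∑ k, a k * φ k p)) := by
      have : Continuous (fun y : Fin (n+1) → ℝ => ∑ k, y k * φ k p) := by fun_prop
      exact (this.tendsto a).comp hlim
    have h2 := ht.eventually (gt_mem_nhds (show ∑ k, a k * φ k p < (∑ k, a k * φ k p)/2 by linarith))
    have h3 : Filter.Tendsto (fun m => ((ψ m : ℕ) : ℝ)) Filter.atTop Filter.atTop :=
      tendsto_natCast_atTop_atTop.comp hψ.tendsto_atTop
    filter_upwards [h2, h3.eventually_ge_atTop (2 / (-∑ k, a k * φ k p))] with m hm hm'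
    have hp' : 0 < -∑ k, a k * φ k p := by linarith
    have : 1 ≤ (ψ m : ℝ) * -∑ k, x (ψ m) k * φ k p := by
      calc (1:ℝ) = 2 / (-∑ k, a k * φ k p) * ((-∑ k, a k * φ k p)/2) := by
            rw [div_mul_div_comm, mul_comm, div_self (by positivity)]
        _ ≤ _ := by
          apply mul_le_mul hm' (by linarith) (by linarith) (by positivity)
    have : (ψ m : ℝ) * ∑ k, x (ψ m) k * φ k p ≤ -1 := by linarith
    rw [clamp, min_eq_right (by linarith), max_eq_left this]
  have hge : ∀ t, -1 ≤ clamp t := fun t => le_max_left _ _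
  have hle : ∀ t, clamp t ≤ 1 := fun t => by
    unfold clamp; exact max_le (by norm_num) (min_le_left _ _)
  refine ⟨a, ha, fun i => ⟨?_, ?_⟩⟩
  · have h4 : ∀ᶠ m in Filter.atTop, ∀ p ∈ S i, 0 < ∑ k, a k * φ k p → clamp ((ψ m : ℕ) * ∑ k, x (ψ m) k * φ k p) = 1 := by
      rw [Filter.eventually_all_finset]
      intro p _
      by_cases hp : 0 < ∑ k, a k * φ k p
      · filter_upwards [key p hp] with m hm _ using hm
      · exact Filter.Eventually.of_forall (fun m h => absurd h hp)
    obtain ⟨m, hm⟩ := h4.exists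
    exact half_of_sum (S i) _ (fun p _ => hge _) _ hm (h (ψ m) i)
  · have h4 : ∀ᶠ m in Filter.atTop, ∀ p ∈ S i, ∑ k, a k * φ k p < 0 → clamp ((ψ m : ℕ) * ∑ k, x (ψ m) k * φ k p) = -1 := by
      rw [Filter.eventually_all_finset]
      intro p _
      by_cases hp : ∑ k, a k * φ k p < 0
      · filter_upwards [keyn p hp] with m hm _ using hm
      · exact Filter.Eventually.of_forall (fun m h => absurd h hp)
    obtain ⟨m, hm⟩ := h4.exists
    refine half_of_sum (S i) (fun p => - clamp ((ψ m : ℕ) * ∑ k, x (ψ m) k * φ k p)) (fun p _ => by linarith [hle ((ψ m : ℕ) * ∑ k, x (ψ m) k * φ k p)]) _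
      (fun p hp hp' => by rw [hm p hp hp']; norm_num) ?_
    rw [Finset.sum_neg_distrib, h (ψ m) i, neg_zero]

open Classical in
lemma ham_poly (r : ℕ) {ι : Type*} (T : Finset ι) (hT : T.card < r ^ 3) (S : ι → Finset E3) :
    ∃ f : MP, f ≠ 0 ∧ f.totalDegree ≤ 3 * r ∧ ∀ i ∈ T, 2 * ((S i).filter (fun p => 0 < eval p f)).card ≤ (S i).card ∧
      2 * ((S i).filter (fun p => eval p f < 0)).card ≤ (S i).card := by
  obtain ⟨em⟩ : Nonempty (Fin (T.card + 1) ↪ (Fin 3 → Fin r)) := by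
    apply Function.Embedding.nonempty_of_card_le
    simp; omega
  set mo : Fin (T.card + 1) → (Fin 3 →₀ ℕ) := fun k => Finsupp.equivFunOnFinite.symm (fun j => (em k j : ℕ)) with hmo
  have hinj : Function.Injective mo := by
    intro k k' h
    apply em.injective
    ext j
    have := DFunLike.congr_fun h j
    simpa [hmo] using this
  obtain ⟨x, hx, h⟩ := ham (fun k p => eval p (monomial (mo k) (1:ℝ))) (fun i => S (T.equivFin.symm i))
  set f : MP := ∑ k, monomial (mo k) (x k) with hf
  have hev : ∀ p, eval p f = ∑ k, x k * eval p (monomial (mo k) (1:ℝ)) := by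
    intro p; simp [hf, eval_monomial]
  refine ⟨f, ?_, ?_, ?_⟩
  · intro h0
    have : ∀ k, x k = 0 := by
      intro k
      have := congrArg (coeff (mo k)) h0
      rw [hf, coeff_sum] at this
      simp only [coeff_monomial, hinj.eq_iff, coeff_zero] at this
      simpa using this
    simp [this] at hx
  · refine totalDegree_finsetSum_le (fun k _ => (totalDegree_monomial_le _ _).trans ?_)
    rw [Finsupp.sum_fintype _ _ (fun _ => rfl), Fin.sum_univ_three]
    have h0 := (em k 0).2
    have h1 := (em k 1).2
    have h2 := (em k 2).2
    simp only [hmo, Finsupp.equivFunOnFinite_symm_apply_apply, id]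
    omega
  · intro i hi
    have := h (T.equivFin ⟨i, hi⟩)
    simp only [Equiv.symm_apply_apply] at this
    simpa only [hev] using this

open Classical in
noncomputable def ky (f : ℕ → MP) (J : ℕ) (p : E3) : Finset ℕ := (Finset.range J).filter (fun i => 0 < eval p (f i))

open Classical in
noncomputable def cell (f : ℕ → MP) (J : ℕ) (S : Finset E3) (c : Finset ℕ) : Finset E3 :=
  S.filter (fun p => (∀ i < J, eval p (f i) ≠ 0) ∧ ky f J p = c)

lemma part_exists (S : Finset E3) (J : ℕ) : ∃ f : ℕ → MP, (∀ i, f i ≠ 0) ∧ (∀ i, (f i).totalDegree ≤ 3 * 2 ^ (i / 3 + 1)) ∧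
    ∀ c, 2 ^ J * (cell f J S c).card ≤ S.card := by
  classical
  induction J with
  | zero => exact ⟨fun _ => 1, by simp, by simp, fun c => by
      rw [pow_zero, one_mul]; exact Finset.card_le_card (Finset.filter_subset _ S)⟩
  | succ J ih =>
    obtain ⟨f, h1, h2, h3⟩ := ih
    obtain ⟨g, g0, g1, g2⟩ := ham_poly (2 ^ (J / 3 + 1)) (Finset.range J).powerset (by
      rw [Finset.card_powerset, Finset.card_range, ← pow_mul]
      exact Nat.pow_lt_pow_right (by norm_num) (by omega)) (cell f J S)
    refine ⟨Function.update f J g, ?_, ?_, ?_⟩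
    · intro i
      by_cases h : i = J
      · subst h; simpa using g0
      · simpa [h] using h1 i
    · intro i
      by_cases h : i = J
      · subst h; simpa using g1
      · simpa [h] using h2 i
    · intro c
      have hup : ∀ i < J, Function.update f J g i = f i := fun i hi => by
        rw [Function.update_of_ne (by omega)]
      have hk : ∀ p, ky (Function.update f J g) J p = ky f J p := by
        intro p; unfold ky
        refine Finset.filter_congr (fun i hi => ?_)
        rw [hup i (Finset.mem_range.1 hi)]
      have hk2 : ∀ p, ky (Function.update f J g) (J+1) p = if 0 < eval p g then insert J (ky f J p) else ky f J p := by
        intro p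
        rw [← hk p]
        unfold ky
        rw [Finset.range_add_one, Finset.filter_insert]
        simp
      have hJ : ∀ p, J ∉ ky f J p := by intro p; simp [ky]
      set c' := c.erase J with hc'
      have hsub : ∀ p ∈ cell (Function.update f J g) (J+1) S c, p ∈ cell f J S c' ∧ ((J ∈ c ∧ 0 < eval p g) ∨ (J ∉ c ∧ eval p g < 0)) := by
        intro p hp
        rw [cell, Finset.mem_filter] at hp
        obtain ⟨hpS, hp1, hp2⟩ := hp
        have hg : eval p g ≠ 0 := by simpa using hp1 J (by omega)
        rw [hk2] at hp2
        have hm : ∀ i < J, eval p (f i) ≠ 0 := fun i hi => by rw [← hup i hi]; exact hp1 i (by omega)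
        split_ifs at hp2 with h
        · refine ⟨?_, Or.inl ⟨by simp [← hp2], h⟩⟩
          rw [cell, Finset.mem_filter]
          refine ⟨hpS, hm, ?_⟩
          rw [hc', ← hp2, Finset.erase_insert (hJ p)]
        · refine ⟨?_, Or.inr ⟨by rw [← hp2]; exact hJ p, lt_of_le_of_ne (not_lt.1 h) hg⟩⟩
          rw [cell, Finset.mem_filter]
          refine ⟨hpS, hm, ?_⟩
          rw [hc', ← hp2, Finset.erase_eq_of_notMem (hJ p)]
      by_cases hcp : c' ∈ (Finset.range J).powerset
      · obtain ⟨ga, gb⟩ := g2 c' hcp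
        have h5 := h3 c'
        have : 2 * (cell (Function.update f J g) (J+1) S c).card ≤ (cell f J S c').card := by
          by_cases hJc : J ∈ c
          · refine le_trans (Nat.mul_le_mul_left 2 (Finset.card_le_card ?_)) ga
            intro p hp
            obtain ⟨q1, q2⟩ := hsub p hp
            rw [Finset.mem_filter]
            exact ⟨q1, by tauto⟩
          · refine le_trans (Nat.mul_le_mul_left 2 (Finset.card_le_card ?_)) gb
            intro p hp
            obtain ⟨q1, q2⟩ := hsub p hp
            rw [Finset.mem_filter]
            exact ⟨q1, by tauto⟩
        calc _ = 2 ^ J * (2 * (cell (Function.update f J g) (J+1) S c).card) := by ring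
          _ ≤ 2 ^ J * (cell f J S c').card := by gcongr
          _ ≤ _ := h5
      · have : cell (Function.update f J g) (J+1) S c = ∅ := by
          rw [Finset.eq_empty_iff_forall_notMem]
          intro p hp
          have := (hsub p hp).1
          rw [cell, Finset.mem_filter] at this
          apply hcp
          rw [Finset.mem_powerset, ← this.2.2]
          exact Finset.filter_subset _ _
        simp [this]

lemma deg_prod (f : ℕ → MP) (h2 : ∀ i, (f i).totalDegree ≤ 3 * 2 ^ (i / 3 + 1)) (I : ℕ) :
    (∏ i ∈ Finset.range (3 * I), f i).totalDegree ≤ 18 * 2 ^ I := by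
  induction I with
  | zero => simp
  | succ I ih =>
    have e : 3 * (I + 1) = 3 * I + 1 + 1 + 1 := by ring
    rw [e, Finset.prod_range_succ, Finset.prod_range_succ, Finset.prod_range_succ]
    have a0 := h2 (3 * I)
    have a1 := h2 (3 * I + 1)
    have a2 := h2 (3 * I + 1 + 1)
    rw [show (3 * I) / 3 = I by omega] at a0
    rw [show (3 * I + 1) / 3 = I by omega] at a1
    rw [show (3 * I + 1 + 1) / 3 = I by omega] at a2
    have b1 := totalDegree_mul ((∏ i ∈ Finset.range (3 * I), f i) * f (3*I) * f (3*I+1)) (f (3*I+1+1))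
    have b2 := totalDegree_mul ((∏ i ∈ Finset.range (3 * I), f i) * f (3*I)) (f (3*I+1))
    have b3 := totalDegree_mul ((∏ i ∈ Finset.range (3 * I), f i)) (f (3*I))
    rw [pow_succ] at *
    refine b1.trans ?_
    omega

end GK

namespace GK
open MvPolynomial

def IsLine (ℓ : Set E3) : Prop := ∃ p w : E3, w ≠ 0 ∧ ℓ = Set.range (fun t : ℝ => p + t • w)

def van (ℓ : Set E3) (f : MP) : Prop := ∀ x ∈ ℓ, eval x f = 0

noncomputable def res (p w : E3) : MP →ₐ[ℝ] Polynomial ℝ :=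
  aeval (fun i => Polynomial.C (w i) * Polynomial.X + Polynomial.C (p i))

lemma res_eval (p w : E3) (f : MP) (t : ℝ) : (res p w f).eval t = eval (p + t • w) f := by
  have : (Polynomial.aeval t : Polynomial ℝ →ₐ[ℝ] ℝ).comp (res p w) = aeval (p + t • w) := by
    apply MvPolynomial.algHom_ext
    intro i
    simp [res]
    ring
  have := DFunLike.congr_fun this f
  simpa [Polynomial.aeval_def, Polynomial.eval₂_eq_eval_map, MvPolynomial.aeval_eq_eval] using this

lemma res_deg (p w : E3) (f : MP) : (res p w f).natDegree ≤ f.totalDegree := by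
  have := MvPolynomial.aeval_natDegree_le f (le_refl f.totalDegree)
    (fun i => Polynomial.C (w i) * Polynomial.X + Polynomial.C (p i)) (n := 1)
    (fun i => Polynomial.natDegree_linear_le)
  simpa [res] using this

lemma van_range {p w : E3} {f : MP} : van (Set.range (fun t : ℝ => p + t • w)) f ↔ res p w f = 0 := by
  constructor
  · intro h
    apply Polynomial.funext
    intro t
    rw [res_eval, h _ ⟨t, rfl⟩]; simp
  · rintro h _ ⟨t, rfl⟩
    rw [← res_eval, h]; simp

lemma IsLine.through {ℓ : Set E3} (h : IsLine ℓ) {p : E3} (hp : p ∈ ℓ) :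
    ∃ w : E3, w ≠ 0 ∧ ℓ = Set.range (fun t : ℝ => p + t • w) := by
  obtain ⟨q, w, hw, rfl⟩ := h
  obtain ⟨s, rfl⟩ := hp
  refine ⟨w, hw, ?_⟩
  ext x
  constructor
  · rintro ⟨t, rfl⟩
    exact ⟨t - s, by dsimp; module⟩
  · rintro ⟨t, rfl⟩
    exact ⟨t + s, by dsimp; module⟩

lemma line_eq {ℓ ℓ' : Set E3} (h : IsLine ℓ) (h' : IsLine ℓ') {p q : E3} (hpq : p ≠ q)
    (h1 : p ∈ ℓ) (h2 : q ∈ ℓ) (h3 : p ∈ ℓ') (h4 : q ∈ ℓ') : ℓ = ℓ' := by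
  have key : ∀ m : Set E3, IsLine m → p ∈ m → q ∈ m → m = Set.range (fun t : ℝ => p + t • (q - p)) := by
    intro m hm hp hq
    obtain ⟨w, hw, rfl⟩ := hm.through hp
    obtain ⟨s, rfl⟩ := hq
    have hs : s ≠ 0 := by rintro rfl; simp at hpq
    ext x
    constructor
    · rintro ⟨t, rfl⟩
      refine ⟨t / s, ?_⟩
      dsimp
      rw [add_sub_cancel_left, smul_smul, div_mul_cancel₀ _ hs]
    · rintro ⟨t, rfl⟩
      exact ⟨t * s, by dsimp; module⟩
  rw [key ℓ h h1 h2, key ℓ' h' h3 h4]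

lemma van_mul {ℓ : Set E3} (h : IsLine ℓ) {f g : MP} (hv : van ℓ (f * g)) : van ℓ f ∨ van ℓ g := by
  obtain ⟨p, w, hw, rfl⟩ := h
  rw [van_range, map_mul, mul_eq_zero] at hv
  rwa [van_range, van_range]

lemma van_mul_right {ℓ : Set E3} {f : MP} (g : MP) (hv : van ℓ f) : van ℓ (f * g) := by
  intro x hx; rw [map_mul, hv x hx, zero_mul]

lemma van_dvd {ℓ : Set E3} {f g : MP} (hd : f ∣ g) (hv : van ℓ f) : van ℓ g := by
  obtain ⟨c, rfl⟩ := hd; exact van_mul_right c hv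

lemma van_prod {ℓ : Set E3} (h : IsLine ℓ) {ι : Type*} (s : Finset ι) (f : ι → MP) (hv : van ℓ (∏ i ∈ s, f i)) :
    ∃ i ∈ s, van ℓ (f i) := by
  obtain ⟨p, w, hw, rfl⟩ := h
  rw [van_range, map_prod, Finset.prod_eq_zero_iff] at hv
  simpa only [van_range] using hv

lemma line_zeros {ℓ : Set E3} (h : IsLine ℓ) {f : MP} (hv : ¬ van ℓ f) (T : Finset E3)
    (hT : ∀ x ∈ T, x ∈ ℓ ∧ eval x f = 0) : T.card ≤ f.totalDegree := by
  classical
  obtain ⟨p, w, hw, rfl⟩ := h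
  rw [van_range] at hv
  have hsub : T ⊆ (res p w f).roots.toFinset.image (fun t => p + t • w) := by
    intro x hx
    obtain ⟨⟨t, rfl⟩, h2⟩ := hT x hx
    rw [Finset.mem_image]
    refine ⟨t, ?_, rfl⟩
    rw [Multiset.mem_toFinset, Polynomial.mem_roots hv, Polynomial.IsRoot, res_eval, h2]
  calc T.card ≤ _ := Finset.card_le_card hsub
    _ ≤ _ := Finset.card_image_le
    _ ≤ _ := Multiset.toFinset_card_le _
    _ ≤ _ := Polynomial.card_roots' _
    _ ≤ _ := res_deg p w f

/-- a line meets few cells -/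
lemma line_cells {ℓ : Set E3} (h : IsLine ℓ) (f : ℕ → MP) (J : ℕ) (hv : ¬ van ℓ (∏ i ∈ Finset.range J, f i))
    (T : Finset E3) (hT : ∀ x ∈ T, x ∈ ℓ ∧ ∀ i < J, eval x (f i) ≠ 0) :
    (T.image (ky f J)).card ≤ (∏ i ∈ Finset.range J, f i).totalDegree + 1 := by
  classical
  obtain ⟨p, w, hw, rfl⟩ := h
  rw [van_range] at hv
  set Φ := res p w (∏ i ∈ Finset.range J, f i) with hΦ
  have hsec : ∀ c ∈ T.image (ky f J), ∃ t : ℝ, p + t • w ∈ T ∧ ky f J (p + t • w) = c := by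
    intro c hc
    obtain ⟨x, hx, rfl⟩ := Finset.mem_image.1 hc
    obtain ⟨⟨t, rfl⟩, -⟩ := hT x hx
    exact ⟨t, hx, rfl⟩
  choose! τ hτ1 hτ2 using hsec
  set R := Φ.roots.toFinset with hR
  have hRc : R.card ≤ (∏ i ∈ Finset.range J, f i).totalDegree :=
    (Multiset.toFinset_card_le _).trans ((Polynomial.card_roots' _).trans (res_deg p w _))
  have hmain : ∀ t t' : ℝ, t ≤ t' → p + t • w ∈ T → p + t' • w ∈ T →
      (R.filter (· < t)).card = (R.filter (· < t')).card → ky f J (p + t • w) = ky f J (p + t' • w) := by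
    intro t t' htt ht ht' hcard
    have hsub : R.filter (· < t) ⊆ R.filter (· < t') := by
      intro r hr
      rw [Finset.mem_filter] at hr ⊢
      exact ⟨hr.1, hr.2.trans_le htt⟩
    have heq := Finset.eq_of_subset_of_card_le hsub hcard.ge
    have hnr : ∀ s, t ≤ s → s ≤ t' → ∀ i < J, (res p w (f i)).eval s ≠ 0 := by
      intro s h1 h2 i hi h0
      rcases h2.eq_or_lt with rfl | h2
      · rw [res_eval] at h0; exact (hT _ ht').2 i hi h0
      have : s ∈ R.filter (· < t') := by
        rw [Finset.mem_filter]
        refine ⟨?_, h2⟩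
        rw [hR, Multiset.mem_toFinset, Polynomial.mem_roots hv, Polynomial.IsRoot, hΦ, map_prod, Polynomial.eval_prod]
        exact Finset.prod_eq_zero (Finset.mem_range.2 hi) h0
      rw [← heq, Finset.mem_filter] at this
      linarith [this.2]
    unfold ky
    refine Finset.filter_congr (fun i hi => ?_)
    rw [Finset.mem_range] at hi
    rw [← res_eval, ← res_eval]
    have hc : ContinuousOn (fun s => (res p w (f i)).eval s) (Set.Icc t t') := (Polynomial.continuous _).continuousOn
    have ha := hnr t le_rfl htt i hi
    have hb := hnr t' htt le_rfl i hi
    constructor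
    · intro h1
      by_contra h2
      obtain ⟨s, hs, hs0⟩ := intermediate_value_Icc' htt hc ⟨not_lt.1 h2, h1.le⟩
      exact hnr s hs.1 hs.2 i hi hs0
    · intro h1
      by_contra h2
      obtain ⟨s, hs, hs0⟩ := intermediate_value_Icc htt hc ⟨not_lt.1 h2, h1.le⟩
      exact hnr s hs.1 hs.2 i hi hs0
  have hinj : Set.InjOn (fun c => (R.filter (· < τ c)).card) (T.image (ky f J) : Set (Finset ℕ)) := by
    intro c hc c' hc' he
    have e1 := hτ2 c hc
    have e2 := hτ2 c' hc'
    rcases le_total (τ c) (τ c') with h | h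
    · rw [← e1, ← e2]; exact hmain _ _ h (hτ1 c hc) (hτ1 c' hc') he
    · rw [← e1, ← e2]; exact (hmain _ _ h (hτ1 c' hc') (hτ1 c hc) he.symm).symm
  have hmap : ∀ c ∈ T.image (ky f J), (R.filter (· < τ c)).card ∈ Finset.range (R.card + 1) := by
    intro c _
    rw [Finset.mem_range]
    have := Finset.card_le_card (Finset.filter_subset (· < τ c) R)
    omega
  have := Finset.card_le_card_of_injOn _ hmap hinj
  rw [Finset.card_range] at this
  omega

/-! ### Bezout for lines -/

noncomputable def aff (n p : E3) : MP := ∑ i, C (n i) * (X i - C (p i))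

lemma aff_eval (n p x : E3) : eval x (aff n p) = ∑ i, n i * (x i - p i) := by simp [aff]

lemma aff_deg (n p : E3) : (aff n p).totalDegree ≤ 1 := by
  refine totalDegree_finsetSum_le (fun i _ => ?_)
  refine (totalDegree_mul _ _).trans ?_
  rw [totalDegree_C, zero_add]
  refine (totalDegree_sub _ _).trans ?_
  simp

lemma plane_sep {ℓ : Set E3} (h : IsLine ℓ) {x : E3} (hx : x ∉ ℓ) :
    ∃ f : MP, f.totalDegree ≤ 1 ∧ van ℓ f ∧ eval x f ≠ 0 := by
  obtain ⟨p, w, hw, rfl⟩ := h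
  set v := x - p with hv
  set a := ∑ i, w i * w i with ha
  set b := ∑ i, v i * w i with hb
  have ha0 : 0 < a := by
    obtain ⟨j, hj⟩ := Function.ne_iff.1 hw
    exact Finset.sum_pos' (fun i _ => mul_self_nonneg _) ⟨j, Finset.mem_univ _, mul_self_pos.2 hj⟩
  set n : E3 := a • v - b • w with hn
  have hn0 : n ≠ 0 := by
    intro h0
    apply hx
    refine ⟨b / a, ?_⟩
    have : v = (b / a) • w := by
      have : a • v = b • w := by rw [hn] at h0; exact sub_eq_zero.1 h0
      rw [div_eq_inv_mul, mul_smul, ← this, smul_smul, inv_mul_cancel₀ ha0.ne', one_smul]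
    dsimp
    rw [← this, hv]; abel
  have hnw : ∑ i, n i * w i = 0 := by
    have : ∑ i, n i * w i = a * b - b * a := by
      rw [ha, hb, Finset.sum_mul_sum, Finset.sum_mul_sum] 
      simp only [hn, Pi.sub_apply, Pi.smul_apply, smul_eq_mul, Fin.sum_univ_three, ha, hb]
      ring
    rw [this]; ring
  refine ⟨aff n p, aff_deg n p, ?_, ?_⟩
  · rintro _ ⟨t, rfl⟩
    rw [aff_eval]
    have : ∑ i, n i * ((p + t • w) i - p i) = t * ∑ i, n i * w i := by
      rw [Finset.mul_sum]; refine Finset.sum_congr rfl (fun i _ => ?_); simp; ring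
    dsimp only
    rw [this, hnw, mul_zero]
  · rw [aff_eval]
    have : a * ∑ i, n i * (x i - p i) = ∑ i, n i * n i + b * ∑ i, n i * w i := by
      rw [Finset.mul_sum, Finset.mul_sum, ← Finset.sum_add_distrib]
      refine Finset.sum_congr rfl (fun i _ => ?_)
      have : n i = a * (x i - p i) - b * w i := by simp [hn, hv]
      linear_combination (- n i) * this
    rw [hnw, mul_zero, add_zero] at this
    intro h0
    rw [h0, mul_zero] at this
    obtain ⟨j, hj⟩ := Function.ne_iff.1 hn0
    have := Finset.sum_pos' (s := Finset.univ) (f := fun i => n i * n i) (fun i _ => mul_self_nonneg _) ⟨j, Finset.mem_univ _, mul_self_pos.2 hj⟩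
    linarith

lemma point_sep {x y : E3} (h : x ≠ y) : ∃ f : MP, f.totalDegree ≤ 1 ∧ eval y f = 0 ∧ eval x f ≠ 0 := by
  obtain ⟨j, hj⟩ := Function.ne_iff.1 h
  refine ⟨X j - C (y j), (totalDegree_sub _ _).trans (by simp), by simp, ?_⟩
  simpa [sub_eq_zero] using hj

noncomputable abbrev Vb (N : Fin 3 →₀ ℕ) : Submodule ℝ MP := restrictSupport ℝ (Finset.Iic N : Set (Fin 3 →₀ ℕ))

lemma mem_Vb {N : Fin 3 →₀ ℕ} {f : MP} : f ∈ Vb N ↔ ∀ i, f.degreeOf i ≤ N i := by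
  rw [mem_restrictSupport_iff]
  simp only [degreeOf_le_iff]
  constructor
  · intro h i m hm
    have := h hm
    simp at this
    exact this i
  · intro h m hm
    simp only [Finset.coe_Iic, Set.mem_Iic]
    intro i
    exact h i m hm

instance (N : Fin 3 →₀ ℕ) : Module.Finite ℝ (Vb N) :=
  Module.Finite.of_basis (basisRestrictSupport ℝ _)

lemma finrank_Vb (N : Fin 3 →₀ ℕ) : Module.finrank ℝ (Vb N) = (N 0 + 1) * (N 1 + 1) * (N 2 + 1) := by
  rw [Module.finrank_eq_nat_card_basis (basisRestrictSupport ℝ _)]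
  rw [Nat.card_coe_set_eq, Set.ncard_coe_finset, Finsupp.card_Iic]
  rw [Finset.prod_subset (Finset.subset_univ _) (by
    intro i _ hi
    rw [Finsupp.notMem_support_iff] at hi
    simp [hi])]
  simp [Fin.prod_univ_three]

end GK

namespace GK
open MvPolynomial

lemma eval_rank (V I : Submodule ℝ MP) [Module.Finite ℝ V] (hI : I ≤ V) (T : Finset E3)
    (hT : ∀ f ∈ I, ∀ x ∈ T, eval x f = 0)
    (hs : ∀ x ∈ T, ∃ f ∈ V, eval x f ≠ 0 ∧ ∀ y ∈ T, y ≠ x → eval y f = 0) :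
    Module.finrank ℝ I + T.card ≤ Module.finrank ℝ V := by
  classical
  let E : V →ₗ[ℝ] (T → ℝ) := LinearMap.pi (fun x => (aeval (x : E3) : MP →ₐ[ℝ] ℝ).toLinearMap ∘ₗ V.subtype)
  have hE : ∀ v x, E v x = eval (x : E3) (v : MP) := by
    intro v x; simp [E, aeval_eq_eval]
  have hsurj : Function.Surjective E := by
    rw [← LinearMap.range_eq_top, eq_top_iff]
    intro y _
    rw [← Finset.univ_sum_single y]
    refine Submodule.sum_mem _ (fun x _ => ?_)
    obtain ⟨f, hf, h1, h2⟩ := hs x x.2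
    refine ⟨(y x / eval (x : E3) f) • ⟨f, hf⟩, ?_⟩
    ext z
    rw [map_smul, Pi.smul_apply, hE]
    by_cases h : z = x
    · subst h; simp [h1]
    · rw [h2 z z.2 (fun h' => h (Subtype.ext h')), Pi.single_eq_of_ne h]; simp
  have h1 := LinearMap.finrank_range_add_finrank_ker E
  rw [LinearMap.range_eq_top.2 hsurj, finrank_top, Module.finrank_fintype_fun_eq_card, Fintype.card_coe] at h1
  have h2 : I ≤ (LinearMap.ker E).map V.subtype := by
    intro f hf
    refine ⟨⟨f, hI hf⟩, ?_, rfl⟩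
    rw [SetLike.mem_coe, LinearMap.mem_ker]
    ext x
    rw [hE]
    exact hT f hf x x.2
  have h3 := Submodule.finrank_mono h2
  have h4 := Submodule.finrank_map_subtype_eq V (LinearMap.ker E)
  omega

noncomputable def prodEq (p q : Submodule ℝ MP) : p.prod q ≃ₗ[ℝ] p × q where
  toFun x := (⟨x.1.1, x.2.1⟩, ⟨x.1.2, x.2.2⟩)
  invFun y := ⟨(y.1.1, y.2.1), ⟨y.1.2, y.2.2⟩⟩
  map_add' _ _ := rfl
  map_smul' _ _ := rfl
  left_inv _ := rfl
  right_inv _ := rfl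

lemma ideal_rank {f g : MP} (hf : Irreducible f) (hfg : ¬ f ∣ g) (N1 N2 N3 : Fin 3 →₀ ℕ)
    (h1 : ∀ i, N1 i ≤ N3 i + g.degreeOf i)
    (h2 : ∀ i, N2 i = N3 i + f.degreeOf i) :
    Module.finrank ℝ (Vb N1) + Module.finrank ℝ (Vb N2) ≤
      Module.finrank ℝ (Submodule.map ((LinearMap.mulLeft ℝ f).coprod (LinearMap.mulLeft ℝ g)) ((Vb N1).prod (Vb N2)))
      + Module.finrank ℝ (Vb N3) := by
  set Φ := (LinearMap.mulLeft ℝ f).coprod (LinearMap.mulLeft ℝ g) with hΦ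
  set W := (Vb N1).prod (Vb N2) with hW
  have hWf : Module.finrank ℝ W = Module.finrank ℝ (Vb N1) + Module.finrank ℝ (Vb N2) := by
    rw [← Module.finrank_prod]
    exact LinearEquiv.finrank_eq (prodEq (Vb N1) (Vb N2))
  have hWfin : Module.Finite ℝ W := Module.Finite.equiv (prodEq (Vb N1) (Vb N2)).symm
  have hr := LinearMap.finrank_range_add_finrank_ker (Φ.domRestrict W)
  rw [LinearMap.range_domRestrict, hWf] at hr
  let Ψ : MP →ₗ[ℝ] MP × MP := (LinearMap.mulLeft ℝ g).prod (- LinearMap.mulLeft ℝ f)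
  have hle : (LinearMap.ker (Φ.domRestrict W)).map W.subtype ≤ (Vb N3).map Ψ := by
    rintro _ ⟨⟨⟨a, b⟩, hab⟩, hk, rfl⟩
    rw [SetLike.mem_coe, LinearMap.mem_ker] at hk
    simp [hΦ] at hk
    obtain ⟨ha, hb⟩ := hab
    dsimp at ha hb
    have hdvd : f ∣ g * b := ⟨-a, by linear_combination hk⟩
    obtain ⟨c, rfl⟩ := (hf.prime.dvd_or_dvd hdvd).resolve_left hfg
    have ha' : a = -(g * c) := by
      apply mul_left_cancel₀ hf.ne_zero
      linear_combination hk
    refine ⟨-c, ?_, ?_⟩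
    · rw [SetLike.mem_coe]
      apply Submodule.neg_mem
      by_cases hc : c = 0
      · subst hc; exact Submodule.zero_mem _
      rw [SetLike.mem_coe, mem_Vb] at hb; rw [mem_Vb]
      intro i
      have := hb i
      rw [degreeOf_mul_eq hf.ne_zero hc, h2 i] at this
      omega
    · simp [Ψ, ha']
  have h3 := Submodule.finrank_mono hle
  rw [Submodule.finrank_map_subtype_eq] at h3
  have h4 := Submodule.finrank_map_le Ψ (Vb N3)
  omega

lemma line_inj {p w : E3} (hw : w ≠ 0) : Function.Injective (fun t : ℝ => p + t • w) := by
  intro s t h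
  dsimp at h
  have : (s - t) • w = 0 := by rw [sub_smul]; simpa [sub_eq_zero] using h
  rcases smul_eq_zero.1 this with h | h
  · linarith
  · exact absurd h hw

lemma line_infinite {ℓ : Set E3} (h : IsLine ℓ) : ℓ.Infinite := by
  obtain ⟨p, w, hw, rfl⟩ := h
  exact Set.infinite_range_of_injective (line_inj hw)

lemma poly_arith (x d0 d1 d2 e0 e1 e2 D E : ℤ) (hx : 0 ≤ x) (a0 : 0 ≤ d0) (a1 : 0 ≤ d1) (a2 : 0 ≤ d2)
    (b0 : 0 ≤ e0) (b1 : 0 ≤ e1) (b2 : 0 ≤ e2) (c0 : d0 ≤ D) (c1 : d1 ≤ D) (c2 : d2 ≤ D) (f0 : e0 ≤ E) (f1 : e1 ≤ E)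
    (f2 : e2 ≤ E) : x * x * x + (x - d0 - e0) * (x - d1 - e1) * (x - d2 - e2) - (x - d0) * (x - d1) * (x - d2)
      - (x - e0) * (x - e1) * (x - e2) ≤ 6 * D * E * x := by
  have hD : 0 ≤ D := a0.trans c0
  have h : ∀ d e, 0 ≤ d → 0 ≤ e → d ≤ D → e ≤ E → d * e ≤ D * E := fun d e h1 h2 h3 h4 =>
    mul_le_mul h3 h4 h2 hD
  have key : x * x * x + (x - d0 - e0) * (x - d1 - e1) * (x - d2 - e2) - (x - d0) * (x - d1) * (x - d2)
      - (x - e0) * (x - e1) * (x - e2) = x * (d0 * e1 + d0 * e2 + d1 * e0 + d1 * e2 + d2 * e0 + d2 * e1)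
      - (d0*d1*e2 + d0*e1*d2 + e0*d1*d2 + d0*e1*e2 + e0*d1*e2+e0*e1*d2) := by ring
  have pos : 0 ≤ (d0*d1*e2 + d0*e1*d2 + e0*d1*d2 + d0*e1*e2 + e0*d1*e2+e0*e1*d2) := by positivity
  have s : d0 * e1 + d0 * e2 + d1 * e0 + d1 * e2 + d2 * e0 + d2 * e1 ≤ 6 * (D * E) := by
    linarith [h d0 e1 a0 b1 c0 f1, h d0 e2 a0 b2 c0 f2, h d1 e0 a1 b0 c1 f0, h d1 e2 a1 b2 c1 f2, h d2 e0 a2 b0 c2 f0, h d2 e1 a2 b1 c2 f1]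
  have := mul_le_mul_of_nonneg_left s hx
  linarith

lemma deg_prod_one {ι : Type*} (s : Finset ι) (f : ι → MP) (h : ∀ i ∈ s, (f i).totalDegree ≤ 1) :
    (∏ i ∈ s, f i).totalDegree ≤ s.card := by
  refine (totalDegree_finsetProd s f).trans ((Finset.sum_le_sum h).trans (by simp))

theorem bezout {f g : MP} (hf : Irreducible f) (hfg : ¬ f ∣ g) (L : Finset (Set E3))
    (hL : ∀ ℓ ∈ L, IsLine ℓ ∧ van ℓ f ∧ van ℓ g) : L.card ≤ 6 * f.totalDegree * g.totalDegree := by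
  classical
  by_contra hcon
  push Not at hcon
  have hg0 : g ≠ 0 := by rintro rfl; exact hfg (dvd_zero _)
  set D := f.totalDegree with hD
  set E := g.totalDegree with hE
  set m := L.card with hm
  set n := 6 * D * E * (m + 1) + D + E + 1 with hn
  -- points
  have hpts : ∀ ℓ ∈ L, ∃ S : Finset E3, S.card = n ∧ ∀ x ∈ S, x ∈ ℓ ∧ ∀ ℓ' ∈ L, ℓ' ≠ ℓ → x ∉ ℓ' := by
    intro ℓ hℓ
    have hfin : (⋃ ℓ' ∈ L.erase ℓ, ℓ ∩ ℓ').Finite := by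
      refine Set.Finite.biUnion (Finset.finite_toSet _) (fun ℓ' hℓ' => ?_)
      apply Set.Subsingleton.finite
      intro x hx y hy
      by_contra hxy
      have hℓ'' : ℓ' ∈ L.erase ℓ := hℓ'
      rw [Finset.mem_erase] at hℓ''
      exact hℓ''.1 (line_eq (hL ℓ hℓ).1 (hL ℓ' hℓ''.2).1 hxy hx.1 hy.1 hx.2 hy.2).symm
    have hinf := (line_infinite (hL ℓ hℓ).1).sdiff hfin
    obtain ⟨S, hS, hc⟩ := hinf.exists_subset_card_eq n
    refine ⟨S, hc, fun x hx => ⟨(hS hx).1, fun ℓ' hℓ' hne hx' => (hS hx).2 ?_⟩⟩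
    simp only [Set.mem_iUnion]
    exact ⟨ℓ', Finset.mem_erase.2 ⟨hne, hℓ'⟩, (hS hx).1, hx'⟩
  choose! S hS1 hS2 using hpts
  set T := L.biUnion S with hT
  have hTc : T.card = m * n := by
    rw [hT, Finset.card_biUnion, Finset.sum_congr rfl hS1, Finset.sum_const, smul_eq_mul]
    intro ℓ hℓ ℓ' hℓ' hne
    rw [Function.onFun, Finset.disjoint_left]
    intro x hx hx'
    exact (hS2 ℓ hℓ x hx).2 ℓ' hℓ' hne.symm (hS2 ℓ' hℓ' x hx').1
  have hfd : ∀ i, f.degreeOf i ≤ D := fun i => degreeOf_le_totalDegree f i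
  have hgd : ∀ i, g.degreeOf i ≤ E := fun i => degreeOf_le_totalDegree g i
  set M := m + n with hM
  let N : Fin 3 →₀ ℕ := Finsupp.equivFunOnFinite.symm (fun _ => M)
  let N1 : Fin 3 →₀ ℕ := Finsupp.equivFunOnFinite.symm (fun i => M - f.degreeOf i)
  let N2 : Fin 3 →₀ ℕ := Finsupp.equivFunOnFinite.symm (fun i => M - g.degreeOf i)
  let N3 : Fin 3 →₀ ℕ := Finsupp.equivFunOnFinite.symm (fun i => M - f.degreeOf i - g.degreeOf i)
  have hMbig : ∀ i, f.degreeOf i + g.degreeOf i ≤ M := by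
    intro i; have := hfd i; have := hgd i; omega
  have hrank := ideal_rank hf hfg N1 N2 N3 (fun i => by
    have := hMbig i
    simp only [N1, N3, Finsupp.equivFunOnFinite_symm_apply_apply]; omega) (fun i => by
    have := hMbig i
    simp only [N2, N3, Finsupp.equivFunOnFinite_symm_apply_apply]; omega)
  have hev := eval_rank (Vb N) (Submodule.map ((LinearMap.mulLeft ℝ f).coprod (LinearMap.mulLeft ℝ g)) ((Vb N1).prod (Vb N2)))
    (by
      rintro _ ⟨⟨a, b⟩, ⟨ha, hb⟩, rfl⟩
      rw [SetLike.mem_coe, mem_Vb] at ha hb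
      simp only [LinearMap.coprod_apply, LinearMap.mulLeft_apply]
      apply Submodule.add_mem
      · rw [mem_Vb]; intro i
        have := ha i; have := hMbig i; have := degreeOf_mul_le i f a
        simp only [N1, N, Finsupp.equivFunOnFinite_symm_apply_apply] at *
        omega
      · rw [mem_Vb]; intro i
        have := hb i; have := hMbig i; have := degreeOf_mul_le i g b
        simp only [N2, N, Finsupp.equivFunOnFinite_symm_apply_apply] at *
        omega) T
    (by
      rintro _ ⟨⟨a, b⟩, -, rfl⟩ x hx
      obtain ⟨ℓ, hℓ, hxℓ⟩ := Finset.mem_biUnion.1 hx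
      have hx' := (hS2 ℓ hℓ x hxℓ).1
      simp [(hL ℓ hℓ).2.1 x hx', (hL ℓ hℓ).2.2 x hx'])
    (by
      intro x hx
      obtain ⟨ℓ, hℓ, hxℓ⟩ := Finset.mem_biUnion.1 hx
      obtain ⟨h1, h2⟩ := hS2 ℓ hℓ x hxℓ
      have hA : ∀ ℓ' ∈ L.erase ℓ, ∃ F : MP, F.totalDegree ≤ 1 ∧ van ℓ' F ∧ eval x F ≠ 0 := by
        intro ℓ' hℓ'
        rw [Finset.mem_erase] at hℓ'
        exact plane_sep (hL ℓ' hℓ'.2).1 (h2 ℓ' hℓ'.2 hℓ'.1)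
      have hB : ∀ y ∈ (S ℓ).erase x, ∃ F : MP, F.totalDegree ≤ 1 ∧ eval y F = 0 ∧ eval x F ≠ 0 := by
        intro y hy
        rw [Finset.mem_erase] at hy
        exact point_sep hy.1.symm
      choose! A hA1 hA2 hA3 using hA
      choose! B hB1 hB2 hB3 using hB
      refine ⟨(∏ ℓ' ∈ L.erase ℓ, A ℓ') * ∏ y ∈ (S ℓ).erase x, B y, ?_, ?_, ?_⟩
      · rw [mem_Vb]; intro i
        refine (degreeOf_le_totalDegree _ _).trans ((totalDegree_mul _ _).trans ?_)
        have k1 := deg_prod_one _ A hA1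
        have k2 := deg_prod_one _ B hB1
        have k3 := Finset.card_le_card (Finset.erase_subset ℓ L)
        have k4 := Finset.card_le_card (Finset.erase_subset x (S ℓ))
        rw [hS1 ℓ hℓ] at k4
        simp only [N, Finsupp.equivFunOnFinite_symm_apply_apply]
        omega
      · rw [map_mul, map_prod, map_prod]
        exact mul_ne_zero (Finset.prod_ne_zero_iff.2 hA3) (Finset.prod_ne_zero_iff.2 hB3)
      · intro y hy hyx
        obtain ⟨ℓ', hℓ', hyℓ⟩ := Finset.mem_biUnion.1 hy
        rw [map_mul, map_prod, map_prod]
        by_cases hll : ℓ' = ℓ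
        · subst hll
          rw [Finset.prod_eq_zero (Finset.mem_erase.2 ⟨hyx, hyℓ⟩) (hB2 y (Finset.mem_erase.2 ⟨hyx, hyℓ⟩)), mul_zero]
        · have := Finset.mem_erase.2 ⟨hll, hℓ'⟩
          rw [Finset.prod_eq_zero this (hA2 ℓ' this y (hS2 ℓ' hℓ' y hyℓ).1), zero_mul])
  rw [finrank_Vb] at hev
  rw [finrank_Vb, finrank_Vb, finrank_Vb] at hrank
  simp only [N, N1, N2, N3, Finsupp.equivFunOnFinite_symm_apply_apply] at hev hrank
  have c0 := hMbig 0
  have c1 := hMbig 1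
  have c2 := hMbig 2
  have p := poly_arith (M + 1) (f.degreeOf 0) (f.degreeOf 1) (f.degreeOf 2) (g.degreeOf 0) (g.degreeOf 1) (g.degreeOf 2) D E
    (by positivity) (by positivity) (by positivity) (by positivity) (by positivity) (by positivity) (by positivity)
    (by exact_mod_cast hfd 0) (by exact_mod_cast hfd 1) (by exact_mod_cast hfd 2)
    (by exact_mod_cast hgd 0) (by exact_mod_cast hgd 1) (by exact_mod_cast hgd 2)
  zify at hev hrank hTc
  rw [Nat.cast_sub (by omega), Nat.cast_sub (by omega), Nat.cast_sub (by omega), Nat.cast_sub (by omega), Nat.cast_sub (by omega), Nat.cast_sub (by omega), Nat.cast_sub (by omega), Nat.cast_sub (by omega), Nat.cast_sub (by omega), Nat.cast_sub (by omega), Nat.cast_sub (by omega), Nat.cast_sub (by omega)] at hrank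
  have hfin : (m : ℤ) * n ≤ 6 * D * E * (M + 1) := by
    rw [← hTc]
    linarith
  have hfin' : m * n ≤ 6 * D * E * (M + 1) := by exact_mod_cast hfin
  have h1 : (6 * D * E + 1) * n ≤ m * n := Nat.mul_le_mul_right _ hcon
  have h2 : 6 * D * E * (M + 1) = 6 * D * E * n + 6 * D * E * (m + 1) := by rw [hM]; ring
  have h3 : (6 * D * E + 1) * n = 6 * D * E * n + n := by ring
  have h4 : n = 6 * D * E * (m + 1) + D + E + 1 := hn
  generalize 6 * D * E * (m + 1) = w at *
  generalize 6 * D * E * n = z at *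
  generalize 6 * D * E * (M + 1) = u at *
  generalize (6 * D * E + 1) * n = v at *
  generalize m * n = y at *
  omega

end GK

namespace GK
open MvPolynomial

noncomputable def dd (u : E3) : Derivation ℝ MP MP := mkDerivation ℝ (fun i => C (u i))

lemma dd_X (u : E3) (i : Fin 3) : dd u (X i) = C (u i) := mkDerivation_X _ _ _

lemma dd_add (u v : E3) (f : MP) : dd (u + v) f = dd u f + dd v f := by
  have : dd (u + v) = dd u + dd v := by
    apply derivation_ext; intro i; simp [dd_X]
  rw [this]; rfl

lemma dd_smul (a : ℝ) (u : E3) (f : MP) : dd (a • u) f = C a * dd u f := by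
  have : dd (a • u) = a • dd u := by
    apply derivation_ext; intro i; simp [dd_X, smul_eq_C_mul]
  rw [this, Derivation.smul_apply, smul_eq_C_mul]

lemma dd_comm (u v : E3) (f : MP) : dd u (dd v f) = dd v (dd u f) := by
  have : ⁅dd u, dd v⁆ = 0 := by
    apply derivation_ext; intro i; simp [Derivation.commutator_apply, dd_X]
  have h := DFunLike.congr_fun this f
  rw [Derivation.commutator_apply, Derivation.zero_apply] at h
  exact sub_eq_zero.1 h

lemma dd_mul (u : E3) (f g : MP) : dd u (f * g) = f * dd u g + g * dd u f := by
  rw [Derivation.leibniz]; simp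

lemma dd_C_mul (u : E3) (a : ℝ) (g : MP) : dd u (C a * g) = C a * dd u g := by
  rw [dd_mul, derivation_C]; simp

lemma res_dd (p w : E3) (f : MP) : Polynomial.derivative (res p w f) = res p w (dd w f) := by
  induction f using MvPolynomial.induction_on with
  | C a => simp [res]
  | add f g hf hg => simp [hf, hg]
  | mul_X f i hf =>
    rw [dd_mul, map_mul, Polynomial.derivative_mul, hf, map_add, map_mul, map_mul, dd_X]
    have : Polynomial.derivative (res p w (X i)) = res p w (C (w i)) := by
      simp [res]
    rw [this]; ring

lemma pderiv_deg (i : Fin 3) (f : MP) : (pderiv i f).totalDegree ≤ f.totalDegree - 1 := by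
  refine Finset.sup_le (fun m hm => ?_)
  rw [mem_support_iff, coeff_pderiv] at hm
  have h := le_totalDegree (p := f) (mem_support_iff.2 (left_ne_zero_of_mul hm))
  rw [Finsupp.sum_add_index' (by simp) (by simp), Finsupp.sum_single_index rfl] at h
  omega

lemma dd_eq (u : E3) (f : MP) : dd u f = C (u 0) * pderiv 0 f + C (u 1) * pderiv 1 f + C (u 2) * pderiv 2 f := by
  have : dd u = u 0 • pderiv 0 + u 1 • pderiv 1 + u 2 • pderiv 2 := by
    apply derivation_ext; intro j
    rw [dd_X]
    fin_cases j <;> simp [smul_eq_C_mul, pderiv_X]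
  rw [this]
  simp [smul_eq_C_mul]

lemma dd_deg (u : E3) (f : MP) : (dd u f).totalDegree ≤ f.totalDegree - 1 := by
  have h : ∀ i, (C (u i) * pderiv i f).totalDegree ≤ f.totalDegree - 1 := by
    intro i
    refine (totalDegree_mul _ _).trans ?_
    rw [totalDegree_C, zero_add]
    exact pderiv_deg i f
  rw [dd_eq]
  exact (totalDegree_add _ _).trans (max_le ((totalDegree_add _ _).trans (max_le (h 0) (h 1))) (h 2))

lemma not_dvd_deg {f g : MP} (hg : g ≠ 0) (h : g.totalDegree < f.totalDegree) : ¬ f ∣ g := by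
  rintro ⟨k, rfl⟩
  rw [totalDegree_mul_of_isDomain (left_ne_zero_of_mul hg) (right_ne_zero_of_mul hg)] at h
  omega

lemma irr_deg {f : MP} (hf : Irreducible f) : 0 < f.totalDegree := by
  by_contra h
  have h0 : f.totalDegree = 0 := by omega
  rw [totalDegree_eq_zero_iff_eq_C] at h0
  have h1 : coeff 0 f ≠ 0 := by
    intro h; rw [h, C_0] at h0; exact hf.ne_zero h0
  apply hf.not_isUnit
  rw [h0]
  exact (isUnit_iff_ne_zero.2 h1).map C

lemma exists_pderiv {f : MP} (hf : Irreducible f) : ∃ i : Fin 3, pderiv i f ≠ 0 := by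
  by_contra! h
  have h0 := irr_deg hf
  have : f.totalDegree ≤ 0 := by
    refine Finset.sup_le (fun m hm => ?_)
    by_contra h1
    have h2 : m ≠ 0 := by rintro rfl; simp at h1
    obtain ⟨i, hi⟩ : ∃ i, m i ≠ 0 := by
      by_contra! h3; exact h2 (Finsupp.ext h3)
    have h4 := coeff_pderiv (i := i) f (m - Finsupp.single i 1)
    rw [h i, coeff_zero, tsub_add_cancel_of_le (by
      rw [Finsupp.single_le_iff]; omega)] at h4
    have h5 : (((m - Finsupp.single i 1 : Fin 3 →₀ ℕ) i : ℕ) : ℝ) + 1 ≠ 0 := by positivity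
    exact mem_support_iff.1 hm ((mul_eq_zero.1 h4.symm).resolve_right h5)
  omega

open Polynomial in
lemma ode (k : ℕ) (φ G : Polynomial ℝ) (A : ℕ → Polynomial ℝ)
    (h : G * derivative^[k] φ = ∑ j ∈ Finset.range k, A j * derivative^[j] φ)
    (hG : G.eval 0 ≠ 0) (h0 : ∀ j < k, (derivative^[j] φ).eval 0 = 0) : φ = 0 := by
  have key : ∀ n, Polynomial.X ^ n ∣ φ := by
    intro n
    induction n with
    | zero => simp
    | succ n ih =>
      rw [Polynomial.X_pow_dvd_iff] at ih ⊢
      intro m hm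
      rcases Nat.lt_succ_iff_lt_or_eq.1 hm with hm | rfl
      · exact ih m hm
      rw [← Polynomial.X_pow_dvd_iff] at ih
      by_cases hk : m < k
      · have h1 := h0 m hk
        rw [← Polynomial.coeff_zero_eq_eval_zero, Polynomial.coeff_iterate_derivative] at h1
        simpa [Nat.descFactorial_self, Nat.factorial_ne_zero] using h1
      · push Not at hk
        have h1 : Polynomial.X ^ (m - k + 1) ∣ G * derivative^[k] φ := by
          rw [h]
          refine Finset.dvd_sum (fun j hj => Dvd.dvd.mul_left ?_ _)
          rw [Finset.mem_range] at hj
          exact (pow_dvd_pow _ (by omega)).trans (Polynomial.pow_sub_dvd_iterate_derivative_of_pow_dvd j ih)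
        have h2 : Polynomial.X ^ (m - k + 1) ∣ derivative^[k] φ := by
          refine Polynomial.prime_X.pow_dvd_of_dvd_mul_left _ ?_ h1
          rwa [Polynomial.X_dvd_iff, Polynomial.coeff_zero_eq_eval_zero]
        have h3 := (Polynomial.X_pow_dvd_iff.1 h2) (m - k) (by omega)
        rw [Polynomial.coeff_iterate_derivative, Nat.sub_add_cancel hk] at h3
        have h4 : (m.descFactorial k) ≠ 0 := (Nat.pos_iff_ne_zero.1 (Nat.descFactorial_pos.2 hk))
        simpa [h4] using h3
  ext n
  exact (Polynomial.X_pow_dvd_iff.1 (key (n+1))) n (by omega)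

end GK

namespace GK
open MvPolynomial Filter Topology

lemma bezout_inf {f g : MP} (hf : Irreducible f) (S : Set (Set E3)) (hS : S.Infinite)
    (h : ∀ ℓ ∈ S, IsLine ℓ ∧ van ℓ f ∧ van ℓ g) : f ∣ g := by
  by_contra hfg
  obtain ⟨L, hL, hc⟩ := hS.exists_subset_card_eq (6 * f.totalDegree * g.totalDegree + 1)
  have := bezout hf hfg L (fun ℓ hℓ => h ℓ (hL hℓ))
  omega

lemma van_of_zeros {f : MP} {p w : E3} (hw : w ≠ 0) (T : Finset ℝ) (hT : f.totalDegree < T.card)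
    (h : ∀ t ∈ T, eval (p + t • w) f = 0) : ∀ t : ℝ, eval (p + t • w) f = 0 := by
  have : van (Set.range (fun t : ℝ => p + t • w)) f := by
    by_contra hv
    classical
    have h1 := line_zeros ⟨p, w, hw, rfl⟩ hv (T.image (fun t => p + t • w)) (by
      intro x hx
      obtain ⟨t, ht, rfl⟩ := Finset.mem_image.1 hx
      exact ⟨⟨t, rfl⟩, h t ht⟩)
    rw [Finset.card_image_of_injective _ (line_inj hw)] at h1
    omega
  intro t
  exact this _ ⟨t, rfl⟩

def q10 : Fin 10 → Fin 3 → ℕ := ![![0,0,0],![1,0,0],![0,1,0],![0,0,1],![2,0,0],![0,2,0],![0,0,2],![1,1,0],![1,0,1],![0,1,1]]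

lemma quadric_exists (P : Fin 3 × Fin 3 → E3) : ∃ q : MP, q ≠ 0 ∧ q.totalDegree ≤ 2 ∧ ∀ j, eval (P j) q = 0 := by
  let e : Fin 10 → (Fin 3 →₀ ℕ) := fun k => Finsupp.equivFunOnFinite.symm (q10 k)
  have he : Function.Injective e := by
    apply Finsupp.equivFunOnFinite.symm.injective.comp
    decide
  let B : (Fin 10 → ℝ) →ₗ[ℝ] MP := Fintype.linearCombination ℝ (fun k => monomial (e k) (1:ℝ))
  have hB : Function.Injective B := by
    have h1 := (basisMonomials (Fin 3) ℝ).linearIndependent.comp e he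
    rw [coe_basisMonomials] at h1
    exact linearIndependent_iff_injective_fintypeLinearCombination.1 h1
  let E : (Fin 10 → ℝ) →ₗ[ℝ] (Fin 3 × Fin 3 → ℝ) := LinearMap.pi (fun j => (aeval (P j) : MP →ₐ[ℝ] ℝ).toLinearMap ∘ₗ B)
  have hk := LinearMap.ker_ne_bot_of_finrank_lt (f := E) (by simp)
  obtain ⟨c, hc, hc0⟩ := (Submodule.ne_bot_iff _).1 hk
  refine ⟨B c, fun h => hc0 (hB (h.trans (map_zero B).symm)), ?_, ?_⟩
  · simp only [B, Fintype.linearCombination_apply]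
    refine totalDegree_finsetSum_le (fun k _ => ?_)
    refine (totalDegree_smul_le _ _).trans ((totalDegree_monomial_le _ _).trans ?_)
    rw [Finsupp.sum_fintype _ _ (by simp)]
    revert k
    simp only [e, Finsupp.equivFunOnFinite_symm_apply_apply]
    decide
  · intro j
    have := congrFun (LinearMap.mem_ker.1 hc) j
    simpa [E, aeval_eq_eval] using this

lemma eval_cont {α : Type*} [TopologicalSpace α] (f : MP) {γ : α → E3} (h : Continuous γ) :
    Continuous (fun a => eval (γ a) f) := (MvPolynomial.continuous_eval f).comp h

lemma eval_dd_line {f : MP} {p w : E3} (h : ∀ t : ℝ, eval (p + t • w) f = 0) (t : ℝ) :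
    eval (p + t • w) (dd w f) = 0 := by
  have h1 : res p w f = 0 := by
    apply Polynomial.funext; intro t; rw [res_eval, h]; simp
  rw [← res_eval, ← res_dd, h1]; simp

lemma half {f h : MP}
    (hA : ∀ p w : E3, eval p f = 0 → eval p h ≠ 0 → eval p (dd w f) = 0 → eval p (dd w (dd w f)) = 0 →
      ∀ t : ℝ, eval (p + t • w) f = 0)
    {p w1 w2 v : E3} (hp : eval p h ≠ 0) (h1 : ∀ t : ℝ, eval (p + t • w1) f = 0)
    (h2 : eval p (dd w2 f) = 0) (h22 : eval p (dd w2 (dd w2 f)) = 0) (hg : eval p (dd v f) ≠ 0)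
    (hb : eval p (dd w1 (dd w2 f)) ≠ 0) :
    ∃ σ ρ : ℝ → ℝ, Tendsto σ (𝓝 0) (𝓝 0) ∧ Tendsto ρ (𝓝 0) (𝓝 0) ∧
      ∀ᶠ s in 𝓝 (0:ℝ), ∀ t : ℝ, eval (p + s • w1 + t • (σ s • w1 + w2 + ρ s • v)) f = 0 := by
  let F : MP → ℝ → ℝ := fun q s => eval (p + s • w1) q
  have hF : ∀ q, Continuous (F q) := fun q => eval_cont q (by fun_prop)
  have hF0 : ∀ q, F q 0 = eval p q := fun q => by simp [F]
  let ρ : ℝ → ℝ := fun s => - F (dd w2 f) s / F (dd v f) s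
  let den : ℝ → ℝ := fun s => 2 * (F (dd w1 (dd w2 f)) s + ρ s * F (dd w1 (dd v f)) s)
  let num : ℝ → ℝ := fun s => -(F (dd w2 (dd w2 f)) s + 2 * ρ s * F (dd w2 (dd v f)) s + ρ s ^ 2 * F (dd v (dd v f)) s)
  let σ : ℝ → ℝ := fun s => num s / den s
  have hρ0 : ρ 0 = 0 := by simp [ρ, hF0, h2]
  have hρc : ContinuousAt ρ 0 := by
    refine ContinuousAt.div ?_ (hF _).continuousAt (by rwa [hF0])
    exact (hF _).continuousAt.neg
  have hdc : ContinuousAt den 0 := by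
    exact continuousAt_const.mul ((hF _).continuousAt.add (hρc.mul (hF _).continuousAt))
  have hd0 : den 0 ≠ 0 := by simp [den, hρ0, hF0, hb]
  have hn0 : num 0 = 0 := by simp [num, hρ0, hF0, h22]
  have hnc : ContinuousAt num 0 := by
    exact (((hF _).continuousAt.add ((continuousAt_const.mul hρc).mul (hF _).continuousAt)).add
      ((hρc.pow 2).mul (hF _).continuousAt)).neg
  have hσc : ContinuousAt σ 0 := hnc.div hdc hd0
  have hσ0 : σ 0 = 0 := by simp [σ, hn0]
  refine ⟨σ, ρ, ?_, ?_, ?_⟩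
  · have := hσc.tendsto; rwa [hσ0] at this
  · have := hρc.tendsto; rwa [hρ0] at this
  have e1 : ∀ᶠ s in 𝓝 (0:ℝ), F h s ≠ 0 := (hF h).continuousAt.eventually_ne (by rwa [hF0])
  have e2 : ∀ᶠ s in 𝓝 (0:ℝ), F (dd v f) s ≠ 0 := (hF _).continuousAt.eventually_ne (by rwa [hF0])
  have e3 : ∀ᶠ s in 𝓝 (0:ℝ), den s ≠ 0 := hdc.eventually_ne hd0
  filter_upwards [e1, e2, e3] with s s1 s2 s3
  have k1 : F (dd w1 f) s = 0 := eval_dd_line h1 s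
  have k11 : F (dd w1 (dd w1 f)) s = 0 := eval_dd_line (fun t => eval_dd_line h1 t) s
  have kρ : F (dd w2 f) s + ρ s * F (dd v f) s = 0 := by
    simp only [ρ]; field_simp; ring
  have kσ : σ s * den s = num s := by simp only [σ]; field_simp
  apply hA _ _ (h1 s) s1
  · change F _ s = 0
    rw [dd_add, dd_add, dd_smul, dd_smul]
    have : F (C (σ s) * dd w1 f + dd w2 f + C (ρ s) * dd v f) s = σ s * F (dd w1 f) s + (F (dd w2 f) s + ρ s * F (dd v f) s) := by
      simp [F]; ring
    rw [this, k1, kρ]; ring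
  · change F _ s = 0
    simp only [dd_add, dd_smul, map_add, dd_C_mul]
    rw [dd_comm w2 w1, dd_comm v w1, dd_comm v w2]
    have : ∀ a b c d e k x y, F (C x * (C x * a + b + C y * c) + (C x * b + d + C y * e) + C y * (C x * c + e + C y * k)) s
      = x^2 * F a s + (x * (2 * (F b s + y * F c s)) + (F d s + 2 * y * F e s + y^2 * F k s)) := by
      intros; simp [F]; ring
    rw [this, k11]
    have := kσ
    simp only [den, num] at this
    rw [this]; ring

lemma rolle_box {f : MP} {p w1 w2 v : E3} (hg : eval p (dd v f) ≠ 0) :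
    ∃ η > 0, ∀ a b c c' : ℝ, |a| ≤ η → |b| ≤ η → |c| ≤ η → |c'| ≤ η →
      eval (p + a • w1 + b • w2 + c • v) f = 0 → eval (p + a • w1 + b • w2 + c' • v) f = 0 → c = c' := by
  let γ : ℝ × ℝ × ℝ → E3 := fun x => p + x.1 • w1 + x.2.1 • w2 + x.2.2 • v
  have hγ : Continuous fun x => eval (γ x) (dd v f) := eval_cont _ (by fun_prop)
  have h1 : ∀ᶠ x in 𝓝 (0 : ℝ × ℝ × ℝ), eval (γ x) (dd v f) ≠ 0 :=
    hγ.continuousAt.eventually_ne (by simpa [γ] using hg)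
  obtain ⟨ε, hε, h2⟩ := Metric.eventually_nhds_iff.1 h1
  have key : ∀ a b c c' : ℝ, |a| ≤ ε/2 → |b| ≤ ε/2 → |c| ≤ ε/2 → |c'| ≤ ε/2 → c < c' →
      eval (p + a • w1 + b • w2 + c • v) f = 0 → eval (p + a • w1 + b • w2 + c' • v) f = 0 → False := by
    intro a b c c' ha hb hc hc' hlt e e'
    let φ := res (p + a • w1 + b • w2) v f
    obtain ⟨z, hz, hz'⟩ := exists_deriv_eq_zero hlt (f := fun t => φ.eval t) φ.continuous.continuousOn (by
      simp only [φ, res_eval, e, e'])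
    rw [Polynomial.deriv, res_dd, res_eval] at hz'
    refine h2 (y := (a, b, z)) ?_ hz'
    have : |z| ≤ ε/2 := abs_le.2 ⟨by linarith [(abs_le.1 hc).1, hz.1], by linarith [(abs_le.1 hc').2, hz.2]⟩
    simp only [dist_zero_right, Prod.norm_def, Real.norm_eq_abs]
    refine lt_of_le_of_lt (max_le ha (max_le hb this)) (by linarith)
  refine ⟨ε/2, by positivity, ?_⟩
  intro a b c c' ha hb hc hc' e e'
  rcases lt_trichotomy c c' with h | h | h
  · exact (key a b c c' ha hb hc hc' h e e').elim
  · exact h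
  · exact (key a b c' c ha hb hc' hc h e' e).elim

lemma quadric_deg {f h : MP} (hf : Irreducible f)
    (hA : ∀ p w : E3, eval p f = 0 → eval p h ≠ 0 → eval p (dd w f) = 0 → eval p (dd w (dd w f)) = 0 →
      ∀ t : ℝ, eval (p + t • w) f = 0)
    {p w1 w2 v : E3} (hp : eval p h ≠ 0) (h1 : ∀ t : ℝ, eval (p + t • w1) f = 0)
    (h2 : ∀ t : ℝ, eval (p + t • w2) f = 0) (hg : eval p (dd v f) ≠ 0)
    (hb : eval p (dd w1 (dd w2 f)) ≠ 0)
    (hind : ∀ a b c : ℝ, a • w1 + b • w2 + c • v = 0 → a = 0 ∧ b = 0 ∧ c = 0) : f.totalDegree ≤ 2 := by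
  have hz : ∀ {w : E3}, (∀ t : ℝ, eval (p + t • w) f = 0) → eval p (dd w f) = 0 ∧ eval p (dd w (dd w f)) = 0 := by
    intro w h
    have a := eval_dd_line h 0
    have b := eval_dd_line (eval_dd_line h) 0
    simp only [zero_smul, add_zero] at a b
    exact ⟨a, b⟩
  obtain ⟨σ, ρ, hσ, hρ, hm⟩ := half hA hp h1 (hz h2).1 (hz h2).2 hg hb
  obtain ⟨σ', ρ', hσ', hρ', hn⟩ := half hA hp h2 (hz h1).1 (hz h1).2 hg (by rwa [dd_comm])
  obtain ⟨η, hη, hbox⟩ := rolle_box (w1 := w1) (w2 := w2) hg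
  have small : ∀ {φ : ℝ → ℝ} (δ : ℝ), 0 < δ → Tendsto φ (𝓝 0) (𝓝 0) → ∀ᶠ s in 𝓝 (0:ℝ), |φ s| ≤ δ := by
    intro φ δ hδ h
    filter_upwards [h.eventually (Metric.closedBall_mem_nhds (0:ℝ) hδ)] with s hs
    simpa using hs
  have hidt : Tendsto (fun s : ℝ => s) (𝓝 0) (𝓝 0) := tendsto_id
  have ev : ∀ᶠ r in 𝓝 (0:ℝ), (∀ t : ℝ, eval (p + r • w2 + t • (σ' r • w2 + w1 + ρ' r • v)) f = 0) ∧
      |σ' r| ≤ 1/2 ∧ |ρ' r| ≤ 1 ∧ |r| ≤ η/8 := by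
    filter_upwards [hn, small (1/2) (by norm_num) hσ', small 1 (by norm_num) hρ', small (η/8) (by positivity) hidt] with r a b c d
    exact ⟨a, b, c, d⟩
  obtain ⟨ε, hε, hr⟩ := Metric.eventually_nhds_iff.1 ev
  let r : Fin 3 → ℝ := fun j => ε / (j + 2)
  have hrinj : Function.Injective r := by
    intro i j hij
    simp only [r] at hij
    have := hε.ne'
    field_simp at hij
    have h3 : ((j:ℕ):ℝ) = ((i:ℕ):ℝ) := by linarith
    exact Fin.ext (by exact_mod_cast h3.symm)
  have hr' : ∀ j, (∀ t : ℝ, eval (p + r j • w2 + t • (σ' (r j) • w2 + w1 + ρ' (r j) • v)) f = 0) ∧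
      |σ' (r j)| ≤ 1/2 ∧ |ρ' (r j)| ≤ 1 ∧ |r j| ≤ η/8 := by
    intro j
    apply hr
    have h0 : (0:ℝ) < (j:ℕ) + 2 := by positivity
    simp only [r, dist_zero_right, Real.norm_eq_abs]
    rw [abs_of_pos (by positivity), div_lt_iff₀ h0]
    nlinarith [(Nat.cast_nonneg (j:ℕ) : (0:ℝ) ≤ _)]
  have hW' : ∀ j, σ' (r j) • w2 + w1 + ρ' (r j) • v ≠ 0 := by
    intro j h
    have := (hind 1 (σ' (r j)) (ρ' (r j)) (by rw [← h]; module)).1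
    norm_num at this
  obtain ⟨q, hq0, hq2, hq⟩ := quadric_exists (fun k =>
    p + r k.1 • w2 + ((k.2 : ℕ):ℝ) • (σ' (r k.1) • w2 + w1 + ρ' (r k.1) • v))
  have hqn : ∀ j, ∀ t : ℝ, eval (p + r j • w2 + t • (σ' (r j) • w2 + w1 + ρ' (r j) • v)) q = 0 := by
    intro j
    apply van_of_zeros (hW' j) (Finset.univ.image (fun i : Fin 3 => ((i:ℕ):ℝ)))
    · rw [Finset.card_image_of_injective]
      · simp; omega
      · intro a b hab; exact Fin.ext (Nat.cast_injective hab)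
    · intro t ht
      obtain ⟨i, -, rfl⟩ := Finset.mem_image.1 ht
      exact hq (j, i)
  let τ : Fin 3 → ℝ → ℝ := fun j s => (r j + s * σ' (r j)) / (1 - σ s * σ' (r j))
  have hτ : ∀ j, Tendsto (τ j) (𝓝 0) (𝓝 (r j)) := by
    intro j
    have a : Tendsto (fun s => r j + s * σ' (r j)) (𝓝 0) (𝓝 (r j + 0 * σ' (r j))) :=
      tendsto_const_nhds.add (hidt.mul tendsto_const_nhds)
    have b : Tendsto (fun s => 1 - σ s * σ' (r j)) (𝓝 0) (𝓝 (1 - 0 * σ' (r j))) :=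
      tendsto_const_nhds.sub (hσ.mul tendsto_const_nhds)
    have := a.div b (by simp)
    simp only [zero_mul, add_zero, sub_zero, div_one] at this
    exact this
  have hne : ∀ i j, i ≠ j → ∀ᶠ s in 𝓝 (0:ℝ), τ i s ≠ τ j s := by
    intro i j hij
    filter_upwards [((hτ i).sub (hτ j)).eventually_ne (sub_ne_zero.2 (hrinj.ne hij))] with s hs
    exact sub_ne_zero.1 hs
  have ev2 : ∀ᶠ s in 𝓝 (0:ℝ), (∀ t : ℝ, eval (p + s • w1 + t • (σ s • w1 + w2 + ρ s • v)) f = 0) ∧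
      (∀ t : ℝ, eval (p + s • w1 + t • (σ s • w1 + w2 + ρ s • v)) q = 0) := by
    filter_upwards [hm, small (1/2) (by norm_num) hσ, small 1 (by norm_num) hρ, small (η/8) (by positivity) hidt,
      hne 0 1 (by decide), hne 0 2 (by decide), hne 1 2 (by decide)] with s hs a b c n01 n02 n12
    refine ⟨hs, ?_⟩
    have hW : σ s • w1 + w2 + ρ s • v ≠ 0 := by
      intro h
      have := (hind (σ s) 1 (ρ s) (by rw [← h]; module)).2.1
      norm_num at this
    apply van_of_zeros hW (Finset.univ.image (fun j => τ j s))
    · rw [Finset.card_image_of_injective]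
      · simp; omega
      · intro i j hij
        fin_cases i <;> fin_cases j <;> first | rfl | exact (n01 hij).elim | exact (n02 hij).elim | exact (n12 hij).elim | exact (n01 hij.symm).elim | exact (n02 hij.symm).elim | exact (n12 hij.symm).elim
    · intro t ht
      obtain ⟨j, -, rfl⟩ := Finset.mem_image.1 ht
      obtain ⟨k1, k2, k3, k4⟩ := hr' j
      set T := τ j s with hT
      set x := σ s
      set y := σ' (r j)
      have hxy : |x * y| ≤ 1/4 := by
        rw [abs_mul]; nlinarith [abs_nonneg x, abs_nonneg y]
      have hd : 3/4 ≤ 1 - x * y := by linarith [(abs_le.1 hxy).2]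
      have hTe : T * (1 - x * y) = r j + s * y := by
        rw [hT]; simp only [τ]; exact div_mul_cancel₀ _ (by simp only [x, y] at hd ⊢; linarith)
      have hsy : |s * y| ≤ η/16 := by
        rw [abs_mul]; nlinarith [abs_nonneg s, abs_nonneg y]
      have hTb : |T| ≤ η/4 := by
        have e1 : |T| * (1 - x*y) = |r j + s * y| := by
          rw [← hTe, abs_mul, abs_of_nonneg (by linarith : 0 ≤ 1 - x*y)]
        have e2 := abs_add_le (r j) (s * y)
        nlinarith [abs_nonneg T]
      have hTx : |T * x| ≤ η/8 := by
        rw [abs_mul]; nlinarith [abs_nonneg T, abs_nonneg x]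
      have hT' : |s + T * x| ≤ η/4 := (abs_add_le _ _).trans (by linarith)
      have key := hbox (s + T * x) T (T * ρ s) ((s + T * x) * ρ' (r j)) (by linarith) (by linarith)
        (by rw [abs_mul]; nlinarith [abs_nonneg T, abs_nonneg (ρ s)])
        (by rw [abs_mul]; nlinarith [abs_nonneg (s + T * x), abs_nonneg (ρ' (r j))])
        (by rw [← hs T]; congr 2; module)
        (by
          rw [← k1 (s + T * x)]; congr 2
          have : T = r j + (s + T * x) * y := by linarith
          nth_rewrite 2 [this]; module)
      rw [← hqn j (s + T * x)]
      congr 2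
      have : T = r j + (s + T * x) * y := by linarith
      calc p + s • w1 + T • (x • w1 + w2 + ρ s • v) = p + (s + T * x) • w1 + T • w2 + (T * ρ s) • v := by module
        _ = p + (s + T * x) • w1 + (r j + (s + T * x) * y) • w2 + ((s + T * x) * ρ' (r j)) • v := by rw [key, ← this]
        _ = _ := by module
  obtain ⟨δ, hδ, hs⟩ := Metric.eventually_nhds_iff.1 ev2
  have hinj : Set.InjOn (fun s : ℝ => Set.range (fun t : ℝ => (p + s • w1) + t • (σ s • w1 + w2 + ρ s • v))) (Set.Ioo 0 δ) := by
    intro s _ s' _ hss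
    have : p + s' • w1 ∈ Set.range (fun t : ℝ => (p + s • w1) + t • (σ s • w1 + w2 + ρ s • v)) := by
      rw [show Set.range (fun t : ℝ => (p + s • w1) + t • (σ s • w1 + w2 + ρ s • v)) = _ from hss]
      exact ⟨0, by simp⟩
    obtain ⟨t, ht⟩ := this
    have h0 : (s - s' + t * σ s) • w1 + t • w2 + (t * ρ s) • v = 0 := by
      have : (p + s • w1) + t • (σ s • w1 + w2 + ρ s • v) - (p + s' • w1) = 0 := sub_eq_zero.2 ht
      rw [← this]; module
    obtain ⟨a, b, -⟩ := hind _ _ _ h0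
    rw [b] at a; linarith
  have hdvd : f ∣ q := by
    apply bezout_inf hf _ ((Set.Ioo_infinite hδ).image hinj)
    rintro _ ⟨s, hs1, rfl⟩
    have h3 := hs (y := s) (by rw [dist_zero_right, Real.norm_eq_abs, abs_of_pos hs1.1]; exact hs1.2)
    refine ⟨⟨_, _, ?_, rfl⟩, ?_, ?_⟩
    · intro h
      have := (hind (σ s) 1 (ρ s) (by rw [← h]; module)).2.1
      norm_num at this
    · rintro _ ⟨t, rfl⟩; exact h3.1 t
    · rintro _ ⟨t, rfl⟩; exact h3.2 t
  by_contra hlt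
  exact not_dvd_deg hq0 (by omega) hdvd

end GK

namespace GK
open MvPolynomial

lemma td_add {f g : MP} {n : ℕ} (hf : f.totalDegree ≤ n) (hg : g.totalDegree ≤ n) : (f + g).totalDegree ≤ n :=
  (totalDegree_add _ _).trans (max_le hf hg)
lemma td_sub {f g : MP} {n : ℕ} (hf : f.totalDegree ≤ n) (hg : g.totalDegree ≤ n) : (f - g).totalDegree ≤ n :=
  (totalDegree_sub _ _).trans (max_le hf hg)
lemma td_mul {f g : MP} {m n : ℕ} (hf : f.totalDegree ≤ m) (hg : g.totalDegree ≤ n) : (f * g).totalDegree ≤ m + n :=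
  (totalDegree_mul _ _).trans (add_le_add hf hg)

noncomputable def al (f : MP) (v x y : E3) : MP :=
  dd v f * dd v f * dd x (dd y f) - dd v f * dd x f * dd y (dd v f) - dd v f * dd y f * dd x (dd v f)
    + dd x f * dd y f * dd v (dd v f)

noncomputable def tr (f : MP) (v x y z : E3) : MP :=
  dd v f * dd v f * dd v f * dd x (dd y (dd z f))
   - dd v f * dd v f * (dd x f * dd y (dd z (dd v f)) + dd y f * dd x (dd z (dd v f)) + dd z f * dd x (dd y (dd v f)))
   + dd v f * (dd x f * dd y f * dd z (dd v (dd v f)) + dd x f * dd z f * dd y (dd v (dd v f)) + dd y f * dd z f * dd x (dd v (dd v f)))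
   - dd x f * dd y f * dd z f * dd v (dd v (dd v f))

lemma dd_deg' (u : E3) {f : MP} {d : ℕ} (h : f.totalDegree ≤ d) : (dd u f).totalDegree ≤ d :=
  (dd_deg u f).trans (by omega)

lemma al_deg {f : MP} {d : ℕ} (h : f.totalDegree ≤ d) (v x y : E3) : (al f v x y).totalDegree ≤ d + d + d := by
  have k := fun u => dd_deg' u h
  have k2 := fun u w => dd_deg' u (k w)
  exact td_add (td_sub (td_sub (td_mul (td_mul (k _) (k _)) (k2 _ _)) (td_mul (td_mul (k _) (k _)) (k2 _ _)))
    (td_mul (td_mul (k _) (k _)) (k2 _ _))) (td_mul (td_mul (k _) (k _)) (k2 _ _))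

lemma tr_deg {f : MP} {d : ℕ} (h : f.totalDegree ≤ d) (v x y z : E3) : (tr f v x y z).totalDegree ≤ d + d + d + d := by
  have k := fun u => dd_deg' u h
  have k3 := fun u w z => dd_deg' u (dd_deg' w (k z))
  refine td_sub (td_add (td_sub (td_mul (td_mul (td_mul (k _) (k _)) (k _)) (k3 _ _ _)) ?_) ?_)
    (td_mul (td_mul (td_mul (k _) (k _)) (k _)) (k3 _ _ _))
  · exact (td_mul (td_mul (k _) (k _)) (td_add (td_add (td_mul (k _) (k3 _ _ _)) (td_mul (k _) (k3 _ _ _))) (td_mul (k _) (k3 _ _ _)))).trans (by omega)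
  · exact (td_mul (k _) (td_add (td_add (td_mul (td_mul (k _) (k _)) (k3 _ _ _)) (td_mul (td_mul (k _) (k _)) (k3 _ _ _))) (td_mul (td_mul (k _) (k _)) (k3 _ _ _)))).trans (by omega)

noncomputable def R1 (f : MP) (v x y : E3) : MP :=
  al f v x x * al f v x x * (tr f v x y y + tr f v x y y + tr f v x y y) - al f v x x * al f v y y * tr f v x x x
   - (al f v x x + al f v x x) * al f v x y * (tr f v x x y + tr f v x x y + tr f v x x y)
   + (al f v x y + al f v x y) * (al f v x y + al f v x y) * tr f v x x x

noncomputable def R0 (f : MP) (v x y : E3) : MP :=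
  al f v x x * al f v x x * tr f v y y y - al f v x x * al f v y y * (tr f v x x y + tr f v x x y + tr f v x x y)
   + (al f v x y + al f v x y) * al f v y y * tr f v x x x

lemma R1_deg {f : MP} {d : ℕ} (h : f.totalDegree ≤ d) (v x y : E3) : (R1 f v x y).totalDegree ≤ 10 * d := by
  have a := al_deg h v
  have t := tr_deg h v
  have := td_add (td_sub (td_sub (td_mul (td_mul (a x x) (a x x)) (td_add (td_add (t x y y) (t x y y)) (t x y y)))
    (td_mul (td_mul (a x x) (a y y)) (t x x x))) (td_mul (td_mul (td_add (a x x) (a x x)) (a x y)) (td_add (td_add (t x x y) (t x x y)) (t x x y))))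
    (td_mul (td_mul (td_add (a x y) (a x y)) (td_add (a x y) (a x y))) (t x x x))
  exact this.trans (by omega)

lemma R0_deg {f : MP} {d : ℕ} (h : f.totalDegree ≤ d) (v x y : E3) : (R0 f v x y).totalDegree ≤ 10 * d := by
  have a := al_deg h v
  have t := tr_deg h v
  have := td_add (td_sub (td_mul (td_mul (a x x) (a x x)) (t y y y))
    (td_mul (td_mul (a x x) (a y y)) (td_add (td_add (t x x y) (t x x y)) (t x x y)))) 
    (td_mul (td_mul (td_add (a x y) (a x y)) (a y y)) (t x x x))
  exact this.trans (by omega)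

lemma id1 (f : MP) (x y v : E3) (a b c : ℝ) :
    dd (a • x + b • y + c • v) f = C a * dd x f + C b * dd y f + C c * dd v f := by
  simp only [dd_add, dd_smul]

lemma id2 (f : MP) (x y v : E3) (a b c a' b' c' : ℝ) : ∃ U V : MP,
    dd v f ^ 2 * dd (a • x + b • y + c • v) (dd (a' • x + b' • y + c' • v) f) =
      C (a * a') * al f v x x + C (a * b' + a' * b) * al f v x y + C (b * b') * al f v y y
      + U * dd (a • x + b • y + c • v) f + V * dd (a' • x + b' • y + c' • v) f := by
  have h1 : ∀ f, dd y (dd x f) = dd x (dd y f) := dd_comm _ _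
  have h2 : ∀ f, dd v (dd x f) = dd x (dd v f) := dd_comm _ _
  have h3 : ∀ f, dd v (dd y f) = dd y (dd v f) := dd_comm _ _
  let S : E3 → MP := fun x => dd v f * dd x (dd v f) - dd x f * dd v (dd v f)
  refine ⟨C a' * S x + C b' * S y + dd (a' • x + b' • y + c' • v) f * dd v (dd v f), C a * S x + C b * S y, ?_⟩
  simp only [S, al, dd_add, dd_smul, map_add, dd_C_mul, map_mul, h1, h2, h3]
  ring

lemma id3 (f : MP) (x y v : E3) (a b c : ℝ) : ∃ U : MP,
    dd v f ^ 3 * dd (a • x + b • y + c • v) (dd (a • x + b • y + c • v) (dd (a • x + b • y + c • v) f)) =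
      C a ^ 3 * tr f v x x x + 3 * C a ^ 2 * C b * tr f v x x y + 3 * C a * C b ^ 2 * tr f v x y y + C b ^ 3 * tr f v y y y
      + U * dd (a • x + b • y + c • v) f := by
  have h1 : ∀ f, dd y (dd x f) = dd x (dd y f) := dd_comm _ _
  have h2 : ∀ f, dd v (dd x f) = dd x (dd v f) := dd_comm _ _
  have h3 : ∀ f, dd v (dd y f) = dd y (dd v f) := dd_comm _ _
  -- D3(e_i,e_j,v), D3(e_i,v,v)
  let S : E3 → E3 → MP := fun x y => dd v f * dd v f * dd x (dd y (dd v f)) - dd v f * dd x f * dd y (dd v (dd v f))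
    - dd v f * dd y f * dd x (dd v (dd v f)) + dd x f * dd y f * dd v (dd v (dd v f))
  let W : E3 → MP := fun x => dd v f * dd x (dd v (dd v f)) - dd x f * dd v (dd v (dd v f))
  refine ⟨3 * (C a ^ 2 * S x x + 2 * C a * C b * S x y + C b ^ 2 * S y y)
     + 3 * dd (a • x + b • y + c • v) f * (C a * W x + C b * W y)
     + dd (a • x + b • y + c • v) f ^ 2 * dd v (dd v (dd v f)), ?_⟩
  simp only [S, W, tr, dd_add, dd_smul, map_add, dd_C_mul, h1, h2, h3]
  ring

lemma idR (f : MP) (x y v : E3) (A B : MP) :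
   al f v x x ^ 2 * (A ^ 3 * tr f v x x x + 3 * A ^ 2 * B * tr f v x x y + 3 * A * B ^ 2 * tr f v x y y + B ^ 3 * tr f v y y y)
   = (al f v x x * tr f v x x x * A + (3 * al f v x x * tr f v x x y - 2 * al f v x y * tr f v x x x) * B) *
       (A ^ 2 * al f v x x + 2 * A * B * al f v x y + B ^ 2 * al f v y y) + (R1 f v x y * A + R0 f v x y * B) * B ^ 2 := by
  simp only [R1, R0]
  ring

end GK

namespace GK
open MvPolynomial

lemma pt1 {f : MP} {p x y v : E3} (hg : eval p (dd v f) ≠ 0) (hα : eval p (al f v x x) ≠ 0) {a b c : ℝ}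
    (hw : a • x + b • y + c • v ≠ 0) (h1 : eval p (dd (a • x + b • y + c • v) f) = 0)
    (h2 : eval p (dd (a • x + b • y + c • v) (dd (a • x + b • y + c • v) f)) = 0) : b ≠ 0 := by
  rintro rfl
  obtain ⟨U, V, h⟩ := id2 f x y v a 0 c a 0 c
  have h3 := congrArg (eval p) h
  simp only [map_mul, map_add, h1, h2, eval_C, map_zero] at h3
  have ha : a = 0 := by
    have : a * a * eval p (al f v x x) = 0 := by linarith
    simpa [hα] using this
  subst ha
  rw [id1] at h1
  simp only [map_mul, map_add, eval_C] at h1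
  have hc : c = 0 := by
    have : c * eval p (dd v f) = 0 := by linarith
    simpa [hg] using this
  subst hc
  simp at hw

lemma pt2 {f : MP} {p x y v : E3} (hg : eval p (dd v f) ≠ 0) {a b c a' b' c' : ℝ} (hb : b ≠ 0)
    (h1 : eval p (dd (a • x + b • y + c • v) f) = 0) (h1' : eval p (dd (a' • x + b' • y + c' • v) f) = 0)
    (h : a * b' = a' * b) : a' • x + b' • y + c' • v = (b' / b) • (a • x + b • y + c • v) := by
  rw [id1] at h1 h1'
  simp only [map_mul, map_add, eval_C] at h1 h1'
  have ha : a' = b' / b * a := by field_simp; linarith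
  have hb' : b' = b' / b * b := by field_simp
  have hc : c' = b' / b * c := by
    have : (c' * b - b' * c) * eval p (dd v f) = 0 := by linear_combination b * h1' - b' * h1 + h * eval p (dd x f)
    have := (mul_eq_zero.1 this).resolve_right hg
    field_simp; linarith
  rw [smul_add, smul_add, smul_smul, smul_smul, smul_smul, ← ha, ← hb', ← hc]

lemma zline {f : MP} {p w : E3} (h : ∀ t : ℝ, eval (p + t • w) f = 0) :
    eval p f = 0 ∧ eval p (dd w f) = 0 ∧ eval p (dd w (dd w f)) = 0 ∧ eval p (dd w (dd w (dd w f))) = 0 := by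
  have z := h 0
  have a := eval_dd_line h 0
  have b := eval_dd_line (eval_dd_line h) 0
  have c := eval_dd_line (eval_dd_line (eval_dd_line h)) 0
  simp only [zero_smul, add_zero] at z a b c
  exact ⟨z, a, b, c⟩

lemma res_iter (p w : E3) (f : MP) (k : ℕ) : Polynomial.derivative^[k] (res p w f) = res p w ((dd w)^[k] f) := by
  induction k with
  | zero => rfl
  | succ k ih => rw [Function.iterate_succ_apply', Function.iterate_succ_apply', ih, res_dd]

lemma ode' {f : MP} {p w : E3} (k : ℕ) (G : MP) (A : ℕ → MP) (hG : eval p G ≠ 0)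
    (h : G * (dd w)^[k] f = ∑ j ∈ Finset.range k, A j * (dd w)^[j] f)
    (h0 : ∀ j < k, eval p ((dd w)^[j] f) = 0) (t : ℝ) : eval (p + t • w) f = 0 := by
  have := ode k (res p w f) (res p w G) (fun j => res p w (A j)) (by
    simp only [res_iter, ← map_mul, h, map_sum]) (by rw [res_eval]; simpa using hG) (by
    intro j hj; rw [res_iter, res_eval]; simpa using h0 j hj)
  rw [← res_eval, this]; simp

/-- uniqueness of lines through good points -/
def uniq (f h : MP) : Prop := ∀ p w w' : E3, eval p h ≠ 0 → w ≠ 0 → w' ≠ 0 →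
  (∀ t : ℝ, eval (p + t • w) f = 0) → (∀ t : ℝ, eval (p + t • w') f = 0) → ∃ s : ℝ, w' = s • w

set_option maxHeartbeats 1000000 in
lemma nonflat {f : MP} (hf : Irreducible f) {x y v : E3}
    (hspan : ∀ w : E3, ∃ a b c : ℝ, w = a • x + b • y + c • v)
    (hg : ¬ f ∣ dd v f) (hα : ¬ f ∣ al f v x x) :
    f.totalDegree ≤ 2 ∨ ∃ h : MP, ¬ f ∣ h ∧ h.totalDegree ≤ 14 * f.totalDegree ∧ uniq f h := by
  have hgα : ¬ f ∣ dd v f * al f v x x := fun h => (hf.prime.dvd_or_dvd h).elim hg hα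
  have hdα : (dd v f * al f v x x).totalDegree ≤ 4 * f.totalDegree :=
    (td_mul (dd_deg' v le_rfl) (al_deg le_rfl v x x)).trans (by omega)
  by_cases hR : f ∣ R1 f v x y ∧ f ∣ R0 f v x y
  · obtain ⟨⟨K1, hK1⟩, ⟨K0, hK0⟩⟩ := hR
    have hA : ∀ p w : E3, eval p f = 0 → eval p (dd v f * al f v x x) ≠ 0 → eval p (dd w f) = 0 →
        eval p (dd w (dd w f)) = 0 → ∀ t : ℝ, eval (p + t • w) f = 0 := by
      intro p w h0 hp h1 h2
      obtain ⟨a, b, c, hw⟩ := hspan w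
      obtain ⟨U, V, e2⟩ := id2 f x y v a b c a b c
      obtain ⟨W, e3⟩ := id3 f x y v a b c
      have eR := idR f x y v (C a) (C b)
      rw [← hw] at e2 e3
      simp only [map_mul, map_add] at e2 hp
      set M : MP := (al f v x x * tr f v x x x * C a + (3 * al f v x x * tr f v x x y - 2 * al f v x y * tr f v x x x) * C b)
      refine ode' 3 (al f v x x ^ 2 * dd v f ^ 3)
        (fun j => if j = 0 then (K1 * C a + K0 * C b) * C b ^ 2 else if j = 1 then al f v x x ^ 2 * W - M * (U + V) else M * dd v f ^ 2) ?_ ?_ ?_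
      · simp only [map_mul, map_pow]
        exact mul_ne_zero (pow_ne_zero _ (right_ne_zero_of_mul hp)) (pow_ne_zero _ (left_ne_zero_of_mul hp))
      · simp only [Finset.sum_range_succ, Finset.sum_range_zero, Function.iterate_succ_apply', Function.iterate_zero, id]
        norm_num
        rw [hK1, hK0] at eR
        linear_combination al f v x x ^ 2 * e3 + eR - M * e2
      · intro j hj
        interval_cases j
        · exact h0
        · exact h1
        · exact h2
    by_cases hu : uniq f (dd v f * al f v x x)
    · exact Or.inr ⟨_, hgα, hdα.trans (by omega), hu⟩
    · left
      unfold uniq at hu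
      push Not at hu
      obtain ⟨p, w, w', hp, hw, hw', hl, hl', hne⟩ := hu
      have hp' := hp
      rw [map_mul] at hp'
      have hgp := left_ne_zero_of_mul hp'
      have hαp := right_ne_zero_of_mul hp'
      obtain ⟨z0, z1, z2, z3⟩ := zline hl
      obtain ⟨z0', z1', z2', z3'⟩ := zline hl'
      apply quadric_deg hf hA hp hl hl' hgp
      · intro hb0
        obtain ⟨a, b, c, rfl⟩ := hspan w
        obtain ⟨a', b', c', rfl⟩ := hspan w'
        have hb := pt1 hgp hαp hw z1 z2
        have hΔ : a * b' ≠ a' * b := fun h => hne _ (pt2 hgp hb z1 z1' h)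
        obtain ⟨U, V, e⟩ := id2 f x y v a b c a b c
        obtain ⟨U', V', e'⟩ := id2 f x y v a' b' c' a' b' c'
        obtain ⟨U'', V'', e''⟩ := id2 f x y v a b c a' b' c'
        replace e := congrArg (eval p) e
        replace e' := congrArg (eval p) e'
        replace e'' := congrArg (eval p) e''
        simp only [map_mul, map_add, eval_C, z1, z2, z1', z2', hb0, mul_zero, add_zero] at e e' e''
        have : (a * b' - a' * b) ^ 2 * eval p (al f v x x) = 0 := by
          linear_combination -(b' ^ 2 * e + b ^ 2 * e' - 2 * b * b' * e'')
        exact hαp ((mul_eq_zero.1 this).resolve_left (pow_ne_zero _ (sub_ne_zero.2 hΔ)))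
      · intro r s t hrst
        have ht : t = 0 := by
          have h1 := id1 f w w' v r s t
          rw [hrst] at h1
          have h2 : dd (0 : E3) f = 0 := by simp [dd_eq]
          rw [h2] at h1
          have h3 := congrArg (eval p) h1
          simp only [map_add, map_mul, eval_C, z1, z1', map_zero, mul_zero, zero_add] at h3
          exact (mul_eq_zero.1 h3.symm).resolve_right hgp
        subst ht
        rw [zero_smul, add_zero] at hrst
        have hs : s = 0 := by
          by_contra hs
          apply hne (-(s⁻¹ * r))
          have : s • w' = -(r • w) := eq_neg_of_add_eq_zero_right hrst
          calc w' = s⁻¹ • (s • w') := by rw [smul_smul, inv_mul_cancel₀ hs, one_smul]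
            _ = _ := by rw [this]; module
        subst hs
        rw [zero_smul, add_zero, smul_eq_zero] at hrst
        exact ⟨hrst.resolve_right hw, rfl, rfl⟩
  · right
    have key : ∀ R : MP, ¬ f ∣ R → R.totalDegree ≤ 10 * f.totalDegree →
      (∀ p, eval p R ≠ 0 → eval p (R1 f v x y) ≠ 0 ∨ eval p (R0 f v x y) ≠ 0) →
      ∃ h : MP, ¬ f ∣ h ∧ h.totalDegree ≤ 14 * f.totalDegree ∧ uniq f h := by
      intro R hR hRd hRp
      refine ⟨dd v f * al f v x x * R, fun h => (hf.prime.dvd_or_dvd h).elim hgα hR, (td_mul hdα hRd).trans (by omega), ?_⟩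
      intro p w w' hp hw hw' hl hl'
      rw [map_mul, map_mul] at hp
      have hgp := left_ne_zero_of_mul (left_ne_zero_of_mul hp)
      have hαp := right_ne_zero_of_mul (left_ne_zero_of_mul hp)
      obtain hR' := hRp p (right_ne_zero_of_mul hp)
      have main : ∀ a b c : ℝ, a • x + b • y + c • v ≠ 0 → (∀ t : ℝ, eval (p + t • (a • x + b • y + c • v)) f = 0) →
          b ≠ 0 ∧ eval p (R1 f v x y) * a + eval p (R0 f v x y) * b = 0 := by
        intro a b c hw hl
        obtain ⟨z0, z1, z2, z3⟩ := zline hl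
        have hb := pt1 hgp hαp hw z1 z2
        refine ⟨hb, ?_⟩
        obtain ⟨U, V, e2⟩ := id2 f x y v a b c a b c
        obtain ⟨W, e3⟩ := id3 f x y v a b c
        have eR := idR f x y v (C a) (C b)
        replace e2 := congrArg (eval p) e2
        replace e3 := congrArg (eval p) e3
        replace eR := congrArg (eval p) eR
        simp only [map_mul, map_add, map_sub, map_pow, eval_C, z1, z2, z3, mul_zero, add_zero] at e2 e3 eR
        have h3 : eval p (3 : MP) = 3 := map_ofNat _ 3
        have h2 : eval p (2 : MP) = 2 := map_ofNat _ 2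
        rw [h3] at e3
        rw [h3, h2] at eR
        rw [← e3] at eR
        have e2' : a ^ 2 * eval p (al f v x x) + 2 * a * b * eval p (al f v x y) + b ^ 2 * eval p (al f v y y) = 0 := by
          linear_combination -e2
        rw [e2', mul_zero, mul_zero, zero_add] at eR
        exact (mul_eq_zero.1 eR.symm).resolve_right (pow_ne_zero _ hb)
      obtain ⟨a, b, c, rfl⟩ := hspan w
      obtain ⟨a', b', c', rfl⟩ := hspan w'
      obtain ⟨hb, e⟩ := main a b c hw hl
      obtain ⟨hb', e'⟩ := main a' b' c' hw' hl'
      refine ⟨b' / b, pt2 hgp hb (zline hl).2.1 (zline hl').2.1 ?_⟩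
      have h1 : eval p (R1 f v x y) ≠ 0 := by
        intro h
        rw [h, zero_mul, zero_add] at e
        exact hR'.elim (fun k => k h) (fun k => k ((mul_eq_zero.1 e).resolve_right hb))
      have : eval p (R1 f v x y) * (a * b' - a' * b) = 0 := by linear_combination b' * e - b * e'
      have := (mul_eq_zero.1 this).resolve_left h1
      linarith
    by_cases h1 : f ∣ R1 f v x y
    · have h0 : ¬ f ∣ R0 f v x y := fun h => hR ⟨h1, h⟩
      exact key _ h0 (R0_deg le_rfl v x y) (fun p hp => Or.inr hp)
    · exact key _ h1 (R1_deg le_rfl v x y) (fun p hp => Or.inl hp)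

end GK

namespace GK
open MvPolynomial

set_option maxHeartbeats 1000000 in
lemma flat {f : MP} (hf : Irreducible f) {x y v : E3}
    (hspan : ∀ w : E3, ∃ a b c : ℝ, w = a • x + b • y + c • v)
    (hg : ¬ f ∣ dd v f) (h11 : f ∣ al f v x x) (h12 : f ∣ al f v x y) (h22 : f ∣ al f v y y) :
    f.totalDegree ≤ 2 ∨ ∃ h : MP, ¬ f ∣ h ∧ h.totalDegree ≤ 14 * f.totalDegree ∧ uniq f h := by
  by_cases hu : uniq f (dd v f)
  · exact Or.inr ⟨_, hg, (dd_deg' v le_rfl).trans (by omega), hu⟩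
  left
  unfold uniq at hu
  push Not at hu
  obtain ⟨p, w, w', hp, hw, hw', hl, hl', hne⟩ := hu
  obtain ⟨z0, z1, -⟩ := zline hl
  obtain ⟨-, z1', -⟩ := zline hl'
  obtain ⟨K11, h11⟩ := h11
  obtain ⟨K12, h12⟩ := h12
  obtain ⟨K22, h22⟩ := h22
  have hA : ∀ w : E3, eval p (dd w f) = 0 → ∀ t : ℝ, eval (p + t • w) f = 0 := by
    intro w h1
    obtain ⟨a, b, c, hw⟩ := hspan w
    obtain ⟨U, V, e2⟩ := id2 f x y v a b c a b c
    rw [← hw, h11, h12, h22] at e2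
    refine ode' 2 (dd v f ^ 2) (fun j => if j = 0 then C (a * a) * K11 + C (a * b + a * b) * K12 + C (b * b) * K22 else U + V) ?_ ?_ ?_
    · rw [map_pow]; exact pow_ne_zero _ hp
    · simp only [Finset.sum_range_succ, Finset.sum_range_zero, Function.iterate_succ_apply', Function.iterate_zero, id]
      simp only [if_true, one_ne_zero, if_false, zero_add]
      linear_combination e2
    · intro j hj
      interval_cases j
      · exact z0
      · exact h1
  have hls : ∀ s t : ℝ, eval (p + t • (w + s • w')) f = 0 := by
    intro s
    apply hA
    rw [dd_add, dd_smul, map_add, map_mul, z1, z1']; simp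
  let n : E3 := fun i => eval p (pderiv i f)
  have hn : ∀ u, eval p (dd u f) = ∑ i, n i * u i := by
    intro u
    rw [dd_eq, Fin.sum_univ_three]; simp [n]; ring
  have hw0 : ∀ s : ℝ, w + s • w' ≠ 0 := by
    intro s h
    by_cases hs : s = 0
    · subst hs; simp at h; exact hw h
    · apply hne (-s⁻¹)
      have : s • w' = - w := eq_neg_of_add_eq_zero_right h
      calc w' = s⁻¹ • (s • w') := by rw [smul_smul, inv_mul_cancel₀ hs, one_smul]
        _ = _ := by rw [this]; module
  have hinj : Function.Injective (fun s : ℝ => Set.range (fun t : ℝ => p + t • (w + s • w'))) := by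
    intro s s' hss
    have : p + (1:ℝ) • (w + s' • w') ∈ Set.range (fun t : ℝ => p + t • (w + s • w')) := by
      rw [show Set.range (fun t : ℝ => p + t • (w + s • w')) = _ from hss]
      exact ⟨1, rfl⟩
    obtain ⟨t, ht⟩ := this
    have ht' : t • (w + s • w') - (1:ℝ) • (w + s' • w') = 0 := sub_eq_zero.2 (add_left_cancel ht)
    by_contra hs
    have hne' : t * s - s' ≠ 0 ∨ t - 1 ≠ 0 := by
      by_contra! h
      obtain ⟨h1, h2⟩ := h
      have : t = 1 := by linarith
      subst this
      exact hs (by linarith)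
    have e : (t * s - s') • w' = -((t - 1) • w) := by
      apply eq_neg_of_add_eq_zero_right
      rw [← ht']; module
    by_cases h1 : t * s - s' = 0
    · rw [h1, zero_smul, eq_comm, neg_eq_zero, smul_eq_zero] at e
      rcases e with e | e
      · exact hne'.elim (fun k => k h1) (fun k => k e)
      · exact hw e
    · apply hne (-((t * s - s')⁻¹ * (t - 1)))
      calc w' = (t * s - s')⁻¹ • ((t * s - s') • w') := by rw [smul_smul, inv_mul_cancel₀ h1, one_smul]
        _ = _ := by rw [e]; module
  have hdvd : f ∣ aff n p := by
    apply bezout_inf hf _ (Set.infinite_range_of_injective hinj)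
    rintro _ ⟨s, rfl⟩
    refine ⟨⟨p, _, hw0 s, rfl⟩, ?_, ?_⟩
    · rintro _ ⟨t, rfl⟩; exact hls s t
    · rintro _ ⟨t, rfl⟩
      rw [aff_eval]
      have e1 := hn w
      have e2 := hn w'
      rw [z1] at e1
      rw [z1'] at e2
      rw [Fin.sum_univ_three] at e1 e2 ⊢
      simp only [Pi.add_apply, Pi.smul_apply, smul_eq_mul]
      linear_combination -t * e1 - t * s * e2
  by_contra hlt
  refine not_dvd_deg ?_ (lt_of_le_of_lt (aff_deg n p) (by omega)) hdvd
  intro h0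
  have h1 : eval (p + v) (aff n p) = eval p (dd v f) := by
    rw [aff_eval, hn]; simp
  rw [h0, map_zero] at h1
  exact hp h1.symm

theorem comp {f : MP} (hf : Irreducible f) :
    f.totalDegree ≤ 2 ∨ ∃ h : MP, ¬ f ∣ h ∧ h.totalDegree ≤ 14 * f.totalDegree ∧ uniq f h := by
  obtain ⟨x, y, v, hspan, hv⟩ : ∃ x y v : E3, (∀ w : E3, ∃ a b c : ℝ, w = a • x + b • y + c • v) ∧ dd v f ≠ 0 := by
    obtain ⟨i, hi⟩ := exists_pderiv hf
    fin_cases i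
    · refine ⟨![0,1,0], ![0,0,1], ![1,0,0], fun w => ⟨w 1, w 2, w 0, ?_⟩, ?_⟩
      · ext j; fin_cases j <;> simp
      · simpa [dd_eq] using hi
    · refine ⟨![1,0,0], ![0,0,1], ![0,1,0], fun w => ⟨w 0, w 2, w 1, ?_⟩, ?_⟩
      · ext j; fin_cases j <;> simp
      · simpa [dd_eq] using hi
    · refine ⟨![1,0,0], ![0,1,0], ![0,0,1], fun w => ⟨w 0, w 1, w 2, ?_⟩, ?_⟩
      · ext j; fin_cases j <;> simp
      · simpa [dd_eq] using hi
  have hg : ¬ f ∣ dd v f := not_dvd_deg hv (lt_of_le_of_lt (dd_deg v f) (by have := irr_deg hf; omega))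
  by_cases h11 : f ∣ al f v x x
  · by_cases h22 : f ∣ al f v y y
    · by_cases h12 : f ∣ al f v x y
      · exact flat hf hspan hg h11 h12 h22
      · refine nonflat (x := x + y) (y := y) hf ?_ hg ?_
        · intro w
          obtain ⟨a, b, c, rfl⟩ := hspan w
          exact ⟨a, b - a, c, by module⟩
        · have e : al f v (x + y) (x + y) = al f v x x + al f v y y + 2 * al f v x y := by
            have h1 : ∀ f, dd y (dd x f) = dd x (dd y f) := dd_comm _ _
            simp only [al, dd_add, map_add, h1]
            ring
          intro h
          rw [e] at h
          have h2 : f ∣ 2 * al f v x y := (dvd_add_right (dvd_add h11 h22)).1 h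
          apply h12
          have h3 : al f v x y = C (1/2 : ℝ) * (2 * al f v x y) := by
            have : (2 : MP) = C 2 := (map_ofNat C 2).symm
            rw [this, ← mul_assoc, ← map_mul]; norm_num
          rw [h3]
          exact h2.mul_left _
    · refine nonflat (x := y) (y := x) hf ?_ hg h22
      intro w
      obtain ⟨a, b, c, rfl⟩ := hspan w
      exact ⟨b, a, c, by module⟩
  · exact nonflat hf hspan hg h11

lemma uniq_lines {f h : MP} (hu : uniq f h) {ℓ ℓ' : Set E3} (hℓ : IsLine ℓ) (hℓ' : IsLine ℓ') {p : E3}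
    (hp : p ∈ ℓ) (hp' : p ∈ ℓ') (hh : eval p h ≠ 0) (h1 : van ℓ f) (h2 : van ℓ' f) : ℓ = ℓ' := by
  have hℓ0 := hℓ
  have hℓ0' := hℓ'
  obtain ⟨w, hw, rfl⟩ := hℓ.through hp
  obtain ⟨w', hw', rfl⟩ := hℓ'.through hp'
  obtain ⟨s, hs⟩ := hu p w w' hh hw hw' (fun t => h1 _ ⟨t, rfl⟩) (fun t => h2 _ ⟨t, rfl⟩)
  refine line_eq hℓ0 hℓ0' (p := p) (q := p + w') (by simpa using hw') hp ⟨s, ?_⟩ hp' ⟨1, by simp⟩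
  rw [hs]

end GK

namespace GK
open MvPolynomial

lemma factors_exists (f : MP) : f ≠ 0 → ∃ F : Finset MP, (∀ g ∈ F, Irreducible g ∧ g ∣ f) ∧
    (∀ g ∈ F, ∀ g' ∈ F, g ∣ g' → g = g') ∧ (∀ ℓ, IsLine ℓ → van ℓ f → ∃ g ∈ F, van ℓ g) ∧
    ∑ g ∈ F, g.totalDegree ≤ f.totalDegree := by
  classical
  induction f using WfDvdMonoid.induction_on_irreducible with
  | zero => exact fun h => (h rfl).elim
  | unit u hu =>
    intro _
    refine ⟨∅, by simp, by simp, ?_, by simp⟩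
    intro ℓ hℓ hv
    obtain ⟨p, w, hw, rfl⟩ := hℓ
    rw [van_range] at hv
    exact ((hu.map (res p w)).ne_zero hv).elim
  | mul a i ha hi ih =>
    intro _
    obtain ⟨F, h1, h2, h3, h4⟩ := ih ha
    have hdeg := totalDegree_mul_of_isDomain hi.ne_zero ha
    by_cases h : ∃ g ∈ F, i ∣ g
    · obtain ⟨g0, hg0, hi0⟩ := h
      refine ⟨F, fun g hg => ⟨(h1 g hg).1, (h1 g hg).2.mul_left i⟩, h2, ?_, by omega⟩
      intro ℓ hℓ hv
      rcases van_mul hℓ hv with hv | hv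
      · exact ⟨g0, hg0, van_dvd hi0 hv⟩
      · exact h3 ℓ hℓ hv
    · push Not at h
      have hiF : i ∉ F := fun hh => h i hh dvd_rfl
      refine ⟨insert i F, ?_, ?_, ?_, ?_⟩
      · intro g hg
        rcases Finset.mem_insert.1 hg with rfl | hg
        · exact ⟨hi, dvd_mul_right _ _⟩
        · exact ⟨(h1 g hg).1, (h1 g hg).2.mul_left i⟩
      · intro g hg g' hg' hd
        rcases Finset.mem_insert.1 hg with rfl | k <;> rcases Finset.mem_insert.1 hg' with rfl | k'
        · rfl
        · exact (h g' k' hd).elim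
        · exact (h g k (((h1 g k).1.associated_of_dvd hi hd).symm.dvd)).elim
        · exact h2 g k g' k' hd
      · intro ℓ hℓ hv
        rcases van_mul hℓ hv with hv | hv
        · exact ⟨i, Finset.mem_insert_self _ _, hv⟩
        · obtain ⟨g, hg, hg'⟩ := h3 ℓ hℓ hv
          exact ⟨g, Finset.mem_insert_of_mem hg, hg'⟩
      · rw [Finset.sum_insert hiF]; omega

open Classical in
lemma surf {f : MP} (hf : f ≠ 0) {D : ℕ} (hD : f.totalDegree ≤ D) (L : Finset (Set E3)) (hL : ∀ ℓ ∈ L, IsLine ℓ) :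
    ∃ B ⊆ L, B.card ≤ 90 * D ^ 2 ∧ (∀ ℓ ∈ B, van ℓ f) ∧ ∀ ℓ ∈ L, ℓ ∉ B → ∃ e q : MP, ¬ van ℓ e ∧
      e.totalDegree ≤ 15 * D ∧ q ≠ 0 ∧ q.totalDegree ≤ 2 ∧ ∀ p ∈ ℓ, eval p f = 0 → eval p e ≠ 0 →
        van ℓ f ∧ ∀ ℓ' ∈ L, ℓ' ≠ ℓ → p ∈ ℓ' → van ℓ' f → van ℓ' q := by
  obtain ⟨F, h1, h2, h3, h4⟩ := factors_exists f hf
  have hcomp : ∀ g : MP, ∃ h : MP, Irreducible g → ¬ g ∣ h ∧ h.totalDegree ≤ 14 * g.totalDegree ∧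
      (g.totalDegree ≤ 2 ∨ uniq g h) := by
    intro g
    by_cases hg : Irreducible g
    · rcases comp hg with h | ⟨h, ha, hb, hc⟩
      · exact ⟨1, fun _ => ⟨hg.not_dvd_one, by simp, Or.inl h⟩⟩
      · exact ⟨h, fun _ => ⟨ha, hb, Or.inr hc⟩⟩
    · exact ⟨0, fun h => (hg h).elim⟩
  choose h hh using hcomp
  let H : MP → MP := fun g => h g * ∏ g' ∈ F.erase g, g'
  have hH1 : ∀ g ∈ F, ¬ g ∣ H g := by
    intro g hg hd
    have hirr := (h1 g hg).1
    rcases hirr.prime.dvd_or_dvd hd with hd | hd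
    · exact (hh g hirr).1 hd
    · obtain ⟨g', hg', hd'⟩ := (Prime.dvd_finsetProd_iff hirr.prime _).1 hd
      rw [Finset.mem_erase] at hg'
      exact hg'.1 (h2 g hg g' hg'.2 hd').symm
  have hdg : ∀ g ∈ F, g.totalDegree ≤ D := fun g hg =>
    (Finset.single_le_sum (f := fun g : MP => g.totalDegree) (fun _ _ => Nat.zero_le _) hg).trans (h4.trans hD)
  have hH2 : ∀ g ∈ F, (H g).totalDegree ≤ 15 * D := by
    intro g hg
    have a := (hh g (h1 g hg).1).2.1
    have b : (∏ g' ∈ F.erase g, g').totalDegree ≤ D := by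
      refine (totalDegree_finsetProd _ _).trans ?_
      exact (Finset.sum_le_sum_of_subset (Finset.erase_subset _ _)).trans (h4.trans hD)
    have c := td_mul a b
    have := hdg g hg
    exact c.trans (by omega)
  refine ⟨L.filter (fun ℓ => ∃ g ∈ F, van ℓ g ∧ van ℓ (H g)), Finset.filter_subset _ _, ?_, ?_, ?_⟩
  · have hsub : L.filter (fun ℓ => ∃ g ∈ F, van ℓ g ∧ van ℓ (H g)) ⊆
        F.biUnion (fun g => L.filter (fun ℓ => van ℓ g ∧ van ℓ (H g))) := by
      intro ℓ hℓ
      rw [Finset.mem_filter] at hℓ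
      obtain ⟨hℓ, g, hg, hv⟩ := hℓ
      rw [Finset.mem_biUnion]
      exact ⟨g, hg, Finset.mem_filter.2 ⟨hℓ, hv⟩⟩
    calc _ ≤ _ := Finset.card_le_card hsub
      _ ≤ _ := Finset.card_biUnion_le
      _ ≤ ∑ g ∈ F, g.totalDegree * (90 * D) := by
        refine Finset.sum_le_sum (fun g hg => ?_)
        have := bezout (h1 g hg).1 (hH1 g hg) (L.filter (fun ℓ => van ℓ g ∧ van ℓ (H g))) (by
          intro ℓ hℓ
          rw [Finset.mem_filter] at hℓ
          exact ⟨hL ℓ hℓ.1, hℓ.2⟩)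
        refine this.trans ?_
        calc 6 * g.totalDegree * (H g).totalDegree ≤ 6 * g.totalDegree * (15 * D) := Nat.mul_le_mul_left _ (hH2 g hg)
          _ = _ := by ring
      _ = (∑ g ∈ F, g.totalDegree) * (90 * D) := by rw [Finset.sum_mul]
      _ ≤ D * (90 * D) := Nat.mul_le_mul_right _ (h4.trans hD)
      _ = _ := by ring
  · intro ℓ hℓ
    rw [Finset.mem_filter] at hℓ
    obtain ⟨hℓ, g, hg, hv⟩ := hℓ
    exact van_dvd (h1 g hg).2 hv.1
  · intro ℓ hℓ hB
    by_cases hv : van ℓ f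
    · obtain ⟨g, hg, hgv⟩ := h3 ℓ (hL ℓ hℓ) hv
      have hnH : ¬ van ℓ (H g) := fun hh => hB (Finset.mem_filter.2 ⟨hℓ, g, hg, hgv, hh⟩)
      have key : ∀ p ∈ ℓ, eval p (H g) ≠ 0 → ∀ ℓ' ∈ L, p ∈ ℓ' → van ℓ' f → van ℓ' g ∧ eval p (h g) ≠ 0 := by
        intro p hp hHp ℓ' hℓ' hp' hv'
        obtain ⟨g', hg', hgv'⟩ := h3 ℓ' (hL ℓ' hℓ') hv'
        simp only [H, map_mul, map_prod] at hHp
        refine ⟨?_, left_ne_zero_of_mul hHp⟩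
        by_cases hgg : g' = g
        · rwa [hgg] at hgv'
        · exact (Finset.prod_ne_zero_iff.1 (right_ne_zero_of_mul hHp) g' (Finset.mem_erase.2 ⟨hgg, hg'⟩) (hgv' p hp')).elim
      rcases (hh g (h1 g hg).1).2.2 with hd | hu
      · refine ⟨H g, g, hnH, hH2 g hg, (h1 g hg).1.ne_zero, hd, ?_⟩
        intro p hp _ hHp
        exact ⟨hv, fun ℓ' hℓ' _ hp' hv' => (key p hp hHp ℓ' hℓ' hp' hv').1⟩
      · refine ⟨H g, 1, hnH, hH2 g hg, one_ne_zero, by simp, ?_⟩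
        intro p hp _ hHp
        refine ⟨hv, fun ℓ' hℓ' hne hp' hv' => ?_⟩
        obtain ⟨ha, hb⟩ := key p hp hHp ℓ' hℓ' hp' hv'
        exact (hne (uniq_lines hu (hL ℓ' hℓ') (hL ℓ hℓ) hp' hp hb ha hgv)).elim
    · exact ⟨f, 1, hv, by omega, one_ne_zero, by simp, fun p _ h h' => (h' h).elim⟩

end GK

namespace GK
open MvPolynomial

lemma case_arith (k b x g : ℕ) (hk : 2 ≤ k) (h : k ≤ b + x + g) (h1 : ¬ k ≤ 4 * x) (h2 : ¬ max 2 ((k + 1) / 2) ≤ b) :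
    k ^ 2 ≤ 8 * (g * (g + b - 1)) := by
  have h2' : b < 2 ∨ b < (k+1)/2 := by
    by_contra! h; exact h2 (max_le h.1 h.2)
  have a : k ≤ 4 * g := by omega
  have c : k ≤ 2 * (g + b - 1) := by omega
  calc k ^ 2 = k * k := by ring
    _ ≤ (4 * g) * (2 * (g + b - 1)) := Nat.mul_le_mul a c
    _ = _ := by ring

open Classical in
lemma surf_count {f : MP} (hf : f ≠ 0) {D : ℕ} (hD : f.totalDegree ≤ D) (L : Finset (Set E3)) (hL : ∀ ℓ ∈ L, IsLine ℓ)
    (Q : ℕ) (hQ : ∀ q : MP, q ≠ 0 → q.totalDegree ≤ 2 → (L.filter (fun ℓ => van ℓ q)).card ≤ Q)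
    (k : ℕ) (hk : 2 ≤ k) (S : Finset E3) (hSf : ∀ p ∈ S, eval p f = 0)
    (hS : ∀ p ∈ S, k ≤ (L.filter (fun ℓ => p ∈ ℓ)).card) :
    ∃ B ⊆ L, B.card ≤ 90 * D ^ 2 ∧ ∃ S2 ⊆ S, (∀ p ∈ S2, max 2 ((k + 1) / 2) ≤ (B.filter (fun ℓ => p ∈ ℓ)).card) ∧
      S.card * k ^ 2 ≤ 60 * D * L.card * k + S2.card * k ^ 2 + 8 * L.card * Q := by
  obtain ⟨B, hBL, hBc, hBv, hmain⟩ := surf hf hD L hL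
  have hmain' : ∀ ℓ, ∃ e q : MP, ℓ ∈ L → ℓ ∉ B → ¬ van ℓ e ∧
      e.totalDegree ≤ 15 * D ∧ q ≠ 0 ∧ q.totalDegree ≤ 2 ∧ ∀ p ∈ ℓ, eval p f = 0 → eval p e ≠ 0 →
        van ℓ f ∧ ∀ ℓ' ∈ L, ℓ' ≠ ℓ → p ∈ ℓ' → van ℓ' f → van ℓ' q := by
    intro ℓ
    by_cases h : ℓ ∈ L ∧ ℓ ∉ B
    · obtain ⟨e, q, h⟩ := hmain ℓ h.1 h.2
      exact ⟨e, q, fun _ _ => h⟩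
    · exact ⟨0, 0, fun a b => (h ⟨a, b⟩).elim⟩
  choose e q heq using hmain'
  let Bp : E3 → Finset (Set E3) := fun p => B.filter (fun ℓ => p ∈ ℓ)
  let Xp : E3 → Finset (Set E3) := fun p => L.filter (fun ℓ => ℓ ∉ B ∧ p ∈ ℓ ∧ eval p (e ℓ) = 0)
  let Gp : E3 → Finset (Set E3) := fun p => L.filter (fun ℓ => ℓ ∉ B ∧ p ∈ ℓ ∧ eval p (e ℓ) ≠ 0)
  have hsum : ∀ p ∈ S, k ≤ (Bp p).card + (Xp p).card + (Gp p).card := by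
    intro p hp
    have : L.filter (fun ℓ => p ∈ ℓ) ⊆ Bp p ∪ Xp p ∪ Gp p := by
      intro ℓ hℓ
      rw [Finset.mem_filter] at hℓ
      simp only [Bp, Xp, Gp, Finset.mem_union, Finset.mem_filter]
      tauto
    refine (hS p hp).trans ((Finset.card_le_card this).trans ((Finset.card_union_le _ _).trans ?_))
    exact Nat.add_le_add_right (Finset.card_union_le _ _) _
  let S1 := S.filter (fun p => k ≤ 4 * (Xp p).card)
  let S2 := S.filter (fun p => max 2 ((k + 1) / 2) ≤ (Bp p).card)
  let S3 := S.filter (fun p => k ^ 2 ≤ 8 * ((Gp p).card * ((Gp p).card + (Bp p).card - 1)))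
  have hcov : S ⊆ S1 ∪ S2 ∪ S3 := by
    intro p hp
    simp only [S1, S2, S3, Finset.mem_union, Finset.mem_filter]
    by_cases h1 : k ≤ 4 * (Xp p).card
    · exact Or.inl (Or.inl ⟨hp, h1⟩)
    by_cases h2 : max 2 ((k + 1) / 2) ≤ (Bp p).card
    · exact Or.inl (Or.inr ⟨hp, h2⟩)
    exact Or.inr ⟨hp, case_arith k _ _ _ hk (hsum p hp) h1 h2⟩
  refine ⟨B, hBL, hBc, S2, Finset.filter_subset _ _, fun p hp => (Finset.mem_filter.1 hp).2, ?_⟩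
  have c1 : S1.card * k ≤ 60 * D * L.card := by
    calc S1.card * k = ∑ p ∈ S1, k := by simp
      _ ≤ ∑ p ∈ S1, 4 * (Xp p).card := Finset.sum_le_sum (fun p hp => (Finset.mem_filter.1 hp).2)
      _ ≤ ∑ p ∈ S, 4 * (Xp p).card := Finset.sum_le_sum_of_subset (Finset.filter_subset _ _)
      _ = 4 * ∑ p ∈ S, (Xp p).card := by rw [Finset.mul_sum]
      _ = 4 * ∑ ℓ ∈ L, (S.filter (fun p => ℓ ∉ B ∧ p ∈ ℓ ∧ eval p (e ℓ) = 0)).card := by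
        congr 1
        exact Finset.sum_card_bipartiteAbove_eq_sum_card_bipartiteBelow (fun p ℓ => ℓ ∉ B ∧ p ∈ ℓ ∧ eval p (e ℓ) = 0)
      _ ≤ 4 * ∑ ℓ ∈ L, 15 * D := by
        refine Nat.mul_le_mul_left _ (Finset.sum_le_sum (fun ℓ hℓ => ?_))
        by_cases hB : ℓ ∈ B
        · simp [hB]
        · obtain ⟨h1, h2, -⟩ := heq ℓ hℓ hB
          refine (line_zeros (hL ℓ hℓ) h1 _ ?_).trans h2
          intro x hx
          exact (Finset.mem_filter.1 hx).2.2
      _ = _ := by simp; ring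
  have c3 : S3.card * k ^ 2 ≤ 8 * L.card * Q := by
    let Y : E3 → Set E3 → Finset (Set E3) := fun p ℓ => L.filter (fun ℓ' => ℓ' ≠ ℓ ∧ p ∈ ℓ' ∧ van ℓ' f)
    calc S3.card * k ^ 2 = ∑ p ∈ S3, k ^ 2 := by simp
      _ ≤ ∑ p ∈ S3, 8 * ((Gp p).card * ((Gp p).card + (Bp p).card - 1)) := Finset.sum_le_sum (fun p hp => (Finset.mem_filter.1 hp).2)
      _ ≤ ∑ p ∈ S, 8 * ((Gp p).card * ((Gp p).card + (Bp p).card - 1)) := Finset.sum_le_sum_of_subset (Finset.filter_subset _ _)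
      _ = 8 * ∑ p ∈ S, ((Gp p).card * ((Gp p).card + (Bp p).card - 1)) := by rw [Finset.mul_sum]
      _ ≤ 8 * ∑ p ∈ S, ∑ ℓ ∈ Gp p, (Y p ℓ).card := by
        refine Nat.mul_le_mul_left _ (Finset.sum_le_sum (fun p hp => ?_))
        rw [← smul_eq_mul, ← Finset.sum_const]
        refine Finset.sum_le_sum (fun ℓ hℓ => ?_)
        have hdis : Disjoint (Gp p) (Bp p) := by
          rw [Finset.disjoint_left]
          intro a ha hb
          exact (Finset.mem_filter.1 ha).2.1 (Finset.mem_filter.1 hb).1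
        rw [← Finset.card_union_of_disjoint hdis, ← Finset.card_erase_of_mem (Finset.mem_union_left _ hℓ)]
        apply Finset.card_le_card
        intro ℓ' hℓ'
        rw [Finset.mem_erase, Finset.mem_union] at hℓ'
        obtain ⟨hne, h | h⟩ := hℓ'
        · obtain ⟨ha, hb, hc, hd⟩ := Finset.mem_filter.1 h
          exact Finset.mem_filter.2 ⟨ha, hne, hc, ((heq ℓ' ha hb).2.2.2.2 p hc (hSf p hp) hd).1⟩
        · obtain ⟨ha, hb⟩ := Finset.mem_filter.1 h
          exact Finset.mem_filter.2 ⟨hBL ha, hne, hb, hBv _ ha⟩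
      _ = 8 * ∑ ℓ ∈ L, ∑ p ∈ S.filter (fun p => ℓ ∉ B ∧ p ∈ ℓ ∧ eval p (e ℓ) ≠ 0), (Y p ℓ).card := by
        congr 1
        apply Finset.sum_comm'
        intro p ℓ
        simp only [Gp, Finset.mem_filter]
        tauto
      _ ≤ 8 * ∑ ℓ ∈ L, Q := by
        refine Nat.mul_le_mul_left _ (Finset.sum_le_sum (fun ℓ hℓ => ?_))
        by_cases hB : ℓ ∈ B
        · simp [hB]
        · obtain ⟨-, -, h0, h2, h⟩ := heq ℓ hℓ hB
          refine le_trans ?_ (hQ _ h0 h2)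
          rw [← Finset.card_biUnion]
          · apply Finset.card_le_card
            intro ℓ' hℓ'
            obtain ⟨p, hp, hY⟩ := Finset.mem_biUnion.1 hℓ'
            obtain ⟨a, b, c, d⟩ := Finset.mem_filter.1 hp
            obtain ⟨a', b', c', d'⟩ := Finset.mem_filter.1 hY
            exact Finset.mem_filter.2 ⟨a', (h p c (hSf p a) d).2 ℓ' a' b' c' d'⟩
          · intro p hp p' hp' hne
            rw [Function.onFun, Finset.disjoint_left]
            intro ℓ' h1 h2
            obtain ⟨-, -, c, -⟩ := Finset.mem_filter.1 hp
            obtain ⟨-, -, c', -⟩ := Finset.mem_filter.1 hp'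
            obtain ⟨a1, b1, d1, -⟩ := Finset.mem_filter.1 h1
            obtain ⟨-, -, d2, -⟩ := Finset.mem_filter.1 h2
            exact b1 (line_eq (hL ℓ' a1) (hL ℓ hℓ) hne d1 d2 c c')
      _ = _ := by simp; ring
  have hc : S.card ≤ S1.card + S2.card + S3.card :=
    (Finset.card_le_card hcov).trans ((Finset.card_union_le _ _).trans (Nat.add_le_add_right (Finset.card_union_le _ _) _))
  calc S.card * k ^ 2 ≤ (S1.card + S2.card + S3.card) * k ^ 2 := Nat.mul_le_mul_right _ hc
    _ = (S1.card * k) * k + S2.card * k ^ 2 + S3.card * k ^ 2 := by ring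
    _ ≤ _ := by
      have := Nat.mul_le_mul_right k c1
      omega

end GK

namespace GK
open MvPolynomial

open Classical in
lemma triv_count (L : Finset (Set E3)) (hL : ∀ ℓ ∈ L, IsLine ℓ) (k : ℕ) (hk : 2 ≤ k) (S : Finset E3)
    (hS : ∀ p ∈ S, k ≤ (L.filter (fun ℓ => p ∈ ℓ)).card) : S.card * k ^ 2 ≤ 2 * L.card ^ 2 := by
  have h1 : S.card * (k * (k-1)) ≤ (S.biUnion (fun p => (L.filter (fun ℓ => p ∈ ℓ)).offDiag)).card := by
    rw [Finset.card_biUnion]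
    · rw [← smul_eq_mul, ← Finset.sum_const]
      refine Finset.sum_le_sum fun p hp => ?_
      rw [Finset.offDiag_card]
      have := hS p hp
      set x := (L.filter (fun ℓ => p ∈ ℓ)).card
      have e : x * x - x = x * (x - 1) := by rw [Nat.mul_sub, mul_one]
      rw [e]; exact Nat.mul_le_mul this (by omega)
    · intro p hp q hq hpq
      rw [Function.onFun, Finset.disjoint_left]
      rintro ⟨a, b⟩ h1 h2
      simp only [Finset.mem_offDiag, Finset.mem_filter] at h1 h2
      exact h1.2.2 (line_eq (hL a h1.1.1) (hL b h1.2.1.1) hpq h1.1.2 h2.1.2 h1.2.1.2 h2.2.1.2)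
  have h2 : (S.biUnion (fun p => (L.filter (fun ℓ => p ∈ ℓ)).offDiag)).card ≤ (L ×ˢ L).card := by
    apply Finset.card_le_card
    intro x hx
    simp only [Finset.mem_biUnion, Finset.mem_offDiag, Finset.mem_filter] at hx
    obtain ⟨p, _, h⟩ := hx
    exact Finset.mem_product.2 ⟨h.1.1, h.2.1.1⟩
  rw [Finset.card_product] at h2
  have h3 : k ^ 2 ≤ 2 * (k * (k-1)) := by
    obtain ⟨j, rfl⟩ := Nat.exists_eq_add_of_le hk
    have : 2 + j - 1 = j + 1 := by omega
    rw [this]; nlinarith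
  calc S.card * k ^ 2 ≤ S.card * (2 * (k * (k-1))) := Nat.mul_le_mul_left _ h3
    _ ≤ 2 * L.card ^ 2 := by nlinarith

open Classical in
lemma few_count (L : Finset (Set E3)) (hL : ∀ ℓ ∈ L, IsLine ℓ) (k : ℕ) (S : Finset E3)
    (hS : ∀ p ∈ S, k ≤ (L.filter (fun ℓ => p ∈ ℓ)).card) (hc : 2 * S.card ≤ k) :
    S.card * k ≤ 2 * (L.filter (fun ℓ => ∃ p ∈ S, p ∈ ℓ)).card := by
  let X : E3 → Finset (Set E3) := fun p => L.filter (fun ℓ => p ∈ ℓ ∧ ∀ q ∈ S, q ≠ p → q ∉ ℓ)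
  have h0 : ∀ p ∈ S, k ≤ 2 * (X p).card := by
    intro p hp
    have e : L.filter (fun ℓ => p ∈ ℓ) ⊆ X p ∪ L.filter (fun ℓ => p ∈ ℓ ∧ ∃ q ∈ S, q ≠ p ∧ q ∈ ℓ) := by
      intro ℓ h
      simp only [X, Finset.mem_union, Finset.mem_filter] at h ⊢
      by_cases hh : ∃ q ∈ S, q ≠ p ∧ q ∈ ℓ
      · exact Or.inr ⟨h.1, h.2, hh⟩
      · push Not at hh; exact Or.inl ⟨h.1, h.2, hh⟩
    have e2 : (L.filter (fun ℓ => p ∈ ℓ ∧ ∃ q ∈ S, q ≠ p ∧ q ∈ ℓ)).card ≤ S.card := by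
      refine Finset.card_le_card_of_forall_subsingleton (fun ℓ q => q ≠ p ∧ q ∈ ℓ) ?_ ?_
      · intro ℓ h
        simp only [Finset.mem_filter] at h
        exact h.2.2
      · intro q hq a ha b hb
        simp only [Set.mem_ofPred_eq, Finset.mem_filter] at ha hb
        exact line_eq (hL a ha.1.1) (hL b hb.1.1) ha.2.1 ha.2.2 ha.1.2.1 hb.2.2 hb.1.2.1
    have := (hS p hp).trans ((Finset.card_le_card e).trans (Finset.card_union_le _ _))
    omega
  have h1 : (S.biUnion X).card ≤ (L.filter (fun ℓ => ∃ p ∈ S, p ∈ ℓ)).card := by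
    apply Finset.card_le_card
    intro ℓ h
    simp only [X, Finset.mem_biUnion, Finset.mem_filter] at h ⊢
    obtain ⟨p, hp, h⟩ := h
    exact ⟨h.1, p, hp, h.2.1⟩
  rw [Finset.card_biUnion] at h1
  · calc S.card * k = ∑ p ∈ S, k := by simp
      _ ≤ ∑ p ∈ S, 2 * (X p).card := Finset.sum_le_sum h0
      _ ≤ _ := by rw [← Finset.mul_sum]; omega
  · intro p hp q hq hpq
    rw [Function.onFun, Finset.disjoint_left]
    intro ℓ h1 h2
    simp only [X, Finset.mem_filter] at h1 h2
    exact h1.2.2 q hq hpq.symm h2.2.1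

open Classical in
lemma part_count (L : Finset (Set E3)) (hL : ∀ ℓ ∈ L, IsLine ℓ) (S : Finset E3) (I : ℕ) :
    ∃ f : MP, f ≠ 0 ∧ f.totalDegree ≤ 18 * 2 ^ I ∧ ∃ (C : Finset (Finset ℕ)) (cl : Finset ℕ → Finset E3),
      (∀ c, cl c ⊆ S) ∧ (∀ c, 8 ^ I * (cl c).card ≤ S.card) ∧
      S.card ≤ (S.filter (fun p => eval p f = 0)).card + ∑ c ∈ C, (cl c).card ∧
      ∑ c ∈ C, (L.filter (fun ℓ => ∃ p ∈ cl c, p ∈ ℓ)).card ≤ L.card * (19 * 2 ^ I) := by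
  obtain ⟨f, f0, f1, f2⟩ := part_exists S (3 * I)
  have hd := deg_prod f f1 I
  have ev : ∀ p, eval p (∏ i ∈ Finset.range (3*I), f i) ≠ 0 ↔ ∀ i < 3*I, eval p (f i) ≠ 0 := by
    intro p
    rw [map_prod, Finset.prod_ne_zero_iff]
    simp
  refine ⟨∏ i ∈ Finset.range (3*I), f i, Finset.prod_ne_zero_iff.2 fun i _ => f0 i, hd,
    (Finset.range (3*I)).powerset, cell f (3*I) S, fun c => Finset.filter_subset _ _, fun c => ?_, ?_, ?_⟩
  · have := f2 c
    rwa [pow_mul] at this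
  · rw [← Finset.card_filter_add_card_filter_not (s := S) (fun p => eval p (∏ i ∈ Finset.range (3*I), f i) = 0)]
    refine Nat.add_le_add_left ?_ _
    refine le_trans (Finset.card_le_card ?_) (Finset.card_biUnion_le)
    intro p hp
    simp only [Finset.mem_filter, Finset.mem_biUnion, cell] at hp ⊢
    exact ⟨ky f (3*I) p, Finset.mem_powerset.2 (Finset.filter_subset _ _), hp.1, (ev p).1 hp.2, rfl⟩
  · simp_rw [Finset.card_filter]
    rw [Finset.sum_comm]
    refine (Finset.sum_le_card_nsmul L _ (19 * 2 ^ I) fun ℓ hℓ => ?_).trans (le_of_eq (smul_eq_mul _ _))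
    rw [← Finset.card_filter]
    let T := S.filter (fun p => p ∈ ℓ ∧ ∀ i < 3*I, eval p (f i) ≠ 0)
    refine (Finset.card_le_card (t := T.image (ky f (3*I))) ?_).trans ?_
    · intro c hc
      simp only [Finset.mem_filter, cell, Finset.mem_image, T] at hc ⊢
      obtain ⟨_, p, hp, hpl⟩ := hc
      exact ⟨p, ⟨hp.1, hpl, hp.2.1⟩, hp.2.2⟩
    by_cases hT : T.Nonempty
    · obtain ⟨p, hp⟩ := hT
      simp only [T, Finset.mem_filter] at hp
      have := line_cells (hL ℓ hℓ) f (3*I) (fun hv => (ev p).2 hp.2.2 (hv p hp.2.1)) T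
        (fun x hx => (Finset.mem_filter.1 hx).2)
      have h3 : 1 ≤ 2 ^ I := Nat.one_le_two_pow
      omega
    · rw [Finset.not_nonempty_iff_eq_empty.1 hT]; simp
end GK

namespace GK
open MvPolynomial

lemma arith1 (m N k s u : ℝ) (hN : 0 ≤ N) (hk : 0 ≤ k) (hu : 0 < u) (h1 : 720 * u ≤ m) (h2 : m ≤ 1440 * u)
    (h3 : m ≤ N)
    (H : 3 * u * (s * k^2) ≤ 4 * u * (1080 * u * m^2 * k + 116640 * 10^8 * N * u^2 + 24 * m^2 * N) + 11552 * m^4) :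
    s * k^2 ≤ 2 * m^3 * k + 36 * 10^6 * N * m^2 := by
  have hm : 0 ≤ m := by linarith
  have e1 : 720 * (u * (m^2 * k)) ≤ m^3 * k := by
    have := mul_le_mul_of_nonneg_right h1 (by positivity : 0 ≤ m^2 * k)
    linarith
  have e2 : 518400 * u^2 ≤ m^2 := by nlinarith
  have e2' : N * (518400 * u^2) ≤ N * m^2 := mul_le_mul_of_nonneg_left e2 hN
  have e3 : m^4 ≤ 1440 * (u * (N * m^2)) := by
    have a := mul_le_mul h2 h3 hm (by positivity)
    have := mul_le_mul_of_nonneg_right a (by positivity : 0 ≤ m^2)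
    linarith
  have e4 : u * (3 * (s * k^2)) ≤ u * (4 * (1080 * u * m^2 * k + 116640 * 10^8 * N * u^2 + 24 * m^2 * N) + 11552 * 1440 * (N * m^2)) := by
    linarith
  have e5 := le_of_mul_le_mul_left e4 hu
  have : 0 ≤ N * m^2 := by positivity
  linarith

lemma arith2 (m N k s u : ℝ) (hN : 0 ≤ N) (hk : 10^7 ≤ k) (hs : 0 < s) (hu : 0 < u) (hm : 0 ≤ m) (h3 : m ≤ N)
    (hu2 : u^3 * k ≤ 16 * s)
    (h4 : 466560 * u^2 ≤ m^2)
    (H : s * k^2 ≤ 1118 * u * m^2 * k + 116640 * 10^8 * N * u^2 + 24 * m^2 * N) :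
    s * k^2 ≤ 10^8 * N * m^2 := by
  by_contra! hc
  have hk0 : 0 < k := by linarith
  have e2' : N * (466560 * u^2) ≤ N * m^2 := mul_le_mul_of_nonneg_left h4 hN
  have e0 : 0 ≤ N * m^2 := by positivity
  have e1 : (s * k) * k ≤ (1600 * u * m^2) * k := by
    have : 0 ≤ u * m^2 * k := by positivity
    nlinarith
  have e2 := le_of_mul_le_mul_right e1 hk0
  have e3 : (s * k)^3 ≤ (1600 * u * m^2)^3 := pow_le_pow_left₀ (by positivity) e2 3
  have e4 : (s*k) * (s * k^2)^2 ≤ (s*k) * (1600^3 * 16 * m^6) := by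
    have := mul_le_mul_of_nonneg_right hu2 (by positivity : 0 ≤ 1600^3 * m^6 * k)
    have e5 := mul_le_mul_of_nonneg_right e3 (by positivity : 0 ≤ k^2)
    nlinarith
  have e5 := le_of_mul_le_mul_left e4 (by positivity)
  have e6 : (s * k^2)^2 ≤ (300000 * m^3)^2 := by
    have : 0 ≤ m^6 := by positivity
    nlinarith
  have e7 : s * k^2 ≤ 300000 * m^3 := (sq_le_sq₀ (by positivity) (by positivity)).1 e6
  have e8 : m^3 ≤ N * m^2 := by nlinarith [mul_le_mul_of_nonneg_right h3 (sq_nonneg m)]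
  linarith

open Classical in
/-- incidence property for fewer lines -/
def IncAt (N : ℕ) (L : Finset (Set E3)) : Prop :=
  ∀ (k : ℕ), 2 ≤ k → k ≤ N → ∀ S : Finset E3, (∀ p ∈ S, k ≤ (L.filter (fun ℓ => p ∈ ℓ)).card) →
    S.card * k ^ 2 ≤ 10^8 * N * L.card

open Classical in
lemma surf_step (N : ℕ) (L : Finset (Set E3)) (hL : ∀ ℓ ∈ L, IsLine ℓ)
    (hQ : ∀ q : MP, q ≠ 0 → q.totalDegree ≤ 2 → (L.filter (fun ℓ => van ℓ q)).card ≤ 3 * N)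
    (ih : ∀ B ⊆ L, B.card < L.card → IncAt N B) {f : MP} (hf : f ≠ 0) {D : ℕ} (hD : f.totalDegree ≤ D)
    (hDM : 90 * D ^ 2 < L.card) (k : ℕ) (hk : 2 ≤ k) (hkN : k ≤ N) (S : Finset E3)
    (hSf : ∀ p ∈ S, eval p f = 0)
    (hS : ∀ p ∈ S, k ≤ (L.filter (fun ℓ => p ∈ ℓ)).card) :
    S.card * k ^ 2 ≤ 60 * D * L.card * k + 4 * (10^8 * N * (90 * D^2)) + 24 * L.card * N := by
  obtain ⟨B, hB, hBc, S2, hS2, hr, hh⟩ := surf_count hf hD L hL (3*N) hQ k hk S hSf hS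
  have h1 := ih B hB (by omega) (max 2 ((k+1)/2)) (le_max_left _ _) (by omega) S2 hr
  set k' := max 2 ((k+1)/2) with hk'
  have h2 : k ≤ 2 * k' := by omega
  have h3 : S2.card * k ^ 2 ≤ 4 * (10^8 * N * (90 * D^2)) := by
    calc S2.card * k ^ 2 ≤ S2.card * (2 * k')^2 := Nat.mul_le_mul_left _ (Nat.pow_le_pow_left h2 2)
      _ = 4 * (S2.card * k'^2) := by ring
      _ ≤ 4 * (10^8 * N * B.card) := Nat.mul_le_mul_left _ h1
      _ ≤ _ := Nat.mul_le_mul_left _ (Nat.mul_le_mul_left _ hBc)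
  have : 8 * L.card * (3 * N) = 24 * L.card * N := by ring
  omega

open Classical in
lemma off1 (L : Finset (Set E3)) (hL : ∀ ℓ ∈ L, IsLine ℓ) (k : ℕ) (hk : 2 ≤ k) (S : Finset E3)
    (hS : ∀ p ∈ S, k ≤ (L.filter (fun ℓ => p ∈ ℓ)).card) (I : ℕ) (C : Finset (Finset ℕ)) (cl : Finset ℕ → Finset E3)
    (h1 : ∀ c, cl c ⊆ S) (h2 : ∀ c, 8 ^ I * (cl c).card ≤ S.card)
    (h4 : ∑ c ∈ C, (L.filter (fun ℓ => ∃ p ∈ cl c, p ∈ ℓ)).card ≤ L.card * (19 * 2 ^ I)) (hM : 0 < L.card) :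
    4 * 2^I * ((∑ c ∈ C, (cl c).card) * k^2) ≤ 2^I * (S.card * k^2) + 11552 * L.card ^ 2 := by
  set n : Finset ℕ → ℕ := fun c => (L.filter (fun ℓ => ∃ p ∈ cl c, p ∈ ℓ)).card with hn
  have ht : ∀ c, (cl c).card * k^2 ≤ 2 * (n c)^2 := by
    intro c
    refine triv_count _ (fun ℓ h => hL ℓ (Finset.mem_filter.1 h).1) k hk _ (fun p hp => ?_)
    refine (hS p (h1 c hp)).trans (Finset.card_le_card fun ℓ h => ?_)
    simp only [Finset.mem_filter] at h ⊢
    exact ⟨⟨h.1, p, hp, h.2⟩, h.2⟩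
  set X := L.card * (19 * 2 ^ I) with hX
  have hX0 : 0 < X := by positivity
  have key : ∀ c, 4 * X * (k^2 * 8^I) * (cl c).card ≤ n c * (S.card * k^2 * 8^I + 32 * X^2) := by
    intro c
    by_cases hc : n c * 8^I ≤ 4 * X
    · calc 4 * X * (k^2 * 8^I) * (cl c).card = 4 * X * 8^I * ((cl c).card * k^2) := by ring
        _ ≤ 4 * X * 8^I * (2 * (n c)^2) := Nat.mul_le_mul_left _ (ht c)
        _ = 8 * X * n c * (n c * 8^I) := by ring
        _ ≤ 8 * X * n c * (4 * X) := Nat.mul_le_mul_left _ hc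
        _ = n c * (32 * X^2) := by ring
        _ ≤ _ := Nat.mul_le_mul_left _ (Nat.le_add_left _ _)
    · push Not at hc
      calc 4 * X * (k^2 * 8^I) * (cl c).card ≤ (n c * 8^I) * (k^2 * 8^I) * (cl c).card := by gcongr
        _ = n c * (8^I * (cl c).card * k^2 * 8^I) := by ring
        _ ≤ n c * (S.card * k^2 * 8^I) := by gcongr; exact h2 c
        _ ≤ _ := Nat.mul_le_mul_left _ (Nat.le_add_right _ _)
  have hs : 4 * X * (k^2 * 8^I) * (∑ c ∈ C, (cl c).card) ≤ X * (S.card * k^2 * 8^I + 32 * X^2) := by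
    rw [Finset.mul_sum]
    refine (Finset.sum_le_sum fun c _ => key c).trans ?_
    rw [← Finset.sum_mul]
    exact Nat.mul_le_mul_right _ h4
  have e8 : (8:ℕ)^I = 2^I * (2^I)^2 := by
    rw [show (8:ℕ) = 2^3 by norm_num, ← pow_mul, ← pow_mul, ← pow_add]; congr 1; ring
  have hu : 0 < (2:ℕ)^I := by positivity
  rw [e8] at hs
  set u := (2:ℕ)^I
  set Z := ∑ c ∈ C, (cl c).card
  have : (X * u^2) * (4 * u * (Z * k^2)) ≤ (X * u^2) * (u * (S.card * k^2) + 11552 * L.card ^ 2) := by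
    calc _ = 4 * X * (k ^ 2 * (u * u ^ 2)) * Z := by ring
      _ ≤ _ := hs
      _ = _ := by rw [hX]; ring
  exact Nat.le_of_mul_le_mul_left this (by positivity)

open Classical in
lemma off2 (L : Finset (Set E3)) (hL : ∀ ℓ ∈ L, IsLine ℓ) (k : ℕ) (hk : 2 ≤ k) (S : Finset E3)
    (hS : ∀ p ∈ S, k ≤ (L.filter (fun ℓ => p ∈ ℓ)).card) (I : ℕ) (C : Finset (Finset ℕ)) (cl : Finset ℕ → Finset E3)
    (h1 : ∀ c, cl c ⊆ S) (h2 : ∀ c, 8 ^ I * (cl c).card ≤ S.card)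
    (h4 : ∑ c ∈ C, (L.filter (fun ℓ => ∃ p ∈ cl c, p ∈ ℓ)).card ≤ L.card * (19 * 2 ^ I)) (h5 : 2 * S.card ≤ 8^I * k) :
    (∑ c ∈ C, (cl c).card) * k ≤ 38 * 2^I * L.card := by
  rw [Finset.sum_mul]
  calc ∑ c ∈ C, (cl c).card * k ≤ ∑ c ∈ C, 2 * (L.filter (fun ℓ => ∃ p ∈ cl c, p ∈ ℓ)).card := by
        refine Finset.sum_le_sum fun c _ => few_count L hL k _ (fun p hp => hS p (h1 c hp)) ?_
        have := h2 c
        refine le_of_mul_le_mul_left (a := 8^I) ?_ (by positivity)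
        calc 8^I * (2 * (cl c).card) = 2 * (8^I * (cl c).card) := by ring
          _ ≤ _ := by omega
    _ ≤ 2 * (L.card * (19 * 2 ^ I)) := by rw [← Finset.mul_sum]; omega
    _ = _ := by ring

end GK

namespace GK
open MvPolynomial

open Classical in
theorem inc (N : ℕ) (M : ℕ) : ∀ (L : Finset (Set E3)), L.card = M → (∀ ℓ ∈ L, IsLine ℓ) → L.card ≤ N^2 →
    (∀ q : MP, q ≠ 0 → q.totalDegree ≤ 2 → (L.filter (fun ℓ => van ℓ q)).card ≤ 3 * N) → IncAt N L := by
  induction M using Nat.strong_induction_on with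
  | _ M IH =>
  intro L hM hL hMN hQ
  have ih : ∀ B ⊆ L, B.card < L.card → IncAt N B := fun B hB hc =>
    IH B.card (hM ▸ hc) B rfl (fun ℓ h => hL ℓ (hB h)) (hc.le.trans hMN) (fun q h0 h2 =>
      (Finset.card_le_card (Finset.filter_subset_filter _ hB)).trans (hQ q h0 h2))
  clear IH
  intro k hk hkN S hS
  subst hM
  set m : ℝ := Real.sqrt L.card with hm
  have hm2 : m^2 = L.card := Real.sq_sqrt (by positivity)
  have hm0 : 0 ≤ m := Real.sqrt_nonneg _
  have hmN : m ≤ N := by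
    rw [hm, Real.sqrt_le_left (by positivity)]; exact_mod_cast hMN
  have hNr : (0:ℝ) ≤ N := by positivity
  suffices (S.card : ℝ) * (k:ℝ)^2 ≤ 10^8 * N * m^2 by
    rw [hm2] at this; exact_mod_cast this
  by_cases hsm : m < 720
  · have h := triv_count L hL k hk S hS
    have h' : (S.card : ℝ) * (k:ℝ)^2 ≤ 2 * (L.card:ℝ)^2 := by exact_mod_cast h
    rw [← hm2] at h'
    have e1 : m * m ≤ 720 * N := mul_le_mul hsm.le hmN hm0 (by norm_num)
    have e2 := mul_le_mul_of_nonneg_right e1 (sq_nonneg m)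
    have : 0 ≤ N * m^2 := by positivity
    nlinarith
  push Not at hsm
  have hMpos : 0 < L.card := by
    have : (0:ℝ) < L.card := by rw [← hm2]; positivity
    exact_mod_cast this
  have surfr : ∀ I : ℕ, 466560 * ((2:ℝ)^I)^2 ≤ m^2 → ∀ f : MP, f ≠ 0 → f.totalDegree ≤ 18 * 2^I →
      ((S.filter (fun p => eval p f = 0)).card : ℝ) * (k:ℝ)^2 ≤
        1080 * 2^I * m^2 * k + 116640 * 10^8 * N * (2^I)^2 + 24 * m^2 * N := by
    intro I hI f hf hd
    have hlt : 90 * (18 * 2^I)^2 < L.card := by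
      have h0 : (0:ℝ) < 2^I := by positivity
      have : (90:ℝ) * (18 * 2^I)^2 < L.card := by rw [← hm2]; nlinarith
      exact_mod_cast this
    have := surf_step N L hL hQ ih hf hd hlt k hk hkN (S.filter (fun p => eval p f = 0))
      (fun p hp => (Finset.mem_filter.1 hp).2) (fun p hp => hS p (Finset.mem_filter.1 hp).1)
    have h' : ((S.filter (fun p => eval p f = 0)).card : ℝ) * (k:ℝ)^2 ≤ 60 * (18 * 2^I) * L.card * k + 4 * (10^8 * N * (90 * (18 * 2^I)^2)) + 24 * L.card * N := by
      exact_mod_cast this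
    rw [← hm2] at h'
    linarith
  -- pass 1
  have p1 : (S.card : ℝ) * (k:ℝ)^2 ≤ 2 * m^3 * k + 36 * 10^6 * N * m^2 := by
    obtain ⟨I, hI1, hI2⟩ := exists_nat_pow_near (x := m / 720) (y := 2) (by rw [le_div_iff₀ (by norm_num)]; linarith) (by norm_num)
    rw [le_div_iff₀ (by norm_num)] at hI1
    rw [div_lt_iff₀ (by norm_num), pow_succ] at hI2
    have hu : (0:ℝ) < 2^I := by positivity
    obtain ⟨f, hf, hd, C, cl, c1, c2, c3, c4⟩ := part_count L hL S I
    have o := off1 L hL k hk S hS I C cl c1 c2 c4 hMpos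
    have s := surfr I (by nlinarith) f hf hd
    have o' : 4 * (2:ℝ)^I * (((∑ c ∈ C, (cl c).card : ℕ):ℝ) * (k:ℝ)^2) ≤ 2^I * (S.card * k^2) + 11552 * L.card ^ 2 := by
      exact_mod_cast o
    have c3' : (S.card : ℝ) ≤ (S.filter (fun p => eval p f = 0)).card + ((∑ c ∈ C, (cl c).card : ℕ):ℝ) := by
      exact_mod_cast c3
    rw [← hm2] at o'
    set Z := ((∑ c ∈ C, (cl c).card : ℕ):ℝ)
    set s0 := ((S.filter (fun p => eval p f = 0)).card : ℝ)
    have c5 := mul_le_mul_of_nonneg_right c3' (by positivity : (0:ℝ) ≤ 4 * 2^I * k^2)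
    have s' := mul_le_mul_of_nonneg_right s (by positivity : (0:ℝ) ≤ 4 * 2^I)
    refine arith1 m N k S.card (2^I) hNr (by positivity) hu (by linarith) (by linarith) hmN ?_
    linarith
  have hNm : 0 ≤ N * m^2 := by positivity
  have hmNm : m^3 ≤ N * m^2 := by nlinarith [mul_le_mul_of_nonneg_right hmN (sq_nonneg m)]
  by_cases hk7 : (k:ℝ) < 10^7
  · have : m^3 * k ≤ (N * m^2) * 10^7 := mul_le_mul hmNm hk7.le (by positivity) hNm
    linarith
  push Not at hk7
  have hk0 : (0:ℝ) < k := by linarith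
  by_contra! hc
  have q1 : (S.card : ℝ) * k ≤ 4 * m^3 := by
    refine le_of_mul_le_mul_right (a := (k:ℝ)) ?_ hk0
    nlinarith
  have hs0 : (0:ℝ) < S.card := by
    by_contra! h
    have : (S.card : ℝ) * (k:ℝ)^2 ≤ 0 := mul_nonpos_of_nonpos_of_nonneg h (by positivity)
    linarith
  -- pass 2
  have hex : ∃ I, 2 * S.card ≤ 8^I * k := by
    refine ⟨2 * S.card, ?_⟩
    have : 2 * S.card < 8 ^ (2 * S.card) := Nat.lt_pow_self (by norm_num)
    nlinarith
  have hI := Nat.find_spec hex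
  have hmin := fun j => Nat.find_min (m := j) hex
  set I := Nat.find hex
  obtain ⟨f, hf, hd, C, cl, c1, c2, c3, c4⟩ := part_count L hL S I
  have o := off2 L hL k hk S hS I C cl c1 c2 c4 hI
  have o' : ((∑ c ∈ C, (cl c).card : ℕ):ℝ) * (k:ℝ) ≤ 38 * 2^I * L.card := by exact_mod_cast o
  have c3' : (S.card : ℝ) ≤ (S.filter (fun p => eval p f = 0)).card + ((∑ c ∈ C, (cl c).card : ℕ):ℝ) := by
    exact_mod_cast c3
  rw [← hm2] at o'
  have fin2 : 466560 * ((2:ℝ)^I)^2 ≤ m^2 → (S.card : ℝ) * k^2 ≤ 1118 * 2^I * m^2 * k + 116640 * 10^8 * N * (2^I)^2 + 24 * m^2 * N := by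
    intro h
    have s := surfr I h f hf hd
    set Z := ((∑ c ∈ C, (cl c).card : ℕ):ℝ)
    set s0 := ((S.filter (fun p => eval p f = 0)).card : ℝ)
    have c5 := mul_le_mul_of_nonneg_right c3' (by positivity : (0:ℝ) ≤ k^2)
    have c6 := mul_le_mul_of_nonneg_right o' hk0.le
    linarith
  rcases Nat.eq_zero_or_pos I with h0 | hpos
  · rw [h0] at fin2
    have := fin2 (by norm_num; nlinarith)
    have hkN' : (k:ℝ) ≤ N := by exact_mod_cast hkN
    have a1 := mul_le_mul_of_nonneg_left hkN' (sq_nonneg m)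
    have a2 : 466560 ≤ m^2 := by nlinarith
    have a3 := mul_le_mul_of_nonneg_left a2 hNr
    norm_num at this
    linarith
  · have hj := hmin (I-1) (by omega)
    push Not at hj
    have hu2 : ((2:ℝ)^I)^3 * k ≤ 16 * S.card := by
      have e : ((2:ℕ)^I)^3 = 8 * 8^(I-1) := by
        rw [← pow_succ', Nat.sub_add_cancel hpos, ← pow_mul, mul_comm, pow_mul]; norm_num
      have : ((2:ℕ)^I)^3 * k ≤ 16 * S.card := by rw [e, mul_assoc]; omega
      exact_mod_cast this
    have hu : (0:ℝ) < 2^I := by positivity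
    have h4 : 684 * (2:ℝ)^I ≤ m := by
      by_contra! hcc
      have b1 : m^3 ≤ (684 * (2:ℝ)^I)^3 := pow_le_pow_left₀ hm0 hcc.le 3
      have b2 := mul_le_mul_of_nonneg_right hu2 hk0.le
      have b3 : ((2:ℝ)^I)^3 * 10^14 ≤ ((2:ℝ)^I)^3 * (k*k) := mul_le_mul_of_nonneg_left (by nlinarith) (by positivity)
      have b4 : 0 < ((2:ℝ)^I)^3 := by positivity
      linarith
    have h4' : 466560 * ((2:ℝ)^I)^2 ≤ m^2 := by nlinarith
    exact absurd (arith2 m N k S.card (2^I) hNr hk7 hs0 hu hm0 hmN hu2 h4' (fin2 h4')) (not_le.2 hc)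
end GK

namespace GK
open MvPolynomial

def Lab (a b : ℂ) : Set E3 := {v | (v 0 : ℂ) * a + v 1 = b * ((v 2 : ℂ) * a + 1)}

noncomputable def pab (a b : ℂ) : E3 := ![b.im / a.im, b.re - a.re * b.im / a.im, 0]
noncomputable def wab (a b : ℂ) : E3 := ![b.re + b.im * a.re / a.im, - b.im * (a.re^2 + a.im^2) / a.im, 1]

lemma mem_Lab {a b : ℂ} {v : E3} : v ∈ Lab a b ↔
    v 0 * a.im = b.im * (v 2 * a.re + 1) + b.re * (v 2 * a.im) ∧
    v 0 * a.re + v 1 = b.re * (v 2 * a.re + 1) - b.im * (v 2 * a.im) := by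
  have : v ∈ Lab a b ↔ (v 0 : ℂ) * a + v 1 = b * ((v 2 : ℂ) * a + 1) := Iff.rfl
  rw [this, Complex.ext_iff]
  simp only [Complex.add_re, Complex.mul_re, Complex.ofReal_re, Complex.ofReal_im, Complex.add_im, Complex.mul_im,
    Complex.one_re, Complex.one_im, zero_mul, sub_zero, add_zero]
  constructor
  · rintro ⟨h1, h2⟩; exact ⟨by linarith, by linarith⟩
  · rintro ⟨h1, h2⟩; exact ⟨by linarith, by linarith⟩

lemma Lab_eq {a b : ℂ} (ha : 0 < a.im) : Lab a b = Set.range (fun t : ℝ => pab a b + t • wab a b) := by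
  have ha' := ha.ne'
  ext v
  rw [mem_Lab]
  constructor
  · rintro ⟨h1, h2⟩
    refine ⟨v 2, ?_⟩
    have e0 : v 0 = (b.im * (v 2 * a.re + 1) + b.re * (v 2 * a.im)) / a.im := by rw [eq_div_iff ha']; exact h1
    have e1 : v 1 = b.re * (v 2 * a.re + 1) - b.im * (v 2 * a.im) - v 0 * a.re := by linarith
    funext i
    fin_cases i
    · simp [pab, wab]; rw [e0]; field_simp; ring
    · simp [pab, wab]; rw [e1, e0]; field_simp; ring
    · simp [pab, wab]
  · rintro ⟨t, rfl⟩
    simp [pab, wab]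
    constructor
    · field_simp; ring
    · field_simp; ring

lemma wab_ne (a b : ℂ) : wab a b ≠ 0 := fun h => by
  have := congrFun h 2
  simp [wab] at this

lemma Lab_line {a b : ℂ} (ha : 0 < a.im) : IsLine (Lab a b) := ⟨_, _, wab_ne a b, Lab_eq ha⟩

lemma pt_ne {a : ℂ} (ha : 0 < a.im) (z : ℝ) : (z : ℂ) * a + 1 ≠ 0 := by
  intro h
  rw [Complex.ext_iff] at h
  simp at h
  rcases h.2 with h2 | h2
  · rw [h2] at h; simp at h
  · exact ha.ne' h2

lemma Lab_b {a b b' : ℂ} (ha : 0 < a.im) {v : E3} (h : v ∈ Lab a b) (h' : v ∈ Lab a b') : b = b' := by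
  have h1 : (v 0 : ℂ) * a + v 1 = b * ((v 2 : ℂ) * a + 1) := h
  have h2 : (v 0 : ℂ) * a + v 1 = b' * ((v 2 : ℂ) * a + 1) := h'
  exact mul_right_cancel₀ (pt_ne ha (v 2)) (h1.symm.trans h2)

lemma Lab_inj {a b c d : ℂ} (ha : 0 < a.im) (hc : 0 < c.im) (hb : 0 < b.im)
    (h : Lab a b = Lab c d) : a = c ∧ b = d := by
  have m0 : pab a b + (0:ℝ) • wab a b ∈ Lab a b := by rw [Lab_eq ha]; exact ⟨0, rfl⟩
  have m1 : pab a b + (1:ℝ) • wab a b ∈ Lab a b := by rw [Lab_eq ha]; exact ⟨1, rfl⟩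
  have hac : a = c := by
    by_contra hne
    have n0 : pab a b + (0:ℝ) • wab a b ∈ Lab c d := h ▸ m0
    have n1 : pab a b + (1:ℝ) • wab a b ∈ Lab c d := h ▸ m1
    have z0 : (pab a b + (0:ℝ) • wab a b) 2 = 0 := by simp [pab]
    have z1 : (pab a b + (1:ℝ) • wab a b) 2 = 1 := by simp [pab, wab]
    set u := pab a b + (0:ℝ) • wab a b
    set v := pab a b + (1:ℝ) • wab a b
    have e1 : (u 0 : ℂ) * a + u 1 = b * ((u 2 : ℂ) * a + 1) := m0
    have e2 : (u 0 : ℂ) * c + u 1 = d * ((u 2 : ℂ) * c + 1) := n0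
    have e3 : (v 0 : ℂ) * a + v 1 = b * ((v 2 : ℂ) * a + 1) := m1
    have e4 : (v 0 : ℂ) * c + v 1 = d * ((v 2 : ℂ) * c + 1) := n1
    rw [z0] at e1 e2; rw [z1] at e3 e4
    simp only [Complex.ofReal_zero, Complex.ofReal_one, zero_mul, one_mul, zero_add, mul_one] at e1 e2 e3 e4
    have e5 : (a - c) * (((v 0 - u 0 : ℝ)) : ℂ) = (a - c) * ((u 0 : ℂ) * (a + c) + u 1) := by
      push_cast
      linear_combination e3 - e4 - e1 + e2 - a * e1 + c * e2
    have e6 := mul_left_cancel₀ (sub_ne_zero.2 hne) e5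
    have e7 := congrArg Complex.im e6
    simp at e7
    have e8 := congrArg Complex.im e1
    simp at e8
    rcases e7 with h | h
    · rw [h] at e8; simp at e8; exact hb.ne e8
    · linarith
  subst hac
  exact ⟨rfl, Lab_b ha m0 (h ▸ m0)⟩

lemma van_complex {a b : ℂ} (ha : 0 < a.im) {q : MP} (hv : van (Lab a b) q) (t : ℂ) :
    aeval (fun i => (pab a b i : ℂ) + t * (wab a b i : ℂ)) q = 0 := by
  rw [Lab_eq ha, van_range] at hv
  have : (aeval (fun i => (pab a b i : ℂ) + t * (wab a b i : ℂ)) : MP →ₐ[ℝ] ℂ) =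
      (Polynomial.aeval t).comp (res (pab a b) (wab a b)) := by
    apply MvPolynomial.algHom_ext
    intro i
    simp [res]; ring
  rw [this, AlgHom.comp_apply, hv, map_zero]

noncomputable def qf (c : Fin 10 → ℝ) : MP :=
  C (c 0) * X 0 ^ 2 + C (c 1) * (X 0 * X 1) + C (c 2) * X 1 ^ 2 + C (c 3) * (X 0 * X 2) + C (c 4) * X 0 + C (c 5) * (X 1 * X 2)
  + C (c 6) * X 1 + C (c 7) * X 2 ^ 2 + C (c 8) * X 2 + C (c 9)

lemma qf_add (c d : Fin 10 → ℝ) : qf c + qf d = qf (c + d) := by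
  simp only [qf, Pi.add_apply, C_add]; ring

lemma qf_exists {q : MP} (hq : q.totalDegree ≤ 2) : ∃ c, q = qf c := by
  rw [← support_sum_monomial_coeff q]
  refine Finset.sum_induction _ (fun q => ∃ c, q = qf c) ?_ ⟨0, by simp [qf]⟩ ?_
  · rintro _ _ ⟨c, rfl⟩ ⟨d, rfl⟩; exact ⟨c + d, qf_add c d⟩
  · intro s hs
    have h1 : s 0 + s 1 + s 2 ≤ 2 := by
      have := (le_totalDegree hs).trans hq
      rw [Finsupp.sum_fintype _ _ (by simp), Fin.sum_univ_three] at this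
      exact this
    have h2 : monomial s (coeff s q) = C (coeff s q) * (X 0 ^ s 0 * X 1 ^ s 1 * X 2 ^ s 2) := by
      rw [monomial_eq, Finsupp.prod_fintype _ _ (by simp), Fin.prod_univ_three]
    rw [h2]
    generalize coeff s q = r
    generalize s 0 = x at *
    generalize s 1 = y at *
    generalize s 2 = z at *
    have hx : x ≤ 2 := by omega
    have hy : y ≤ 2 := by omega
    have hz : z ≤ 2 := by omega
    have key : ∀ i : Fin 10, C r * (![X 0 ^ 2, X 0 * X 1, X 1 ^ 2, X 0 * X 2, X 0, X 1 * X 2, X 1, X 2 ^ 2, X 2, 1] : Fin 10 → MP) i = qf (Pi.single i r) := by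
      intro i
      fin_cases i <;> simp [qf, Pi.single_apply]
    interval_cases x <;> interval_cases y <;> interval_cases z <;> first | omega | skip
    · exact ⟨_, by simpa using key 9⟩
    · exact ⟨_, by simpa using key 8⟩
    · exact ⟨_, by simpa using key 7⟩
    · exact ⟨_, by simpa using key 6⟩
    · exact ⟨_, by simpa using key 5⟩
    · exact ⟨_, by simpa using key 2⟩
    · exact ⟨_, by simpa using key 4⟩
    · exact ⟨_, by simpa using key 3⟩
    · exact ⟨_, by simpa using key 1⟩
    · exact ⟨_, by simpa using key 0⟩

end GK

namespace GK
open MvPolynomial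
open ComplexConjugate

lemma van_qf {a b : ℂ} (ha : 0 < a.im) {c : Fin 10 → ℝ} (hv : van (Lab a b) (qf c)) :
    ((c 0 : ℂ) + c 1 * (- conj a) + c 2 * (- conj a) ^ 2) * b ^ 2 + (c 3 + (c 4 + c 5 : ℝ) * (- conj a) + c 6 * (- conj a) ^ 2) * b
      + (c 7 + c 8 * (- conj a) + c 9 * (- conj a)^2) = 0 := by
  have hi : (a.im : ℂ) ≠ 0 := by exact_mod_cast ha.ne'
  set z : ℂ := - conj a with hz
  have hz0 : z ≠ 0 := by
    intro h
    have := congrArg Complex.im h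
    simp [hz] at this
    exact ha.ne' this
  have h := van_complex ha hv z⁻¹
  have hre : (a.re : ℂ) = -z + a.im * Complex.I := by
    rw [Complex.ext_iff]; simp [hz]
  have hbre : (b.re : ℂ) = b - b.im * Complex.I := by
    rw [Complex.ext_iff]; simp
  have k0 : z * ((pab a b 0 : ℂ) + z⁻¹ * wab a b 0) = b := by
    simp only [pab, wab, Matrix.cons_val_zero]
    push_cast
    rw [hre, hbre]; field_simp; ring
  have k1 : (pab a b 1 : ℂ) + z⁻¹ * wab a b 1 = b := by
    simp only [pab, wab, Matrix.cons_val_one, Matrix.cons_val_zero]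
    push_cast
    rw [hre, hbre]; field_simp
    linear_combination (-(b.im : ℂ) * a.im ^ 2) * Complex.I_sq
  have k2 : z * ((pab a b 2 : ℂ) + z⁻¹ * wab a b 2) = 1 := by
    simp [pab, wab, hz0]
  simp only [qf, map_add, map_mul, map_pow, aeval_X, aeval_C] at h
  simp only [Complex.coe_algebraMap] at h
  generalize (pab a b 0 : ℂ) + z⁻¹ * wab a b 0 = x at *
  generalize (pab a b 1 : ℂ) + z⁻¹ * wab a b 1 = y at *
  generalize (pab a b 2 : ℂ) + z⁻¹ * wab a b 2 = w at *
  have h' := congrArg (fun u => z^2 * u) h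
  simp only [mul_zero] at h'
  rw [← h', k1]
  push_cast
  rw [show z^2 * (c 0 * x^2 + c 1 * (x * b) + c 2 * b^2 + c 3 * (x * w) + c 4 * x + c 5 * (b * w) + c 6 * b + c 7 * w^2 + c 8 * w + c 9)
    = c 0 * (z*x)^2 + c 1 * (z * x) * z * b + c 2 * z^2 * b^2 + c 3 * ((z * x) * (z * w)) + c 4 * (z*x) * z + c 5 * (b * z * (z * w)) + c 6 * b * z^2 + c 7 * (z * w)^2 + c 8 * z * (z * w) + c 9 * z^2 by ring, k0, k2]
  ring

lemma three_roots {u v w x y z : ℂ} (h1 : x ≠ y) (h2 : y ≠ z) (h3 : x ≠ z) (e1 : u * x^2 + v * x + w = 0)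
    (e2 : u * y^2 + v * y + w = 0) (e3 : u * z^2 + v * z + w = 0) : u = 0 ∧ v = 0 ∧ w = 0 := by
  have a1 : (x - y) * (u * (x + y) + v) = 0 := by linear_combination e1 - e2
  have a2 : (x - z) * (u * (x + z) + v) = 0 := by linear_combination e1 - e3
  have b1 := (mul_eq_zero.1 a1).resolve_left (sub_ne_zero.2 h1)
  have b2 := (mul_eq_zero.1 a2).resolve_left (sub_ne_zero.2 h3)
  have a3 : (y - z) * u = 0 := by linear_combination b1 - b2
  have hu := (mul_eq_zero.1 a3).resolve_left (sub_ne_zero.2 h2)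
  subst hu
  have hv : v = 0 := by linear_combination b1
  subst hv
  exact ⟨rfl, rfl, by linear_combination e1⟩

lemma two_upper {z w : ℂ} (hz : 0 < z.im) (hw : 0 < w.im) (hne : z ≠ w) {p q r : ℝ}
    (h1 : (p : ℂ) + q * z + r * z^2 = 0) (h2 : (p : ℂ) + q * w + r * w^2 = 0) : p = 0 ∧ q = 0 ∧ r = 0 := by
  have key : ∀ z : ℂ, 0 < z.im → (p : ℂ) + q * z + r * z^2 = 0 → q = - 2 * r * z.re ∧ p = r * (z.re^2 + z.im^2) := by
    intro z hz h
    rw [Complex.ext_iff] at h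
    simp [pow_two] at h
    have e1 : q = -2 * r * z.re := by
      have : z.im * (q + 2 * r * z.re) = 0 := by linarith
      have := (mul_eq_zero.1 this).resolve_left hz.ne'
      linarith
    refine ⟨e1, ?_⟩
    rw [e1] at h
    linarith [h.1]
  obtain ⟨a1, a2⟩ := key z hz h1
  obtain ⟨b1, b2⟩ := key w hw h2
  have hr : r = 0 := by
    by_contra hr
    have c1 : z.re = w.re := by
      have : r * z.re = r * w.re := by linarith
      exact mul_left_cancel₀ hr this
    have c2 : z.re^2 + z.im^2 = w.re^2 + w.im^2 := mul_left_cancel₀ hr (a2.symm.trans b2)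
    have c3 : z.im^2 = w.im^2 := by rw [c1] at c2; linarith
    exact hne (Complex.ext c1 (by nlinarith))
  subst hr
  exact ⟨by linarith, by linarith, rfl⟩

open Classical in
lemma few_quadric {q : MP} (h0 : q ≠ 0) (hq : q.totalDegree ≤ 2) (B : Finset ℂ) (hB : ∀ b ∈ B, 0 < b.im) {a a' : ℂ} (ha : 0 < a.im) (ha' : 0 < a'.im)
    (hne : a ≠ a') (h : 2 < (B.filter (fun b => van (Lab a b) q)).card) (h' : 2 < (B.filter (fun b => van (Lab a' b) q)).card) : False := by
  obtain ⟨c, rfl⟩ := qf_exists hq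
  have key : ∀ a : ℂ, 0 < a.im → 2 < (B.filter (fun b => van (Lab a b) (qf c))).card →
      ((c 0 : ℂ) + c 1 * (- conj a) + c 2 * (- conj a) ^ 2) = 0 ∧ (c 3 + (c 4 + c 5 : ℝ) * (- conj a) + c 6 * (- conj a) ^ 2) = 0
      ∧ (c 7 + c 8 * (- conj a) + c 9 * (- conj a)^2) = 0 := by
    intro a ha h
    obtain ⟨x, hx, y, hy, z, hz, h1, h2, h3⟩ := Finset.two_lt_card.1 h
    exact three_roots h1 h3 h2 (van_qf ha (Finset.mem_filter.1 hx).2) (van_qf ha (Finset.mem_filter.1 hy).2)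
      (van_qf ha (Finset.mem_filter.1 hz).2)
  have i1 : 0 < (-conj a).im := by simpa using ha
  have i2 : 0 < (-conj a').im := by simpa using ha'
  have i3 : -conj a ≠ -conj a' := fun h => hne ((starRingEnd ℂ).injective (neg_injective h))
  obtain ⟨x1, x2, x3⟩ := key a ha h
  obtain ⟨y1, y2, y3⟩ := key a' ha' h'
  obtain ⟨z0, z1, z2⟩ := two_upper i1 i2 i3 x1 y1
  obtain ⟨z3, z4, z6⟩ := two_upper i1 i2 i3 x2 y2
  obtain ⟨z7, z8, z9⟩ := two_upper i1 i2 i3 x3 y3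
  obtain ⟨b, hb⟩ := Finset.card_pos.1 (by omega : 0 < (B.filter (fun b => van (Lab a b) (qf c))).card)
  rw [Finset.mem_filter] at hb
  have m0 : pab a b + (0:ℝ) • wab a b ∈ Lab a b := by rw [Lab_eq ha]; exact ⟨0, rfl⟩
  have := hb.2 _ m0
  simp [qf, z0, z1, z2, z3, z6, z7, z8, z9, pab] at this
  have c4 : c 4 = 0 := by
    rcases this with h | h | h
    · exact h
    · exact absurd h (hB b hb.1).ne'
    · exact absurd h ha.ne'
  have c5 : c 5 = 0 := by linarith
  exact h0 (by simp [qf, z0, z1, z2, z3, z6, z7, z8, z9, c4, c5])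

open Classical in
lemma quadric_bound (A B : Finset ℂ) (hA : ∀ a ∈ A, 0 < a.im) (hB : ∀ b ∈ B, 0 < b.im) (n : ℕ) (nA : A.card ≤ n) (nB : B.card ≤ n)
    {q : MP} (h0 : q ≠ 0) (hq : q.totalDegree ≤ 2) :
    (((A ×ˢ B).image (fun x => Lab x.1 x.2)).filter (fun ℓ => van ℓ q)).card ≤ 3 * n := by
  rw [Finset.filter_image]
  refine Finset.card_image_le.trans ?_
  have e : ((A ×ˢ B).filter (fun x => van (Lab x.1 x.2) q)).card = ∑ a ∈ A, (B.filter (fun b => van (Lab a b) q)).card := by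
    simp_rw [Finset.card_filter]
    rw [Finset.sum_product]
  rw [e]
  by_cases h : ∃ a ∈ A, 2 < (B.filter (fun b => van (Lab a b) q)).card
  · obtain ⟨a, ha, h⟩ := h
    rw [← Finset.add_sum_erase A _ ha]
    have h1 : (B.filter (fun b => van (Lab a b) q)).card ≤ n := (Finset.card_filter_le _ _).trans nB
    have h2 : ∑ x ∈ A.erase a, (B.filter (fun b => van (Lab x b) q)).card ≤ (A.erase a).card • 2 := by
      apply Finset.sum_le_card_nsmul
      intro x hx
      by_contra! hc
      rw [Finset.mem_erase] at hx
      exact few_quadric h0 hq B hB (hA x hx.2) (hA a ha) hx.1 hc h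
    have h3 : (A.erase a).card ≤ A.card := Finset.card_erase_le
    rw [smul_eq_mul] at h2
    omega
  · push Not at h
    have h2 := Finset.sum_le_card_nsmul A _ 2 h
    rw [smul_eq_mul] at h2
    omega
end GK

namespace GK
open MvPolynomial

open Classical in
lemma energy (A B : Finset ℂ) (hA : ∀ a ∈ A, 0 < a.im) (hB : ∀ b ∈ B, 0 < b.im) (n : ℕ) (nA : A.card ≤ n) (nB : B.card ≤ n) :
    (((A ×ˢ B) ×ˢ (A ×ˢ B)).filter (fun x => x.1.1 ≠ x.2.1 ∧ ∃ p, p ∈ Lab x.1.1 x.1.2 ∧ p ∈ Lab x.2.1 x.2.2)).card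
      ≤ 4 * 10^8 * n^3 * Nat.log 2 n := by
  set E := ((A ×ˢ B) ×ˢ (A ×ˢ B)).filter (fun x => x.1.1 ≠ x.2.1 ∧ ∃ p, p ∈ Lab x.1.1 x.1.2 ∧ p ∈ Lab x.2.1 x.2.2) with hE
  have hEm : ∀ x ∈ E, (x.1 ∈ A ×ˢ B ∧ x.2 ∈ A ×ˢ B) ∧ x.1.1 ≠ x.2.1 ∧ ∃ p, p ∈ Lab x.1.1 x.1.2 ∧ p ∈ Lab x.2.1 x.2.2 := by
    intro x hx
    have := Finset.mem_filter.1 hx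
    exact ⟨Finset.mem_product.1 this.1, this.2⟩
  choose! π hπ using fun x hx => (hEm x hx).2.2
  let T : E3 → Finset (ℂ × ℂ) := fun p => (A ×ˢ B).filter (fun y => p ∈ Lab y.1 y.2)
  set L := (A ×ˢ B).image (fun x => Lab x.1 x.2) with hL
  have hLl : ∀ ℓ ∈ L, IsLine ℓ := by
    intro ℓ h
    obtain ⟨x, hx, rfl⟩ := Finset.mem_image.1 h
    exact Lab_line (hA _ (Finset.mem_product.1 hx).1)
  have hLc : L.card ≤ n^2 := by
    refine Finset.card_image_le.trans ?_
    rw [Finset.card_product, pow_two]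
    exact Nat.mul_le_mul nA nB
  have hT : ∀ p, (T p).card = (L.filter (fun ℓ => p ∈ ℓ)).card := by
    intro p
    rw [hL, Finset.filter_image, Finset.card_image_of_injOn]
    intro x hx y hy hxy
    simp only [Finset.coe_filter, Finset.mem_product, Set.mem_ofPred_eq] at hx hy
    obtain ⟨h1, h2⟩ := Lab_inj (hA _ hx.1.1) (hA _ hy.1.1) (hB _ hx.1.2) hxy
    exact Prod.ext h1 h2
  have hTn : ∀ p, (T p).card ≤ n := by
    intro p
    refine le_trans (Finset.card_le_card_of_injOn Prod.fst ?_ ?_) nA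
    · intro x hx
      exact (Finset.mem_product.1 (Finset.mem_filter.1 hx).1).1
    · intro x hx y hy hxy
      simp only [T, Finset.coe_filter, Finset.mem_product, Set.mem_ofPred_eq] at hx hy
      have : y.1 = x.1 := hxy.symm
      rw [this] at hy
      exact Prod.ext hxy (Lab_b (hA _ hx.1.1) hx.2 hy.2)
  have hinc := inc n L.card L rfl hLl hLc (fun q h0 h2 => quadric_bound A B hA hB n nA nB h0 h2)
  let U := E.image π
  have hU : ∀ p ∈ U, 2 ≤ (T p).card := by
    intro p hp
    obtain ⟨x, hx, rfl⟩ := Finset.mem_image.1 hp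
    have h1 := hEm x hx
    refine Finset.one_lt_card.2 ⟨x.1, Finset.mem_filter.2 ⟨h1.1.1, (hπ x hx).1⟩, x.2, Finset.mem_filter.2 ⟨h1.1.2, (hπ x hx).2⟩, ?_⟩
    exact fun h => h1.2.1 (congrArg Prod.fst h)
  have c1 : E.card ≤ ∑ p ∈ U, (T p).card ^ 2 := by
    have : E ⊆ U.biUnion (fun p => T p ×ˢ T p) := by
      intro x hx
      refine Finset.mem_biUnion.2 ⟨π x, Finset.mem_image_of_mem _ hx, Finset.mem_product.2 ⟨?_, ?_⟩⟩
      · exact Finset.mem_filter.2 ⟨(hEm x hx).1.1, (hπ x hx).1⟩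
      · exact Finset.mem_filter.2 ⟨(hEm x hx).1.2, (hπ x hx).2⟩
    refine (Finset.card_le_card this).trans (Finset.card_biUnion_le.trans (le_of_eq ?_))
    refine Finset.sum_congr rfl fun p _ => ?_
    rw [Finset.card_product, pow_two]
  have c2 : ∑ p ∈ U, (T p).card ^ 2 = ∑ j ∈ Finset.Icc 1 (Nat.log 2 n), ∑ p ∈ U with Nat.log 2 (T p).card = j, (T p).card ^ 2 := by
    refine (Finset.sum_fiberwise_of_maps_to (fun p hp => ?_) _).symm
    rw [Finset.mem_Icc]
    exact ⟨Nat.log_pos (by norm_num) (hU p hp), Nat.log_mono_right (hTn p)⟩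
  rw [c2] at c1
  refine c1.trans ?_
  have c3 : ∀ j ∈ Finset.Icc 1 (Nat.log 2 n), ∑ p ∈ U with Nat.log 2 (T p).card = j, (T p).card ^ 2 ≤ 4 * 10^8 * n^3 := by
    intro j hj
    rw [Finset.mem_Icc] at hj
    have hn0 : n ≠ 0 := by
      rintro rfl; simp at hj; omega
    have h2 : 2 ≤ 2^j := by
      calc 2 = 2^1 := by norm_num
        _ ≤ 2^j := Nat.pow_le_pow_right (by norm_num) hj.1
    have h3 : 2^j ≤ n := (Nat.pow_le_pow_right (by norm_num) hj.2).trans (Nat.pow_log_le_self 2 hn0)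
    have h4 := hinc (2^j) h2 h3 (U.filter (fun p => Nat.log 2 (T p).card = j)) (by
      intro p hp
      rw [Finset.mem_filter] at hp
      rw [← hT, ← hp.2]
      refine Nat.pow_log_le_self 2 ?_
      have := hU p hp.1
      omega)
    have h5 : ∑ p ∈ U with Nat.log 2 (T p).card = j, (T p).card ^ 2 ≤ (U.filter (fun p => Nat.log 2 (T p).card = j)).card • (4 * (2^j)^2) := by
      refine Finset.sum_le_card_nsmul _ _ _ fun p hp => ?_
      rw [Finset.mem_filter] at hp
      have : (T p).card < 2^(j+1) := by rw [← hp.2]; exact Nat.lt_pow_succ_log_self (by norm_num) _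
      calc (T p).card ^ 2 ≤ (2^(j+1))^2 := Nat.pow_le_pow_left this.le 2
        _ = _ := by ring
    rw [smul_eq_mul] at h5
    calc _ ≤ _ := h5
      _ = 4 * ((U.filter (fun p => Nat.log 2 (T p).card = j)).card * (2^j)^2) := by ring
      _ ≤ 4 * (10^8 * n * L.card) := Nat.mul_le_mul_left _ h4
      _ ≤ 4 * (10^8 * n * n^2) := Nat.mul_le_mul_left _ (Nat.mul_le_mul_left _ hLc)
      _ = _ := by ring
  refine (Finset.sum_le_card_nsmul _ _ _ c3).trans (le_of_eq ?_)
  rw [smul_eq_mul, Nat.card_Icc, Nat.add_sub_cancel]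
  ring

/-- two-point homogeneity in matrix form -/
lemma moebius {a b c d : ℂ} (ha : 0 < a.im) (hc : 0 < c.im)
    (h : Complex.normSq (a - c) * (b.im * d.im) = Complex.normSq (b - d) * (a.im * c.im)) :
    ∃ x y z w : ℝ, (z ≠ 0 ∨ w ≠ 0) ∧ (x:ℂ) * a + y = b * (z * a + w) ∧ (x:ℂ) * c + y = d * (z * c + w) := by
  have ha' := ha.ne'
  obtain ⟨a1, a2⟩ := a
  obtain ⟨b1, b2⟩ := b
  obtain ⟨c1, c2⟩ := c
  obtain ⟨d1, d2⟩ := d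
  simp only [Complex.normSq_apply, Complex.sub_re, Complex.sub_im] at h ha hc ha'
  let M : Matrix (Fin 2) (Fin 2) ℝ := !![(b1 * a2 + b2 * a1) * c2 - a2 * (d1 * c2 + d2 * c1), b2 * c2 - a2 * d2;
    (b1 * a2 + b2 * a1) * c1 - b2 * (a1^2 + a2^2) - a2 * (c1 * d1 - c2 * d2), b2 * (c1 - a1) + a2 * (b1 - d1)]
  have hdet : M.det = 0 := by
    rw [Matrix.det_fin_two]
    simp [M]
    linear_combination (-a2) * h
  obtain ⟨v, hv, hM⟩ := Matrix.exists_mulVec_eq_zero_iff.2 hdet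
  have e0 := congrFun hM 0
  have e1 := congrFun hM 1
  simp [M, Matrix.mulVec, dotProduct, Fin.sum_univ_two] at e0 e1
  refine ⟨(v 0 * (b1 * a2 + b2 * a1) + v 1 * b2) / a2, (-(v 0) * b2 * (a1*a1 + a2*a2) + v 1 * (b1 * a2 - a1 * b2)) / a2, v 0, v 1, ?_, ?_, ?_⟩
  · by_contra! hh
    apply hv
    funext i; fin_cases i
    · exact hh.1
    · exact hh.2
  · rw [Complex.ext_iff]
    simp
    constructor
    · field_simp; ring
    · field_simp; ring
  · rw [Complex.ext_iff]
    simp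
    constructor
    · field_simp; linear_combination e1
    · field_simp; linear_combination e0
end GK

namespace GK
open scoped UpperHalfPlane

lemma dist_normSq {a b c d : ℍ} (h : dist a c = dist b d) :
    Complex.normSq ((a:ℂ) - c) * ((b:ℂ).im * (d:ℂ).im) = Complex.normSq ((b:ℂ) - d) * ((a:ℂ).im * (c:ℂ).im) := by
  have h1 := UpperHalfPlane.cosh_dist a c
  rw [h, UpperHalfPlane.cosh_dist b d] at h1
  rw [Complex.normSq_eq_norm_sq, Complex.normSq_eq_norm_sq, ← dist_eq_norm, ← dist_eq_norm]
  have e1 := a.im_pos; have e2 := b.im_pos; have e3 := c.im_pos; have e4 := d.im_pos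
  simp only [UpperHalfPlane.coe_im]
  have h2 : dist (b:ℂ) d ^ 2 / (2 * b.im * d.im) = dist (a:ℂ) c ^ 2 / (2 * a.im * c.im) := by linarith
  rw [div_eq_div_iff (by positivity) (by positivity)] at h2
  linarith

open Classical in
lemma hyp_energy (P : Finset ℍ) (n : ℕ) (hn : P.card ≤ n) :
    (((P ×ˢ P) ×ˢ (P ×ˢ P)).filter (fun x => x.1.1 ≠ x.2.1 ∧ dist x.1.1 x.2.1 = dist x.1.2 x.2.2)).card
      ≤ 4 * 10^8 * n^3 * Nat.log 2 n := by
  set E := ((P ×ˢ P) ×ˢ (P ×ˢ P)).filter (fun x => x.1.1 ≠ x.2.1 ∧ dist x.1.1 x.2.1 = dist x.1.2 x.2.2) with hE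
  have key : ∀ y : (ℍ × ℍ) × (ℍ × ℍ), y ∈ E → ∃ x y' z w : ℝ, (z ≠ 0 ∨ w ≠ 0) ∧ (x:ℂ) * y.1.1 + y' = y.1.2 * (z * y.1.1 + w) ∧
      (x:ℂ) * y.2.1 + y' = y.2.2 * (z * y.2.1 + w) := by
    intro y hy
    have := (Finset.mem_filter.1 hy).2.2
    exact moebius (a := (y.1.1 : ℂ)) (b := y.1.2) (c := y.2.1) (d := y.2.2) y.1.1.im_pos y.2.1.im_pos (dist_normSq this)
  choose! x y z w hzw h1 h2 using key
  obtain ⟨h, hh⟩ := Infinite.exists_notMem_finset (E.image (fun e => w e / z e))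
  have hne : ∀ e ∈ E, w e - z e * h ≠ 0 := by
    intro e he h0
    rcases eq_or_ne (z e) 0 with hz | hz
    · rw [hz] at h0
      rcases hzw e he with h' | h'
      · exact h' hz
      · exact h' (by linarith)
    · refine hh (Finset.mem_image.2 ⟨e, he, ?_⟩)
      rw [div_eq_iff hz]; linarith
  let A := P.image (fun p : ℍ => (p:ℂ) + (h:ℂ))
  let B := P.image (fun p : ℍ => (p:ℂ))
  have en := energy A B (by
      intro a ha
      obtain ⟨p, _, rfl⟩ := Finset.mem_image.1 ha
      simpa using p.im_pos) (by
      intro a ha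
      obtain ⟨p, _, rfl⟩ := Finset.mem_image.1 ha
      exact p.im_pos) n (Finset.card_image_le.trans hn) (Finset.card_image_le.trans hn)
  refine le_trans (Finset.card_le_card_of_injOn
    (fun e => (((e.1.1:ℂ) + (h:ℂ), (e.1.2:ℂ)), ((e.2.1:ℂ) + (h:ℂ), (e.2.2:ℂ)))) ?_ ?_) en
  · intro e he
    have he' : e ∈ E := he
    have hm := Finset.mem_filter.1 he'
    simp only [Finset.mem_product] at hm
    simp only [Finset.coe_filter, Finset.mem_product, Set.mem_ofPred_eq]
    refine ⟨⟨⟨Finset.mem_image_of_mem _ hm.1.1.1, Finset.mem_image_of_mem _ hm.1.1.2⟩, Finset.mem_image_of_mem _ hm.1.2.1, Finset.mem_image_of_mem _ hm.1.2.2⟩, ?_, ?_⟩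
    · intro heq
      exact hm.2.1 (UpperHalfPlane.ext (by simpa using heq))
    · have hd : ((w e : ℂ) - z e * h) ≠ 0 := by exact_mod_cast hne e he'
      refine ⟨![x e / (w e - z e * h), (y e - x e * h) / (w e - z e * h), z e / (w e - z e * h)], ?_, ?_⟩
      · have := h1 e he'
        simp only [Lab, Set.mem_ofPred_eq, Matrix.cons_val_zero, Matrix.cons_val_one, Matrix.cons_val]
        push_cast
        field_simp
        linear_combination this
      · have := h2 e he'
        simp only [Lab, Set.mem_ofPred_eq, Matrix.cons_val_zero, Matrix.cons_val_one, Matrix.cons_val]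
        push_cast
        field_simp
        linear_combination this
  · rintro ⟨⟨a, b⟩, ⟨c, d⟩⟩ _ ⟨⟨a', b'⟩, ⟨c', d'⟩⟩ _ heq
    simp only [Prod.mk.injEq, add_left_inj] at heq
    obtain ⟨⟨e1, e2⟩, e3, e4⟩ := heq
    rw [UpperHalfPlane.ext e1, UpperHalfPlane.ext e2, UpperHalfPlane.ext e3, UpperHalfPlane.ext e4]

end GK

noncomputable section

lemma quotDist_zero {Γ : Subgroup SL(2, ℝ)} {γ γ' : SL(2, ℝ)} (h : γ ∈ Γ) (h' : γ' ∈ Γ) {p q : ℍ}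
    (e : γ • p = γ' • q) : quotDist Γ p q = 0 := by
  have h0 : 0 ≤ quotDist Γ p q := Real.iInf_nonneg fun _ => dist_nonneg
  refine le_antisymm ?_ h0
  have hb : BddBelow (Set.range fun g : Γ => dist p ((g : SL(2, ℝ)) • q)) := ⟨0, by
    rintro _ ⟨g, rfl⟩; exact dist_nonneg⟩
  refine (ciInf_le hb ⟨γ⁻¹ * γ', Γ.mul_mem (Γ.inv_mem h) h'⟩).trans (le_of_eq ?_)
  simp only [mul_smul, ← e, inv_smul_smul, dist_self]

open Classical in
lemma count_bound (Γ : Subgroup SL(2, ℝ)) (P : Finset ℍ) (Γ₀ : Finset SL(2, ℝ))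
    (hne : Γ₀.Nonempty) (hsub : (↑Γ₀ : Set SL(2, ℝ)) ⊆ (↑Γ : Set SL(2, ℝ))) 
    (hd : ∀ p ∈ P, ∀ q ∈ P, p ≠ q → quotDist Γ p q ≠ 0)
    (hc : ∀ p ∈ P, ∀ q ∈ P, quotDist Γ p q = Γ₀.inf' hne fun γ => dist p (γ • q)) :
    (P.offDiag.card)^2 ≤ ({t : ℝ | ∃ p ∈ P, ∃ q ∈ P, p ≠ q ∧ quotDist Γ p q = t}.ncard) *
      (4 * 10^8 * (2 * Γ₀.card * P.card)^3 * Nat.log 2 (2 * Γ₀.card * P.card)) := by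
  have hg : ∀ p q : ℍ, p ∈ P → q ∈ P → ∃ γ ∈ Γ₀, quotDist Γ p q = dist p (γ • q) := by
    intro p q hp hq
    obtain ⟨γ, h1, h2⟩ := Finset.exists_mem_eq_inf' hne (fun γ : SL(2, ℝ) => dist p (γ • q))
    exact ⟨γ, h1, (hc p hp q hq).trans h2⟩
  choose! g hg1 hg2 using hg
  let φ : ℍ × ℍ → ℝ := fun x => quotDist Γ x.1 x.2
  have hset : {t : ℝ | ∃ p ∈ P, ∃ q ∈ P, p ≠ q ∧ quotDist Γ p q = t} = ↑(P.offDiag.image φ) := by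
    ext t
    simp only [Set.mem_ofPred_eq, Finset.coe_image, Set.mem_image, Finset.mem_coe, Finset.mem_offDiag, Prod.exists, φ]
    constructor
    · rintro ⟨p, hp, q, hq, h, e⟩; exact ⟨p, q, ⟨hp, hq, h⟩, e⟩
    · rintro ⟨p, q, ⟨hp, hq, h⟩, e⟩; exact ⟨p, hp, q, hq, h, e⟩
  rw [hset, Set.ncard_coe_finset]
  set T := P.offDiag.image φ
  have c1 : P.offDiag.card = ∑ t ∈ T, (P.offDiag.filter (fun x => φ x = t)).card :=
    Finset.card_eq_sum_card_fiberwise (fun x hx => Finset.mem_image_of_mem _ hx)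
  have c2 : (P.offDiag.card)^2 ≤ T.card * ∑ t ∈ T, (P.offDiag.filter (fun x => φ x = t)).card ^ 2 := by
    conv_lhs => rw [c1]
    exact sq_sum_le_card_mul_sum_sq
  refine c2.trans (Nat.mul_le_mul_left _ ?_)
  let P' := P ∪ (Γ₀ ×ˢ P).image (fun x => x.1 • x.2)
  have hP' : P'.card ≤ 2 * Γ₀.card * P.card := by
    refine (Finset.card_union_le _ _).trans ?_
    have h1 : ((Γ₀ ×ˢ P).image (fun x => x.1 • x.2)).card ≤ Γ₀.card * P.card :=
      Finset.card_image_le.trans (le_of_eq (Finset.card_product _ _))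
    have h2 : 1 * P.card ≤ Γ₀.card * P.card := Nat.mul_le_mul_right _ (Finset.card_pos.2 hne)
    linarith
  have en := GK.hyp_energy P' _ hP'
  refine le_trans ?_ en
  have c3 : ∑ t ∈ T, (P.offDiag.filter (fun x => φ x = t)).card ^ 2 ≤
      ((P.offDiag ×ˢ P.offDiag).filter (fun x => φ x.1 = φ x.2)).card := by
    rw [Finset.card_eq_sum_card_fiberwise (f := fun x => φ x.1) (t := T)]
    · refine Finset.sum_le_sum fun t _ => ?_
      rw [pow_two, ← Finset.card_product]
      refine Finset.card_le_card fun x hx => ?_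
      simp only [Finset.mem_product, Finset.mem_filter] at hx ⊢
      exact ⟨⟨⟨hx.1.1, hx.2.1⟩, hx.1.2.trans hx.2.2.symm⟩, hx.1.2⟩
    · intro x hx
      exact Finset.mem_image_of_mem _ (Finset.mem_product.1 (Finset.mem_filter.1 hx).1).1
  refine c3.trans (Finset.card_le_card_of_injOn
    (fun x => ((x.1.1, x.2.1), (g x.1.1 x.1.2 • x.1.2, g x.2.1 x.2.2 • x.2.2))) ?_ ?_)
  · rintro ⟨⟨p, q⟩, ⟨p', q'⟩⟩ hx
    simp only [Finset.coe_filter, Finset.mem_product, Finset.mem_offDiag, Set.mem_ofPred_eq, φ] at hx ⊢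
    obtain ⟨⟨⟨hp, hq, hpq⟩, hp', hq', hpq'⟩, he⟩ := hx
    have m : ∀ p ∈ P, ∀ q ∈ P, g p q • q ∈ P' := fun p hp q hq =>
      Finset.mem_union_right _ (Finset.mem_image.2 ⟨(g p q, q), Finset.mem_product.2 ⟨hg1 p q hp hq, hq⟩, rfl⟩)
    refine ⟨⟨⟨Finset.mem_union_left _ hp, Finset.mem_union_left _ hp'⟩, m p hp q hq, m p' hp' q' hq'⟩, ?_, ?_⟩
    · intro h
      apply hd p hp q hq hpq
      rw [hg2 p q hp hq, ← h, dist_self]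
    · rw [← hg2 p q hp hq, ← hg2 p' q' hp' hq', he]
  · have inj : ∀ p ∈ P, ∀ q ∈ P, ∀ r ∈ P, g p q • q = g p r • r → q = r := by
      intro p hp q hq r hr h
      by_contra hqr
      exact hd q hq r hr hqr (quotDist_zero (hsub (hg1 p q hp hq)) (hsub (hg1 p r hp hr)) h)
    rintro ⟨⟨p, q⟩, ⟨p', q'⟩⟩ hx ⟨⟨r, s⟩, ⟨r', s'⟩⟩ hy heq
    simp only [Finset.coe_filter, Finset.mem_product, Finset.mem_offDiag, Set.mem_ofPred_eq] at hx hy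
    simp only [Prod.mk.injEq] at heq
    obtain ⟨⟨rfl, rfl⟩, e1, e2⟩ := heq
    rw [inj p hx.1.1.1 q hx.1.1.2.1 s hy.1.1.2.1 e1, inj p' hx.1.2.1 q' hx.1.2.2.1 s' hy.1.2.2.1 e2]

/-- There is an absolute constant `c > 0` with the following property.  If `Γ ≤ SL(2,ℝ)`,
`P` is a finite set of `N ≥ 2` points of `ℍ²` whose pairwise quotient distances are
nonzero, and `Γ₀ ⊆ Γ` is a finite geodesic cover for `P` of cardinality `K`, then the
number of distinct values `d_Γ(p,q)` over distinct `p, q ∈ P` is at least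
`c · N / (K³ · log (K·N))`. -/
theorem distinct_distances_of_geodesic_cover :
    ∃ c : ℝ, 0 < c ∧
      ∀ (Γ : Subgroup SL(2, ℝ)) (P : Finset ℍ) (Γ₀ : Finset SL(2, ℝ))
        (hne : Γ₀.Nonempty),
        (↑Γ₀ : Set SL(2, ℝ)) ⊆ (↑Γ : Set SL(2, ℝ)) →
        2 ≤ P.card →
        (∀ p ∈ P, ∀ q ∈ P, p ≠ q → quotDist Γ p q ≠ 0) →
        (∀ p ∈ P, ∀ q ∈ P, quotDist Γ p q = Γ₀.inf' hne fun γ => dist p (γ • q)) →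
        c * (P.card : ℝ) / ((Γ₀.card : ℝ) ^ 3 * Real.log ((Γ₀.card : ℝ) * P.card)) ≤
          ({t : ℝ | ∃ p ∈ P, ∃ q ∈ P, p ≠ q ∧ quotDist Γ p q = t}.ncard : ℝ) := by
  refine ⟨1 / (128 * 10^8 * 4), by positivity, ?_⟩
  intro Γ P Γ₀ hne hsub hN hd hc
  have h := count_bound Γ P Γ₀ hne hsub hd hc
  have hK : 1 ≤ Γ₀.card := Finset.card_pos.2 hne
  set X := ({t : ℝ | ∃ p ∈ P, ∃ q ∈ P, p ≠ q ∧ quotDist Γ p q = t}.ncard) with hX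
  clear_value X
  rw [Finset.offDiag_card] at h
  set N := P.card
  set K := Γ₀.card
  have hN' : (2:ℝ) ≤ N := by exact_mod_cast hN
  have hK' : (1:ℝ) ≤ K := by exact_mod_cast hK
  have hKN : (2:ℝ) ≤ K * N := by nlinarith
  have h' : (((N * N - N : ℕ)) : ℝ)^2 ≤ X * (4 * 10^8 * (2 * K * N)^3 * (Nat.log 2 (2 * K * N) : ℕ)) := by
    exact_mod_cast h
  rw [Nat.cast_sub (by nlinarith)] at h'
  push_cast at h'
  have hlog2 : (1/2 : ℝ) ≤ Real.log 2 := by linarith [Real.log_two_gt_d9]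
  have hl : (Nat.log 2 (2 * K * N) : ℝ) ≤ 4 * Real.log (K * N) := by
    have hpos : 2 * K * N ≠ 0 := by positivity
    have h1 : ((2:ℝ) ^ Nat.log 2 (2 * K * N)) ≤ 2 * K * N := by exact_mod_cast Nat.pow_log_le_self 2 hpos
    have h2 := Real.log_le_log (by positivity) h1
    rw [Real.log_pow, mul_assoc (2:ℝ) (K:ℝ) (N:ℝ), Real.log_mul (by norm_num) (by positivity)] at h2
    have h3 := Real.log_le_log (by norm_num) hKN
    have h4 : (0:ℝ) ≤ Nat.log 2 (2 * K * N) := by positivity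
    nlinarith
  have hlp : 0 < Real.log (K * N) := Real.log_pos (by linarith)
  rw [div_le_iff₀ (by positivity)]
  have hX0 : (0:ℝ) ≤ X := by positivity
  set ℓ := Real.log (K * N)
  have e1 : ((N:ℝ)^2/2)^2 ≤ ((N:ℝ) * N - N)^2 := by
    apply pow_le_pow_left₀ (by positivity)
    nlinarith
  have e2 : (X:ℝ) * (4 * 10^8 * (2 * K * N)^3 * (Nat.log 2 (2 * K * N) : ℕ)) ≤ X * (4 * 10^8 * (2 * K * N)^3 * (4 * ℓ)) := by
    gcongr
  have e3 : (N:ℝ)^3 * (N / 4) ≤ (N:ℝ)^3 * (X * (128 * 10^8 * K^3 * ℓ)) := by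
    calc (N:ℝ)^3 * (N / 4) = ((N:ℝ)^2/2)^2 := by ring
      _ ≤ _ := e1.trans (h'.trans e2)
      _ = _ := by ring
  have e4 := le_of_mul_le_mul_left e3 (by positivity)
  linarith

end
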